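/- There exist an absolute constant c > 0 and, for each m ∈ ℕ, a constant c(m) > 0 such that for all d, k, n ∈ ℕ and every F ∈ 𝔉_d^s one has ρ_m(F^n, F^{n+2k+1}) ≤ c · m · n^{−1/2} + c(m) · k · n^{−1}. -/

import Mathlib

open MeasureTheory RealInnerProductSpace
open scoped ENNReal

noncomputable section

abbrev Euc (d : ℕ) := EuclideanSpace ℝ (Fin d)

/-- Convolution of two measures on an additive structure. -/
def mconv {α : Type*} [MeasurableSpace α] [Add α] (μ ν : Measure α) : Measure α :=
  (μ.prod ν).map (fun p => p.1 + p.2)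

/-- Convolution power `μ^{*n}`, with `μ^{*0}` the Dirac measure at `0`. -/
def convPow {α : Type*} [MeasurableSpace α] [AddMonoid α] (μ : Measure α) : ℕ → Measure α
  | 0 => Measure.dirac 0
  | n + 1 => mconv (convPow μ n) μ

/-- Convolution product of a finite family of measures. -/
def convProd {α : Type*} [MeasurableSpace α] [AddMonoid α] :
    ∀ {n : ℕ}, (Fin n → Measure α) → Measure α
  | 0, _ => Measure.dirac 0
  | n + 1, G => mconv (convProd (fun i : Fin n => G i.castSucc)) (G (Fin.last n))

/-- The compound Poisson measure `e(a·μ) = e^{-a} ∑_k a^k μ^{*k}/k!`. -/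
def cpois {α : Type*} [MeasurableSpace α] [AddMonoid α] (a : ℝ) (μ : Measure α) : Measure α :=
  Measure.sum fun k : ℕ =>
    (ENNReal.ofReal (Real.exp (-a) * a ^ k / k.factorial)) • convPow μ k

/-- A measure is symmetric if it is invariant under `x ↦ -x`. -/
def IsSymmMeasure {d : ℕ} (μ : Measure (Euc d)) : Prop :=
  μ.map (fun x => -x) = μ

/-- Characteristic function of a measure on `ℝ^d`. -/
def charFn {d : ℕ} (μ : Measure (Euc d)) (t : Euc d) : ℂ :=
  ∫ x, Complex.exp ((⟪t, x⟫ : ℂ) * Complex.I) ∂μ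

/-- Characteristic function of a measure on `ℝ`. -/
def charFn1 (μ : Measure ℝ) (t : ℝ) : ℂ :=
  ∫ x, Complex.exp (((t * x : ℝ) : ℂ) * Complex.I) ∂μ

/-- Convex polyhedra determined by the directions `t 1, …, t m`. -/
def polyhedraOn {d m : ℕ} (t : Fin m → Euc d) : Set (Set (Euc d)) :=
  {X | ∃ a b : Fin m → EReal,
    X = {x | ∀ j, a j ≤ ((⟪x, t j⟫ : ℝ) : EReal) ∧ ((⟪x, t j⟫ : ℝ) : EReal) ≤ b j}}

/-- The collection `𝔛_m` of convex polyhedra determined by `m` pairs of parallel hyperplanes. -/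
def polyhedra (d m : ℕ) : Set (Set (Euc d)) :=
  {X | ∃ t : Fin m → Euc d, X ∈ polyhedraOn t}

/-- The distance `ρ_m(G,H) = sup_{X ∈ 𝔛_m} |G{X} - H{X}|`. -/
def rhoPoly {d : ℕ} (m : ℕ) (G H : Measure (Euc d)) : ℝ :=
  ⨆ X ∈ polyhedra d m, |(G X).toReal - (H X).toReal|

/-- The Lévy concentration function `Q(μ, b) = sup_x μ[x, x+b]`. -/
def concFn (μ : Measure ℝ) (b : ℝ) : ℝ :=
  ⨆ x : ℝ, (μ (Set.Icc x (x + b))).toReal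

/-- `q(H, X) = inf_{‖t‖=1} Q(𝓛(⟨ξ,t⟩), λ{⟨x,t⟩ : x ∈ X})` where `H = 𝓛(ξ)`. -/
def qFn {d : ℕ} (H : Measure (Euc d)) (X : Set (Euc d)) : ℝ :=
  ⨅ t ∈ {t : Euc d | ‖t‖ = 1},
    concFn (H.map fun x => ⟪x, t⟫) (volume ((fun x => ⟪x, t⟫) '' X)).toReal

/-- The uniform (Kolmogorov) distance on `ℝ^d`. -/
def kolmDist {d : ℕ} (G H : Measure (Euc d)) : ℝ :=
  ⨆ x : Euc d, |(G {y | ∀ i, y i ≤ x i}).toReal - (H {y | ∀ i, y i ≤ x i}).toReal|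

/-- The uniform (Kolmogorov) distance on `ℝ`. -/
def kolmDist1 (G H : Measure ℝ) : ℝ :=
  ⨆ x : ℝ, |(G (Set.Iic x)).toReal - (H (Set.Iic x)).toReal|

end

/-!
For a finitely supported symmetric law `F` on `ℝ^m`, let `C` be a constant such that
`|(F ^ n - F ^ (n + 2 * k)) (box)| ≤ C * k / n + 70 * m / √n` for all boxes, all such `F` and all
`n ≤ N`. Some such constant exists, since `C = N` is trivially admissible, but it depends on `N`.
An admissible `C` can be replaced by `C₀ + C / 2` with `C₀` depending only on `m`, so `2 * C₀ + 2`
is admissible for every `N`.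

The improvement comes from smoothing the box by a Gaussian in each coordinate `q`, on a scale `s q`
much smaller than the scale `ρ q` at which truncation of `F` removes a mass of order `1 / n`. The
smoothing error is the measure of boxes that are thin in one direction: there an anticoncentration
estimate provides a small factor, which turns the a priori bound into `C / 2`. For the smoothed
box, truncating `F` costs `O(k / n)`, the part of the box far outside `∏ [-ρ q, ρ q]` is
controlled by Chebyshev's inequality and the a priori bound, and the rest by Fourier inversion: as
`F` is symmetric, its characteristic function `φ` is real and
`|φ ^ n * (1 - φ ^ (2 * k))| ≤ 4 * k / n * φ ^ (2 * j)` with `j` of order `n`.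

Consecutive powers differ on boxes by at most `2 * m / √(n + 1)`, one coordinate at a time, which
accounts for the odd shift `2 * k + 1`. A linear map turns polyhedra into boxes, and a general
symmetric law is reached by averaging over random samples: the `n`-th power of a symmetrised
empirical law of `N` points averages to `F ^ n` up to `n ^ 2 / N`, the probability that two of the
`n` drawn indices coincide.
-/

open AddMonoidAlgebra (single)
open scoped BigOperators

/-- Finitely supported signed measures on `M`; the algebra product is convolution, so that `F ^ n`
is the `n`-th convolution power. -/
abbrev FinMeas (M : Type*) := AddMonoidAlgebra ℝ M

/-- The real-valued indicator function of a set. -/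
noncomputable abbrev ind {α : Type*} (S : Set α) : α → ℝ := S.indicator 1

section Indicator

variable {α β : Type*}

theorem ind_nonneg (S : Set α) (x : α) : 0 ≤ ind S x :=
  Set.indicator_nonneg (fun _ _ => zero_le_one) x

theorem ind_le_one (S : Set α) (x : α) : ind S x ≤ 1 :=
  Set.indicator_le_self' (fun _ _ => zero_le_one) x

theorem ind_mono {S T : Set α} (h : S ⊆ T) (x : α) : ind S x ≤ ind T x :=
  Set.indicator_le_indicator_of_subset h (fun _ => zero_le_one) x

theorem ind_preimage (f : α → β) (S : Set β) (x : α) : ind (f ⁻¹' S) x = ind S (f x) := rfl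

theorem ind_compl (S : Set α) (x : α) : ind Sᶜ x = 1 - ind S x := by
  rw [ind, Set.indicator_compl]; rfl

theorem ind_mul_self (S : Set α) (x : α) : ind S x * ind S x = ind S x := by
  by_cases h : x ∈ S <;> simp [h]

theorem ind_inter (S T : Set α) (x : α) : ind (S ∩ T) x = ind S x * ind T x :=
  congrFun Set.inter_indicator_one x

end Indicator

namespace FinMeas

section Pairing

variable {M V : Type*} [AddCommGroup V] [Module ℝ V]

/-- The integral `∑ x, μ {x} • f x` of a vector-valued function against a finitely supported
signed measure. -/
noncomputable def pairing (μ : FinMeas M) (f : M → V) : V :=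
  μ.coeff.sum fun x c => c • f x

theorem pairing_eq_sum (μ : FinMeas M) (f : M → V) :
    pairing μ f = ∑ x ∈ μ.coeff.support, μ.coeff x • f x := rfl

theorem single_pairing (x : M) (c : ℝ) (f : M → V) : pairing (single x c) f = c • f x := by
  simp [pairing]

/-- `FinMeas.pairing` as a linear map in the measure. -/
noncomputable def pairingHom (f : M → V) : FinMeas M →ₗ[ℝ] V where
  toFun μ := pairing μ f
  map_add' μ ν := by
    classical
    unfold pairing
    rw [AddMonoidAlgebra.coeff_add, Finsupp.sum_add_index] <;> simp [add_smul]
  map_smul' a μ := by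
    unfold pairing
    rw [AddMonoidAlgebra.coeff_smul, Finsupp.sum_smul_index (by simp), RingHom.id_apply,
      Finsupp.smul_sum]
    simp only [mul_smul]

theorem zero_pairing (f : M → V) : pairing (0 : FinMeas M) f = 0 := map_zero (pairingHom f)

theorem add_pairing (μ ν : FinMeas M) (f : M → V) :
    pairing (μ + ν) f = pairing μ f + pairing ν f := map_add (pairingHom f) μ ν

theorem sub_pairing (μ ν : FinMeas M) (f : M → V) :
    pairing (μ - ν) f = pairing μ f - pairing ν f := map_sub (pairingHom f) μ ν

theorem smul_pairing (a : ℝ) (μ : FinMeas M) (f : M → V) :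
    pairing (a • μ) f = a • pairing μ f := map_smul (pairingHom f) a μ

theorem sum_pairing {ι : Type*} (s : Finset ι) (μ : ι → FinMeas M) (f : M → V) :
    pairing (∑ i ∈ s, μ i) f = ∑ i ∈ s, pairing (μ i) f := map_sum (pairingHom f) μ s

theorem pairing_add (μ : FinMeas M) (f g : M → V) :
    pairing μ (fun x => f x + g x) = pairing μ f + pairing μ g := by
  simp [pairing_eq_sum, Finset.sum_add_distrib]

theorem pairing_sub (μ : FinMeas M) (f g : M → V) :
    pairing μ (fun x => f x - g x) = pairing μ f - pairing μ g := by
  simp [pairing_eq_sum, smul_sub]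

theorem pairing_neg (μ : FinMeas M) (f : M → V) : pairing μ (fun x => -f x) = -pairing μ f := by
  simp [pairing_eq_sum]

theorem pairing_sum {ι : Type*} (s : Finset ι) (μ : FinMeas M) (f : ι → M → V) :
    pairing μ (fun x => ∑ i ∈ s, f i x) = ∑ i ∈ s, pairing μ (f i) := by
  simp only [pairing_eq_sum, Finset.smul_sum]
  rw [Finset.sum_comm]

theorem pairing_const_mul {𝕜 : Type*} [Ring 𝕜] [Algebra ℝ 𝕜] (μ : FinMeas M) (f : M → 𝕜) (a : 𝕜) :
    pairing μ (fun x => a * f x) = a * pairing μ f := by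
  simp only [pairing_eq_sum, Finset.mul_sum, mul_smul_comm]

theorem pairing_congr_support {μ : FinMeas M} {f g : M → V}
    (hfg : ∀ x, μ.coeff x ≠ 0 → f x = g x) : pairing μ f = pairing μ g :=
  Finset.sum_congr rfl fun x hx => by simp only [hfg x (by simpa using hx)]

/-- The total mass of a finitely supported signed measure. -/
noncomputable def mass (μ : FinMeas M) : ℝ := pairing μ fun _ => (1 : ℝ)

theorem pairing_const (μ : FinMeas M) (c : ℝ) : pairing μ (fun _ => c) = mass μ * c := by
  rw [mass, mul_comm, ← pairing_const_mul]; simp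

end Pairing

section Convolution

variable {M V : Type*} [AddMonoid M] [AddCommGroup V] [Module ℝ V]

theorem one_pairing (f : M → V) : pairing (1 : FinMeas M) f = f 0 := by
  rw [AddMonoidAlgebra.one_def, single_pairing, one_smul]

theorem mul_pairing (μ ν : FinMeas M) (f : M → V) :
    pairing (μ * ν) f = pairing μ fun x => pairing ν fun y => f (x + y) := by
  induction μ using AddMonoidAlgebra.induction_linear with
  | zero => simp [zero_pairing]
  | add a b ha hb => rw [add_mul, add_pairing, add_pairing, ha, hb]
  | single x c =>
    induction ν using AddMonoidAlgebra.induction_linear with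
    | zero => simp [zero_pairing, single_pairing]
    | add a b ha hb =>
      rw [mul_add, add_pairing, ha, hb]
      simp only [single_pairing, add_pairing, smul_add]
    | single y e =>
      rw [AddMonoidAlgebra.single_mul_single]
      simp only [single_pairing, mul_smul]

theorem mass_one : mass (1 : FinMeas M) = 1 := one_pairing _

theorem mass_mul (μ ν : FinMeas M) : mass (μ * ν) = mass μ * mass ν := by
  rw [mass, mul_pairing, pairing_const]; rfl

theorem mass_pow (μ : FinMeas M) (n : ℕ) : mass (μ ^ n) = mass μ ^ n := by
  induction n with
  | zero => simp [mass_one]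
  | succ n ih => rw [pow_succ, mass_mul, ih, pow_succ]

end Convolution

section Nonnegativity

variable {M : Type*}

/-- Nonnegativity of a finitely supported signed measure. -/
def IsNonneg (μ : FinMeas M) : Prop := ∀ x, 0 ≤ μ.coeff x

theorem IsNonneg.single {x : M} {c : ℝ} (hc : 0 ≤ c) : IsNonneg (single x c) := by
  classical
  intro y
  rw [AddMonoidAlgebra.coeff_single, Finsupp.single_apply]
  split_ifs <;> simp [hc]

theorem IsNonneg.zero : IsNonneg (0 : FinMeas M) := fun _ => by simp

theorem IsNonneg.add {μ ν : FinMeas M} (hμ : IsNonneg μ) (hν : IsNonneg ν) : IsNonneg (μ + ν) :=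
  fun x => by simpa using add_nonneg (hμ x) (hν x)

theorem IsNonneg.smul {μ : FinMeas M} {a : ℝ} (ha : 0 ≤ a) (hμ : IsNonneg μ) : IsNonneg (a • μ) :=
  fun x => by simpa using mul_nonneg ha (hμ x)

theorem IsNonneg.sum {ι : Type*} {s : Finset ι} {μ : ι → FinMeas M}
    (h : ∀ i ∈ s, IsNonneg (μ i)) : IsNonneg (∑ i ∈ s, μ i) :=
  Finset.sum_induction μ IsNonneg (fun _ _ => .add) .zero h

theorem IsNonneg.one [Zero M] : IsNonneg (1 : FinMeas M) := .single zero_le_one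

theorem IsNonneg.mul [Add M] {μ ν : FinMeas M} (hμ : IsNonneg μ) (hν : IsNonneg ν) :
    IsNonneg (μ * ν) := by
  rw [AddMonoidAlgebra.mul_def]
  exact .sum fun x _ => .sum fun y _ => .single (mul_nonneg (hμ x) (hν y))

theorem IsNonneg.pow [AddMonoid M] {μ : FinMeas M} (hμ : IsNonneg μ) (n : ℕ) :
    IsNonneg (μ ^ n) := by
  induction n with
  | zero => simpa using IsNonneg.one
  | succ n ih => rw [pow_succ]; exact ih.mul hμ

variable {μ : FinMeas M} {f g : M → ℝ}

theorem pairing_le_pairing (hμ : IsNonneg μ) (hfg : ∀ x, f x ≤ g x) :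
    pairing μ f ≤ pairing μ g :=
  Finset.sum_le_sum fun x _ => mul_le_mul_of_nonneg_left (hfg x) (hμ x)

theorem pairing_nonneg (hμ : IsNonneg μ) (hf : ∀ x, 0 ≤ f x) : 0 ≤ pairing μ f :=
  Finset.sum_nonneg fun x _ => mul_nonneg (hμ x) (hf x)

theorem mass_nonneg (hμ : IsNonneg μ) : 0 ≤ mass μ := pairing_nonneg hμ fun _ => zero_le_one

theorem pairing_le_mass_mul {B : ℝ} (hμ : IsNonneg μ) (hf : ∀ x, f x ≤ B) :
    pairing μ f ≤ mass μ * B := by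
  rw [← pairing_const]; exact pairing_le_pairing hμ hf

theorem abs_pairing_le_pairing (hμ : IsNonneg μ) (hf : ∀ x, |f x| ≤ g x) :
    |pairing μ f| ≤ pairing μ g := by
  rw [abs_le, ← pairing_neg]
  exact ⟨pairing_le_pairing hμ fun x => (abs_le.1 (hf x)).1,
    pairing_le_pairing hμ fun x => (abs_le.1 (hf x)).2⟩

theorem abs_pairing_le_mass_mul {B : ℝ} (hμ : IsNonneg μ) (hf : ∀ x, |f x| ≤ B) :
    |pairing μ f| ≤ mass μ * B := by
  rw [← pairing_const]; exact abs_pairing_le_pairing hμ hf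

/-- Finitely supported probability measures. -/
structure IsProb (μ : FinMeas M) : Prop where
  nonneg : IsNonneg μ
  mass_eq_one : mass μ = 1

theorem IsProb.pairing_le {B : ℝ} (hμ : IsProb μ) (hf : ∀ x, f x ≤ B) : pairing μ f ≤ B := by
  simpa [hμ.mass_eq_one] using pairing_le_mass_mul hμ.nonneg hf

theorem IsProb.abs_pairing_le {B : ℝ} (hμ : IsProb μ) (hf : ∀ x, |f x| ≤ B) :
    |pairing μ f| ≤ B := by
  simpa [hμ.mass_eq_one] using abs_pairing_le_mass_mul hμ.nonneg hf

theorem IsProb.mul [AddMonoid M] {ν : FinMeas M} (hμ : IsProb μ) (hν : IsProb ν) :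
    IsProb (μ * ν) :=
  ⟨hμ.nonneg.mul hν.nonneg, by rw [mass_mul, hμ.mass_eq_one, hν.mass_eq_one, one_mul]⟩

theorem IsProb.pow [AddMonoid M] (hμ : IsProb μ) (n : ℕ) : IsProb (μ ^ n) :=
  ⟨hμ.nonneg.pow n, by rw [mass_pow, hμ.mass_eq_one, one_pow]⟩

end Nonnegativity

section Density

variable {M : Type*}

/-- The measure with density `ξ` with respect to `μ`. -/
noncomputable def withDensity (ξ : M → ℝ) (μ : FinMeas M) : FinMeas M :=
  μ.coeff.sum fun x c => single x (ξ x * c)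

theorem withDensity_single (ξ : M → ℝ) (x : M) (c : ℝ) :
    withDensity ξ (single x c) = single x (ξ x * c) := by
  simp [withDensity]

theorem withDensity_zero (ξ : M → ℝ) : withDensity ξ 0 = 0 := by simp [withDensity]

theorem withDensity_add (ξ : M → ℝ) (μ ν : FinMeas M) :
    withDensity ξ (μ + ν) = withDensity ξ μ + withDensity ξ ν := by
  classical
  unfold withDensity
  rw [AddMonoidAlgebra.coeff_add, Finsupp.sum_add_index] <;>
    simp [mul_add, AddMonoidAlgebra.single_add]

theorem coeff_withDensity (ξ : M → ℝ) (μ : FinMeas M) (x : M) :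
    (withDensity ξ μ).coeff x = ξ x * μ.coeff x := by
  classical
  induction μ using AddMonoidAlgebra.induction_linear with
  | zero => simp [withDensity_zero]
  | add a b ha hb => simp [withDensity_add, ha, hb, mul_add]
  | single y c =>
    rw [withDensity_single, AddMonoidAlgebra.coeff_single, AddMonoidAlgebra.coeff_single,
      Finsupp.single_apply, Finsupp.single_apply]
    split_ifs with h <;> simp [h]

theorem ext_coeff {μ ν : FinMeas M} (h : ∀ x, μ.coeff x = ν.coeff x) : μ = ν :=
  AddMonoidAlgebra.coeff_injective (Finsupp.ext h)

theorem withDensity_smul (ξ : M → ℝ) (a : ℝ) (μ : FinMeas M) :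
    withDensity ξ (a • μ) = a • withDensity ξ μ :=
  ext_coeff fun x => by
    simp only [coeff_withDensity, AddMonoidAlgebra.coeff_smul, Finsupp.smul_apply, smul_eq_mul]
    ring

theorem withDensity_sub (ξ : M → ℝ) (μ ν : FinMeas M) :
    withDensity ξ (μ - ν) = withDensity ξ μ - withDensity ξ ν :=
  ext_coeff fun x => by
    simp only [coeff_withDensity, AddMonoidAlgebra.coeff_sub, Finsupp.sub_apply]
    ring

theorem withDensity_withDensity (ξ η : M → ℝ) (μ : FinMeas M) :
    withDensity ξ (withDensity η μ) = withDensity (fun x => ξ x * η x) μ :=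
  ext_coeff fun x => by simp only [coeff_withDensity]; ring

theorem withDensity_pairing (ξ : M → ℝ) (μ : FinMeas M) (f : M → ℝ) :
    pairing (withDensity ξ μ) f = pairing μ fun x => ξ x * f x := by
  induction μ using AddMonoidAlgebra.induction_linear with
  | zero => simp [withDensity_zero, zero_pairing]
  | add a b ha hb => rw [withDensity_add, add_pairing, ha, hb, add_pairing]
  | single y c =>
    simp only [withDensity_single, single_pairing, smul_eq_mul]
    ring

theorem IsNonneg.withDensity {ξ : M → ℝ} {μ : FinMeas M} (hμ : IsNonneg μ) (hξ : ∀ x, 0 ≤ ξ x) :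
    IsNonneg (withDensity ξ μ) := fun x => by
  rw [coeff_withDensity]; exact mul_nonneg (hξ x) (hμ x)

theorem withDensity_mul [Add M] {ξ : M → ℝ} (hξ : ∀ x y, ξ (x + y) = ξ x + ξ y) (μ ν : FinMeas M) :
    withDensity ξ (μ * ν) = withDensity ξ μ * ν + μ * withDensity ξ ν := by
  induction μ using AddMonoidAlgebra.induction_linear with
  | zero => simp [withDensity_zero]
  | add a b ha hb => simp only [add_mul, withDensity_add, ha, hb]; abel
  | single x c =>
    induction ν using AddMonoidAlgebra.induction_linear with
    | zero => simp [withDensity_zero]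
    | add a b ha hb => simp only [mul_add, withDensity_add, ha, hb]; abel
    | single y e =>
      simp only [withDensity_single, AddMonoidAlgebra.single_mul_single, hξ]
      rw [← AddMonoidAlgebra.single_add]
      congr 1
      ring

end Density

section Symmetry

variable {M V : Type*} [AddCommGroup M] [AddCommGroup V] [Module ℝ V]

/-- Symmetry of a finitely supported signed measure: invariance under `x ↦ -x`. -/
def IsSymm (μ : FinMeas M) : Prop := ∀ x, μ.coeff (-x) = μ.coeff x

theorem IsSymm.withDensity {ξ : M → ℝ} {μ : FinMeas M} (hμ : IsSymm μ) (hξ : ∀ x, ξ (-x) = ξ x) :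
    IsSymm (withDensity ξ μ) := fun x => by
  rw [coeff_withDensity, coeff_withDensity, hξ, hμ]

theorem IsSymm.smul {μ : FinMeas M} (a : ℝ) (hμ : IsSymm μ) : IsSymm (a • μ) := fun x => by
  simp [hμ x]

theorem IsSymm.pairing_comp_neg {μ : FinMeas M} (hμ : IsSymm μ) (f : M → V) :
    pairing μ (fun x => f (-x)) = pairing μ f := by
  refine Finset.sum_nbij' (fun x => -x) (fun x => -x) ?_ ?_ ?_ ?_ ?_ <;> simp [hμ _]

theorem IsSymm.pairing_odd {μ : FinMeas M} (hμ : IsSymm μ) {f : M → ℝ}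
    (hf : ∀ x, f (-x) = -f x) : pairing μ f = 0 := by
  have h := hμ.pairing_comp_neg f
  simp only [hf, pairing_neg] at h
  linarith

/-- Finitely supported symmetric probability measures. -/
structure IsSymmProb (μ : FinMeas M) : Prop extends IsProb μ where
  symm : IsSymm μ

end Symmetry

section CauchySchwarz

variable {M : Type*} [AddCommGroup M] {F : FinMeas M} {ξ : M → ℝ}

theorem pairing_pow_succ_mul_withDensity (F : FinMeas M) (ξ : M → ℝ) (N : ℕ) (h : M → ℝ) :
    ((N + 1 : ℕ) : ℝ) * pairing (F ^ N * withDensity ξ F) h =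
      pairing F fun x => N * pairing (F ^ (N - 1) * withDensity ξ F) (fun y => h (x + y)) +
        ξ x * pairing (F ^ N) (fun y => h (x + y)) := by
  have split_first : ((N + 1 : ℕ) : ℝ) • (F ^ N * withDensity ξ F) =
      (N : ℝ) • (F * (F ^ (N - 1) * withDensity ξ F)) + withDensity ξ F * F ^ N := by
    rcases N with _ | N
    · simp
    · rw [Nat.cast_succ (N + 1), add_smul, one_smul, Nat.add_sub_cancel, ← mul_assoc, ← pow_succ',
        mul_comm (withDensity ξ F)]
  rw [← smul_eq_mul, ← smul_pairing, split_first, add_pairing, smul_pairing, mul_pairing,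
    mul_pairing, withDensity_pairing, pairing_add, pairing_const_mul, smul_eq_mul]

/- With `X₁, …, X_N` independent of law `F` and `S = ∑ ξ (X_i)`, this is the expectation of
`2 (S + a) h ≤ h ^ 2 + (S + a) ^ 2`; `N * (F ^ (N - 1) * ξF)` is the law of `∑ X_i` weighted by
`S`. -/
theorem two_mul_pairing_pow_le (hF : IsProb F) (hξ : pairing F ξ = 0) (N : ℕ)
    (h : M → ℝ) (a : ℝ) :
    2 * (N * pairing (F ^ (N - 1) * withDensity ξ F) h + a * pairing (F ^ N) h) ≤
      pairing (F ^ N) (fun x => h x ^ 2) + N * pairing F (fun x => ξ x ^ 2) + a ^ 2 := by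
  induction N generalizing h a with
  | zero =>
    simp only [pow_zero, one_pairing, Nat.cast_zero]
    nlinarith [sq_nonneg (h 0 - a)]
  | succ N ih =>
    have average := pairing_le_pairing hF.nonneg fun x => ih (fun y => h (x + y)) (a + ξ x)
    have lhs : (pairing F fun x => 2 * (N * pairing (F ^ (N - 1) * withDensity ξ F)
          (fun y => h (x + y)) + (a + ξ x) * pairing (F ^ N) (fun y => h (x + y)))) =
        2 * (((N + 1 : ℕ) : ℝ) * pairing (F ^ N * withDensity ξ F) h +
          a * pairing (F ^ (N + 1)) h) := by
      rw [pairing_pow_succ_mul_withDensity, pow_succ', mul_pairing, ← pairing_const_mul _ _ a,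
        ← pairing_add, ← pairing_const_mul]
      congr 1; funext x; ring
    have rhs : (pairing F fun x => pairing (F ^ N) (fun y => h (x + y) ^ 2) +
          N * pairing F (fun x => ξ x ^ 2) + (a + ξ x) ^ 2) =
        pairing (F ^ (N + 1)) (fun x => h x ^ 2) +
          ((N + 1 : ℕ) : ℝ) * pairing F (fun x => ξ x ^ 2) + a ^ 2 := by
      have expand : (fun x => (a + ξ x) ^ 2) = fun x => a ^ 2 + 2 * a * ξ x + ξ x ^ 2 := by
        funext x; ring
      rw [pairing_add _ _ fun x => (a + ξ x) ^ 2, expand, pairing_add, pairing_add, pairing_add,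
        pairing_const_mul F ξ (2 * a), hξ, pairing_const, pairing_const, hF.mass_eq_one,
        pow_succ' F, mul_pairing]
      push_cast
      ring
    rwa [lhs, rhs] at average

theorem abs_pairing_pow_mul_withDensity_le (hF : IsProb F) (hξ : pairing F ξ = 0) (N : ℕ)
    {h : M → ℝ} {B : ℝ} (hB : ∀ x, |h x| ≤ B) :
    |pairing (F ^ N * withDensity ξ F) h| ≤ B * √(pairing F (fun x => ξ x ^ 2) / (N + 1)) := by
  have hB0 : 0 ≤ B := (abs_nonneg _).trans (hB 0)
  set s := pairing F fun x => ξ x ^ 2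
  set v := pairing (F ^ N * withDensity ξ F) h
  have hN : (0 : ℝ) < N + 1 := by positivity
  have sq_moment (t : ℝ) : pairing (F ^ (N + 1)) (fun x => (t * h x) ^ 2) ≤ t ^ 2 * B ^ 2 :=
    (hF.pow (N + 1)).pairing_le fun x => by
      rw [mul_pow, ← sq_abs (h x)]
      gcongr
      exact hB x
  have quadratic (t : ℝ) : 0 ≤ B ^ 2 * (t * t) + -(2 * (N + 1) * v) * t + (N + 1) * s := by
    have := two_mul_pairing_pow_le hF hξ (N + 1) (fun x => t * h x) 0
    rw [Nat.add_sub_cancel, pairing_const_mul] at this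
    push_cast at this
    linarith [sq_moment t]
  have hv : v ^ 2 ≤ B ^ 2 * (s / (N + 1)) := by
    have := discrim_le_zero quadratic
    rw [discrim] at this
    rw [mul_div_assoc', le_div_iff₀ hN]
    exact le_of_mul_le_mul_left (by linarith) (mul_pos four_pos hN)
  simpa [Real.sqrt_mul (sq_nonneg B), Real.sqrt_sq hB0] using Real.abs_le_sqrt hv

theorem abs_pairing_pow_mul_withDensity_mul_le (hF : IsProb F) (hξ : pairing F ξ = 0) (N : ℕ)
    {ν : FinMeas M} {f : M → ℝ} {B : ℝ} (hB : ∀ x, |pairing ν fun y => f (x + y)| ≤ B) (x : M) :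
    |pairing (F ^ N * withDensity ξ F * ν) fun y => f (x + y)| ≤
      B * √(pairing F (fun x => ξ x ^ 2) / (N + 1)) := by
  rw [mul_pairing]
  refine abs_pairing_pow_mul_withDensity_le hF hξ N fun y => ?_
  simpa only [add_assoc] using hB (x + y)

end CauchySchwarz

end FinMeas

section Box

variable {ι : Type*}

/-- `I` describes a box: every side `I q` is an interval, of any kind. -/
def IsBox (I : ι → Set ℝ) : Prop := ∀ q, (I q).OrdConnected

/-- The box `I` translated by `-y`. -/
def boxShift (y : ι → ℝ) (I : ι → Set ℝ) : ι → Set ℝ := fun q => (y q + ·) ⁻¹' I q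

theorem IsBox.boxShift {I : ι → Set ℝ} (h : IsBox I) (y : ι → ℝ) : IsBox (boxShift y I) :=
  fun q => (h q).preimage_mono (monotone_const.add monotone_id)

theorem IsBox.update [DecidableEq ι] {J : ι → Set ℝ} (h : IsBox J) (q : ι) {A : Set ℝ}
    (hA : A.OrdConnected) : IsBox (Function.update J q A) := fun r => by
  rcases eq_or_ne r q with rfl | hr
  · rwa [Function.update_self]
  · rw [Function.update_of_ne hr]; exact h r

theorem abs_prod_sub_prod_le (s : Finset ι) {u v : ι → ℝ} (hu : ∀ q, u q ∈ Set.Icc 0 1)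
    (hv : ∀ q, v q ∈ Set.Icc 0 1) :
    |∏ q ∈ s, u q - ∏ q ∈ s, v q| ≤ ∑ q ∈ s, |u q - v q| := by
  classical
  induction s using Finset.induction_on with
  | empty => simp
  | insert a s ha ih =>
    rw [Finset.prod_insert ha, Finset.prod_insert ha, Finset.sum_insert ha]
    have p0 : 0 ≤ ∏ q ∈ s, u q := Finset.prod_nonneg fun q _ => (hu q).1
    have p1 : ∏ q ∈ s, u q ≤ 1 := Finset.prod_le_one (fun q _ => (hu q).1) fun q _ => (hu q).2
    calc |u a * ∏ q ∈ s, u q - v a * ∏ q ∈ s, v q|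
        = |(u a - v a) * ∏ q ∈ s, u q + v a * (∏ q ∈ s, u q - ∏ q ∈ s, v q)| := by ring_nf
      _ ≤ |u a - v a| * ∏ q ∈ s, u q + v a * |∏ q ∈ s, u q - ∏ q ∈ s, v q| := by
        refine (abs_add_le _ _).trans_eq ?_
        rw [abs_mul, abs_mul, abs_of_nonneg p0, abs_of_nonneg (hv a).1]
      _ ≤ |u a - v a| + ∑ q ∈ s, |u q - v q| :=
        add_le_add (mul_le_of_le_one_right (abs_nonneg _) p1)
          ((mul_le_of_le_one_left (abs_nonneg _) (hv a).2).trans ih)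

theorem ind_sub_ind {α : Type*} (A B : Set α) (y : α) :
    ind A y - ind B y = ind (A \ B) y - ind (B \ A) y := by
  by_cases h : y ∈ A <;> by_cases h' : y ∈ B <;> simp [h, h']

variable [Fintype ι]

/-- The indicator function of the product set `∏ q, I q`, as a product over the coordinates. -/
noncomputable def boxInd (I : ι → Set ℝ) (x : ι → ℝ) : ℝ := ∏ q, ind (I q) (x q)

theorem boxInd_nonneg (I : ι → Set ℝ) (x : ι → ℝ) : 0 ≤ boxInd I x :=
  Finset.prod_nonneg fun _ _ => ind_nonneg _ _

theorem boxInd_le_one (I : ι → Set ℝ) (x : ι → ℝ) : boxInd I x ≤ 1 :=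
  Finset.prod_le_one (fun _ _ => ind_nonneg _ _) fun _ _ => ind_le_one _ _

theorem abs_boxInd_le_one (I : ι → Set ℝ) (x : ι → ℝ) : |boxInd I x| ≤ 1 := by
  rw [abs_of_nonneg (boxInd_nonneg I x)]; exact boxInd_le_one I x

theorem boxInd_of_notMem {I : ι → Set ℝ} {x : ι → ℝ} {q : ι} (h : x q ∉ I q) : boxInd I x = 0 :=
  Finset.prod_eq_zero (Finset.mem_univ q) (Set.indicator_of_notMem h _)

theorem boxInd_le_ind (I : ι → Set ℝ) (x : ι → ℝ) (q : ι) : boxInd I x ≤ ind (I q) (x q) := by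
  by_cases h : x q ∈ I q
  · simpa [h] using boxInd_le_one I x
  · rw [boxInd_of_notMem h]; exact ind_nonneg _ _

theorem boxInd_of_mem {I : ι → Set ℝ} {x : ι → ℝ} (h : ∀ q, x q ∈ I q) : boxInd I x = 1 :=
  Finset.prod_eq_one fun q _ => Set.indicator_of_mem (h q) _

theorem boxInd_boxShift (I : ι → Set ℝ) (y z : ι → ℝ) :
    boxInd (boxShift y I) z = boxInd I (y + z) := rfl

theorem abs_boxInd_sub_le (I : ι → Set ℝ) (y z : ι → ℝ) :
    |boxInd I y - boxInd I z| ≤ ∑ q, |ind (I q) (y q) - ind (I q) (z q)| :=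
  abs_prod_sub_prod_le _ (fun _ => ⟨ind_nonneg _ _, ind_le_one _ _⟩)
    fun _ => ⟨ind_nonneg _ _, ind_le_one _ _⟩

variable [DecidableEq ι]

theorem boxInd_update (J : ι → Set ℝ) (q : ι) (A : Set ℝ) (x : ι → ℝ) :
    boxInd (Function.update J q A) x =
      ind A (x q) * ∏ r ∈ Finset.univ.erase q, ind (J r) (x r) := by
  rw [boxInd, ← Finset.mul_prod_erase _ _ (Finset.mem_univ q), Function.update_self]
  congr 1
  refine Finset.prod_congr rfl fun r hr => ?_
  rw [Function.update_of_ne (Finset.ne_of_mem_erase hr)]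

theorem boxInd_update_sub (J : ι → Set ℝ) (q : ι) (A B : Set ℝ) (x : ι → ℝ) :
    boxInd (Function.update J q A) x - boxInd (Function.update J q B) x =
      boxInd (Function.update J q (A \ B)) x - boxInd (Function.update J q (B \ A)) x := by
  simp only [boxInd_update, ← sub_mul, ind_sub_ind A B]

theorem abs_sub_le_sum_of_update {α : Type*} (Φ : (ι → α) → ℝ) (I I' : ι → α) (b : ι → ℝ)
    (h : ∀ q J, (∀ r, J r = I r ∨ J r = I' r) →
      |Φ (Function.update J q (I q)) - Φ (Function.update J q (I' q))| ≤ b q) :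
    |Φ I - Φ I'| ≤ ∑ q, b q := by
  suffices key : ∀ s : Finset ι, |Φ I - Φ (s.piecewise I' I)| ≤ ∑ q ∈ s, b q by
    simpa using key Finset.univ
  intro s
  induction s using Finset.induction_on with
  | empty => simp
  | insert a s ha ih =>
    have replace_a := h a (s.piecewise I' I) fun r => by
      by_cases hr : r ∈ s <;> simp [hr]
    have keep_a : Function.update (s.piecewise I' I) a (I a) = s.piecewise I' I := by
      rw [Function.update_eq_self_iff, Finset.piecewise_eq_of_notMem _ _ _ ha]
    rw [keep_a, ← Finset.piecewise_insert] at replace_a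
    rw [Finset.sum_insert ha, add_comm]
    exact (abs_sub_le _ _ _).trans (add_le_add ih replace_a)

end Box

section Truncation

/-- Truncation of a real number to `[-1, 1]`. -/
noncomputable def clip (t : ℝ) : ℝ := max (-1) (min 1 t)

/-- The ramp function, equal to the identity on `[0, 1]` and constant on either side. -/
noncomputable def ramp (t : ℝ) : ℝ := max 0 (min 1 t)

theorem clip_neg (t : ℝ) : clip (-t) = -clip t := by
  simp only [clip, max_def, min_def]
  split_ifs <;> linarith

theorem clip_sq (t : ℝ) : clip t ^ 2 = min 1 (t ^ 2) := by
  unfold clip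
  rcases le_total t 1 with h | h
  · rcases le_total t (-1) with h' | h'
    · rw [min_eq_right h, max_eq_left h', min_eq_left (by nlinarith)]; norm_num
    · rw [min_eq_right h, max_eq_right h', min_eq_right (by nlinarith)]
  · rw [min_eq_left h, max_eq_right (by norm_num), min_eq_left (by nlinarith)]; norm_num

theorem abs_ramp_le_one (t : ℝ) : |ramp t| ≤ 1 := by
  rw [ramp, abs_of_nonneg (le_max_left _ _)]
  exact max_le zero_le_one (min_le_left _ _)

theorem ramp_monotone : Monotone ramp := fun _ _ h => max_le_max le_rfl (min_le_min le_rfl h)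

theorem clip_le_ramp_sub_ramp {u r : ℝ} (hr : 0 ≤ r) (hu : u ∈ Set.Icc 0 1) :
    clip r ≤ ramp (u + r) - ramp (u - r) := by
  obtain ⟨h0, h1⟩ := hu
  unfold clip ramp
  simp only [max_def, min_def]
  split_ifs <;> linarith

theorem clip_sq_mul_ind_le (u r : ℝ) :
    clip r ^ 2 * ind (Set.Icc 0 1) u ≤ clip r * (ramp (u + r) - ramp (u - r)) := by
  wlog hr : 0 ≤ r generalizing r
  · have := this (-r) (by linarith)
    rw [clip_neg, neg_sq, sub_neg_eq_add, ← sub_eq_add_neg] at this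
    linarith
  have hclip : 0 ≤ clip r := le_max_of_le_right (le_min zero_le_one hr)
  rw [sq, mul_assoc]
  refine mul_le_mul_of_nonneg_left ?_ hclip
  by_cases hu : u ∈ Set.Icc (0 : ℝ) 1
  · simpa [hu] using clip_le_ramp_sub_ramp hr hu
  · simpa [hu] using ramp_monotone (show u - r ≤ u + r by linarith)

theorem mul_sqrt_le_of_mul_le_mul_sqrt_div {s P N c : ℝ} (hs : 0 ≤ s) (hN : 0 < N) (hc : 0 ≤ c)
    (h : s * P ≤ c * √(s / N)) : P * √(N * s) ≤ c := by
  rw [Real.sqrt_mul hN.le]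
  rw [Real.sqrt_div hs] at h
  rcases (Real.sqrt_nonneg s).eq_or_lt with h0 | h0
  · rw [← h0]; simpa using hc
  · rw [mul_div_assoc', le_div_iff₀ (Real.sqrt_pos.2 hN)] at h
    refine le_of_mul_le_mul_left ?_ h0
    calc √s * (P * (√N * √s)) = √s * √s * P * √N := by ring
      _ = s * P * √N := by rw [Real.mul_self_sqrt hs]
      _ ≤ √s * c := by rwa [mul_comm (√s)]

end Truncation

namespace FinMeas

section Concentration

variable {ι : Type*} {F : FinMeas (ι → ℝ)}

/-- The truncated second moment `𝔼 min (1, (X_q / τ) ^ 2)` of the `q`-th coordinate. -/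
noncomputable def truncMoment (F : FinMeas (ι → ℝ)) (q : ι) (τ : ℝ) : ℝ :=
  pairing F fun x => min 1 ((x q / τ) ^ 2)

theorem truncMoment_nonneg (hF : IsNonneg F) (q : ι) (τ : ℝ) : 0 ≤ truncMoment F q τ :=
  pairing_nonneg hF fun _ => le_min zero_le_one (sq_nonneg _)

theorem IsSymm.mul_withDensity_pairing {M : Type*} [AddCommGroup M] {G : FinMeas M}
    (hG : IsSymm G) {ξ : M → ℝ} (hξ : ∀ x, ξ (-x) = -ξ x) (μ : FinMeas M) (f : M → ℝ) :
    2 * pairing (μ * FinMeas.withDensity ξ G) f =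
      pairing μ fun y => pairing G fun x => ξ x * (f (y + x) - f (y - x)) := by
  rw [mul_pairing, ← pairing_const_mul]
  congr 1; funext y
  have reflect := hG.pairing_comp_neg fun x => ξ x * f (y + x)
  simp only [hξ, neg_mul, pairing_neg, ← sub_eq_add_neg] at reflect
  simp only [withDensity_pairing, mul_sub, pairing_sub]
  linarith

theorem truncMoment_mul_pairing_Icc_le (hF : IsNonneg F) (hs : IsSymm F) {μ : FinMeas (ι → ℝ)}
    (hμ : IsNonneg μ) (q : ι) {τ : ℝ} (hτ : 0 < τ) (b : ℝ) :
    truncMoment F q τ * pairing μ (fun y => ind (Set.Icc b (b + τ)) (y q)) ≤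
      2 * pairing (μ * withDensity (fun x => clip (x q / τ)) F)
        fun y => ramp ((y q - b) / τ) := by
  have hodd (x : ι → ℝ) : clip ((-x) q / τ) = -clip (x q / τ) := by
    rw [Pi.neg_apply, neg_div, clip_neg]
  rw [hs.mul_withDensity_pairing hodd, ← pairing_const_mul]
  refine pairing_le_pairing hμ fun y => ?_
  rw [truncMoment, mul_comm, ← pairing_const_mul]
  refine pairing_le_pairing hF fun x => ?_
  have rescale : Set.Icc b (b + τ) = (fun z => (z - b) / τ) ⁻¹' Set.Icc 0 1 := by
    ext z
    rw [Set.mem_preimage, Set.mem_Icc, Set.mem_Icc, le_div_iff₀ hτ, div_le_iff₀ hτ, zero_mul,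
      one_mul, sub_nonneg, sub_le_iff_le_add']
  have split_add : ((y + x) q - b) / τ = (y q - b) / τ + x q / τ := by
    rw [Pi.add_apply]; ring
  have split_sub : ((y - x) q - b) / τ = (y q - b) / τ - x q / τ := by
    rw [Pi.sub_apply]; ring
  rw [rescale, ind_preimage, split_add, split_sub, ← clip_sq, mul_comm]
  exact clip_sq_mul_ind_le _ _

theorem pairing_pow_Icc_mul_sqrt_le (hF : IsSymmProb F) (q : ι) {τ : ℝ} (hτ : 0 < τ) (b : ℝ)
    (N : ℕ) :
    pairing (F ^ N) (fun y => ind (Set.Icc b (b + τ)) (y q)) * √((N + 1) * truncMoment F q τ) ≤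
      2 := by
  have hodd : pairing F (fun x : ι → ℝ => clip (x q / τ)) = 0 := hF.symm.pairing_odd fun x => by
    rw [Pi.neg_apply, neg_div, clip_neg]
  have hramp := abs_pairing_pow_mul_withDensity_le hF.toIsProb hodd N
    (h := fun y => ramp ((y q - b) / τ)) (B := 1) fun _ => abs_ramp_le_one _
  simp only [clip_sq, one_mul] at hramp
  refine mul_sqrt_le_of_mul_le_mul_sqrt_div (truncMoment_nonneg hF.nonneg q τ) (by positivity)
    zero_le_two ?_
  exact (truncMoment_mul_pairing_Icc_le hF.nonneg hF.symm (hF.nonneg.pow N) q hτ b).trans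
    (mul_le_mul_of_nonneg_left ((le_abs_self _).trans hramp) zero_le_two)

theorem truncMoment_le_sq_mul (hF : IsNonneg F) (q : ι) {τ w : ℝ} (hw : 1 ≤ w) :
    truncMoment F q τ ≤ w ^ 2 * truncMoment F q (w * τ) := by
  rw [truncMoment, truncMoment, ← pairing_const_mul]
  refine pairing_le_pairing hF fun x => ?_
  have hw0 : w ≠ 0 := by positivity
  have cancel : w ^ 2 * (x q / (w * τ)) ^ 2 = (x q / τ) ^ 2 := by
    rw [← mul_pow, mul_div_assoc', mul_div_mul_left _ _ hw0]
  rw [mul_min_of_nonneg _ _ (sq_nonneg w), cancel]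
  exact min_le_min (by nlinarith) le_rfl

theorem pairing_pow_closedBall_mul_sqrt_le (hF : IsSymmProb F) (q : ι) {τ v : ℝ} (hτ : 0 < τ)
    (hv : 0 ≤ v) (b : ℝ) (N : ℕ) :
    pairing (F ^ N) (fun y => ind (Metric.closedBall b (v * τ)) (y q)) *
      √((N + 1) * truncMoment F q τ) ≤ 2 * (1 + 2 * v) := by
  set w := 1 + 2 * v with hw
  have hw1 : 1 ≤ w := by linarith
  have hball : Metric.closedBall b (v * τ) ⊆ Set.Icc (b - v * τ) (b - v * τ + w * τ) := by
    rw [Real.closedBall_eq_Icc]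
    exact Set.Icc_subset_Icc_right (by rw [hw]; linarith)
  have hsqrt : √((N + 1) * truncMoment F q τ) ≤ w * √((N + 1) * truncMoment F q (w * τ)) := by
    rw [← Real.sqrt_sq (zero_le_one.trans hw1), ← Real.sqrt_mul (sq_nonneg _),
      Real.sqrt_sq (zero_le_one.trans hw1)]
    refine Real.sqrt_le_sqrt ?_
    calc (N + 1) * truncMoment F q τ ≤ (N + 1) * (w ^ 2 * truncMoment F q (w * τ)) := by
          gcongr; exact truncMoment_le_sq_mul hF.nonneg q hw1
      _ = w ^ 2 * ((N + 1) * truncMoment F q (w * τ)) := by ring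
  have hIcc := pairing_pow_Icc_mul_sqrt_le hF q (τ := w * τ) (by positivity) (b - v * τ) N
  calc _ ≤ pairing (F ^ N) (fun y => ind (Set.Icc (b - v * τ) (b - v * τ + w * τ)) (y q)) *
        (w * √((N + 1) * truncMoment F q (w * τ))) :=
        mul_le_mul (pairing_le_pairing (hF.nonneg.pow N) fun y => ind_mono hball _) hsqrt
          (Real.sqrt_nonneg _) (pairing_nonneg (hF.nonneg.pow N) fun _ => ind_nonneg _ _)
    _ ≤ 2 * w := by nlinarith

end Concentration

section AdjacentPowers

variable {ι : Type*} {F : FinMeas (ι → ℝ)}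

theorem pairing_pow_abs_sub_le_of_monotone (hF : IsSymmProb F) (q : ι) {g : ℝ → ℝ}
    (hg : Monotone g) (hg1 : ∀ t, |g t| ≤ 1) (n : ℕ) :
    pairing (F ^ n) (fun y => pairing F fun x => |g (y q) - g (y q + x q)|) ≤ 1 / √(n + 1) := by
  have hodd : pairing F (fun x : ι → ℝ => (SignType.sign (x q) : ℝ)) = 0 :=
    hF.symm.pairing_odd fun x => by rw [Pi.neg_apply, Left.sign_neg]; simp
  have hsq : pairing F (fun x : ι → ℝ => (SignType.sign (x q) : ℝ) ^ 2) ≤ 1 := by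
    refine hF.pairing_le fun x => ?_
    rcases lt_trichotomy (x q) 0 with h | h | h <;> simp [h]
  have habs (y x : ι → ℝ) : |g (y q) - g (y q + x q)| =
      SignType.sign (x q) * g (y q + x q) - g (y q) * SignType.sign (x q) := by
    rcases lt_trichotomy (x q) 0 with h | h | h
    · rw [abs_of_nonneg (sub_nonneg.2 (hg (by linarith))), sign_neg h, SignType.coe_neg_one]; ring
    · simp [h]
    · rw [abs_of_nonpos (sub_nonpos.2 (hg (by linarith))), sign_pos h, SignType.coe_one]; ring
  calc pairing (F ^ n) (fun y => pairing F fun x => |g (y q) - g (y q + x q)|)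
      = pairing (F ^ n * withDensity (fun x => (SignType.sign (x q) : ℝ)) F) fun y => g (y q) := by
        simp only [habs, pairing_sub, pairing_const_mul, hodd, mul_zero, sub_zero, mul_pairing,
          withDensity_pairing, Pi.add_apply]
    _ ≤ 1 * √(pairing F (fun x => (SignType.sign (x q) : ℝ) ^ 2) / (n + 1)) :=
        (le_abs_self _).trans <| abs_pairing_pow_mul_withDensity_le hF.toIsProb hodd n
          fun y => hg1 (y q)
    _ ≤ 1 * √(1 / (n + 1)) := by gcongr
    _ = 1 / √(n + 1) := by rw [one_mul, Real.sqrt_div zero_le_one, Real.sqrt_one]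

theorem ind_monotone {U : Set ℝ} (hU : IsUpperSet U) : Monotone (ind U) := fun a b hab => by
  by_cases ha : a ∈ U
  · simp [ha, hU hab ha]
  · simpa [ha] using ind_nonneg U b

theorem ind_eq_ind_upperClosure_sub (J : Set ℝ) (y : ℝ) :
    ind J y = ind (upperClosure J : Set ℝ) y - ind (↑(upperClosure J) \ J) y := by
  by_cases hy : y ∈ J
  · have : y ∈ (upperClosure J : Set ℝ) := subset_upperClosure hy
    simp [hy, this]
  · by_cases hy' : y ∈ (upperClosure J : Set ℝ) <;> simp [hy, hy']

theorem isUpperSet_upperClosure_sdiff {J : Set ℝ} (hJ : J.OrdConnected) :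
    IsUpperSet ((upperClosure J : Set ℝ) \ J) := fun _ _ hab ha =>
  ⟨(upperClosure J).upper hab ha.1, fun hb =>
    let ⟨_, hx, hxa⟩ := mem_upperClosure.1 ha.1
    ha.2 (hJ.out hx hb ⟨hxa, hab⟩)⟩

theorem pairing_pow_abs_ind_sub_le (hF : IsSymmProb F) (q : ι) {J : Set ℝ} (hJ : J.OrdConnected)
    (n : ℕ) :
    pairing (F ^ n) (fun y => pairing F fun x => |ind J (y q) - ind J (y q + x q)|) ≤
      2 / √(n + 1) := by
  have separation {U : Set ℝ} (hU : IsUpperSet U) :=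
    pairing_pow_abs_sub_le_of_monotone hF q (ind_monotone hU)
      (fun t => by rw [abs_of_nonneg (ind_nonneg U t)]; exact ind_le_one U t) n
  set U₁ : Set ℝ := ↑(upperClosure J)
  set U₂ : Set ℝ := U₁ \ J
  calc pairing (F ^ n) (fun y => pairing F fun x => |ind J (y q) - ind J (y q + x q)|)
      ≤ pairing (F ^ n) fun y => pairing F fun x =>
          |ind U₁ (y q) - ind U₁ (y q + x q)| + |ind U₂ (y q) - ind U₂ (y q + x q)| := by
        refine pairing_le_pairing (hF.nonneg.pow n) fun y =>
          pairing_le_pairing hF.nonneg fun x => ?_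
        rw [ind_eq_ind_upperClosure_sub J, ind_eq_ind_upperClosure_sub J (y q + x q),
          sub_sub_sub_comm]
        exact abs_sub _ _
    _ ≤ 1 / √(n + 1) + 1 / √(n + 1) := by
        simp only [pairing_add]
        exact add_le_add (separation (upperClosure J).upper)
          (separation (isUpperSet_upperClosure_sdiff hJ))
    _ = 2 / √(n + 1) := by ring

theorem abs_pairing_pow_sub_pairing_pow_succ_le [Fintype ι] (hF : IsSymmProb F) {I : ι → Set ℝ}
    (hI : IsBox I) (n : ℕ) :
    |pairing (F ^ n) (boxInd I) - pairing (F ^ (n + 1)) (boxInd I)| ≤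
      2 * Fintype.card ι / √(n + 1) := by
  have difference : pairing (F ^ n) (boxInd I) - pairing (F ^ (n + 1)) (boxInd I) =
      pairing (F ^ n) fun y => pairing F fun x => boxInd I y - boxInd I (y + x) := by
    simp only [pow_succ, mul_pairing, pairing_sub, pairing_const, hF.mass_eq_one, one_mul]
  calc |pairing (F ^ n) (boxInd I) - pairing (F ^ (n + 1)) (boxInd I)|
      ≤ pairing (F ^ n) fun y => pairing F fun x =>
          ∑ q, |ind (I q) (y q) - ind (I q) (y q + x q)| := by
        rw [difference]
        exact abs_pairing_le_pairing (hF.nonneg.pow n) fun y =>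
          abs_pairing_le_pairing hF.nonneg fun x => abs_boxInd_sub_le I y (y + x)
    _ ≤ ∑ _q : ι, 2 / √(n + 1) := by
        simp only [pairing_sum]
        exact Finset.sum_le_sum fun q _ => pairing_pow_abs_ind_sub_le hF q (hI q) n
    _ = 2 * Fintype.card ι / √(n + 1) := by
        rw [Finset.sum_const, Finset.card_univ, nsmul_eq_mul]; ring

end AdjacentPowers

end FinMeas

namespace FinMeas

theorem isNonneg_withDensity_withDensity {M : Type*} {F : FinMeas M} (hF : IsNonneg F) (ξ : M → ℝ) :
    IsNonneg (withDensity ξ (withDensity ξ F)) := by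
  rw [withDensity_withDensity]
  exact hF.withDensity fun _ => mul_self_nonneg _

theorem mass_withDensity_withDensity {M : Type*} (ξ : M → ℝ) (F : FinMeas M) :
    mass (withDensity ξ (withDensity ξ F)) = pairing F fun x => ξ x ^ 2 := by
  simp only [mass, withDensity_pairing, mul_one, sq]

section WeightedPowers

variable {M : Type*} [AddCommGroup M] {ξ : M → ℝ}

theorem withDensity_pow_succ (hξ : ∀ x y, ξ (x + y) = ξ x + ξ y) (F : FinMeas M) (n : ℕ) :
    withDensity ξ (F ^ (n + 1)) = ((n + 1 : ℕ) : ℝ) • (F ^ n * withDensity ξ F) := by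
  induction n with
  | zero => simp
  | succ n ih =>
    rw [pow_succ, withDensity_mul hξ, ih, smul_mul_assoc, mul_right_comm, ← pow_succ,
      Nat.cast_succ (n + 1), add_smul, one_smul]

theorem withDensity_withDensity_pow (hξ : ∀ x y, ξ (x + y) = ξ x + ξ y) (F : FinMeas M) (n : ℕ) :
    withDensity ξ (withDensity ξ (F ^ (n + 2))) =
      ((n + 2 : ℝ) * (n + 1)) • (F ^ n * withDensity ξ F ^ 2) +
        (n + 2 : ℝ) • (F ^ (n + 1) * withDensity ξ (withDensity ξ F)) := by
  rw [withDensity_pow_succ hξ, withDensity_smul, withDensity_mul hξ, withDensity_pow_succ hξ,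
    smul_add, smul_mul_assoc, smul_smul, mul_assoc, ← sq]
  push_cast
  rw [add_assoc (n : ℝ), one_add_one_eq_two]

theorem withDensity_withDensity_pow_mul_one_sub_pow (hξ : ∀ x y, ξ (x + y) = ξ x + ξ y)
    (F : FinMeas M) (n k : ℕ) :
    withDensity ξ (withDensity ξ (F ^ (n + 2) * (1 - F ^ (2 * k)))) =
      ((n + 2 : ℝ) * (n + 1)) • (F ^ n * (1 - F ^ (2 * k)) * withDensity ξ F ^ 2)
      - ((2 * k : ℝ) * (2 * n + 2 * k + 3)) • (F ^ (n + 2 * k) * withDensity ξ F ^ 2)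
      + (n + 2 : ℝ) • (F ^ (n + 1) * (1 - F ^ (2 * k)) * withDensity ξ (withDensity ξ F))
      - (2 * k : ℝ) • (F ^ (n + 2 * k + 1) * withDensity ξ (withDensity ξ F)) := by
  rw [mul_sub, mul_one, ← pow_add, withDensity_sub, withDensity_sub,
    withDensity_withDensity_pow hξ, add_right_comm n, withDensity_withDensity_pow hξ,
    add_right_comm n (2 * k), pow_add F n (2 * k), pow_add F (n + 1) (2 * k)]
  push_cast
  generalize withDensity ξ F ^ 2 = G
  generalize withDensity ξ (withDensity ξ F) = H
  generalize F ^ (2 * k) = Q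
  have factor (A B : FinMeas M) : A * (1 - Q) * B = A * B - A * Q * B := by ring
  rw [factor, factor]
  module

theorem abs_pairing_pow_mul_withDensity_sq_le {F : FinMeas M} (hF : IsProb F)
    (hξ : pairing F ξ = 0) (t : ℕ) {ν : FinMeas M} {f : M → ℝ} {B : ℝ}
    (hB : ∀ x, |pairing ν fun y => f (x + y)| ≤ B) :
    |pairing (F ^ (t + t) * ν * withDensity ξ F ^ 2) f| ≤
      B * (pairing F (fun x => ξ x ^ 2) / (t + 1)) := by
  have once := abs_pairing_pow_mul_withDensity_mul_le hF hξ t hB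
  have twice := abs_pairing_pow_mul_withDensity_mul_le hF hξ t once 0
  have hs : 0 ≤ pairing F (fun x => ξ x ^ 2) / (t + 1) :=
    div_nonneg (pairing_nonneg hF.nonneg fun _ => sq_nonneg _) (by positivity)
  have regroup : F ^ (t + t) * ν * withDensity ξ F ^ 2 =
      F ^ t * withDensity ξ F * (F ^ t * withDensity ξ F * ν) := by
    rw [pow_add]; ring
  simpa only [regroup, zero_add, mul_assoc B, Real.mul_self_sqrt hs] using twice

theorem abs_mul_pairing_le_mass_mul {G : FinMeas M} (hG : IsNonneg G) {ν : FinMeas M}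
    {f : M → ℝ} {B : ℝ} (hB : ∀ x, |pairing ν fun y => f (x + y)| ≤ B) :
    |pairing (ν * G) f| ≤ mass G * B := by
  rw [mul_comm, mul_pairing]
  exact abs_pairing_le_mass_mul hG hB

end WeightedPowers

section TailBound

variable {m : ℕ}

/-- The shape of the bound on `(F ^ n - F ^ (n + 2 * k))` of a box in dimension `m`; the constant
`C` is the quantity improved by the induction. -/
noncomputable def stepBound (m : ℕ) (C : ℝ) (k n : ℕ) : ℝ := C * k / n + 70 * m / √n

/-- The bound to be bootstrapped: `stepBound m C` dominates the box discrepancies between `F ^ n`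
and `F ^ (n + 2 * k)`, for all `n ≤ N` and all finitely supported symmetric `F`. -/
def EvenStepBound (m N : ℕ) (C : ℝ) : Prop :=
  ∀ n k : ℕ, 1 ≤ n → n ≤ N → 1 ≤ k → ∀ F : FinMeas (Fin m → ℝ), IsSymmProb F →
    ∀ I : Fin m → Set ℝ, IsBox I →
      |pairing (F ^ n * (1 - F ^ (2 * k))) (boxInd I)| ≤ stepBound m C k n

theorem stepBound_nonneg (m : ℕ) {C : ℝ} (hC : 0 ≤ C) (k n : ℕ) : 0 ≤ stepBound m C k n := by
  unfold stepBound; positivity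

theorem stepBound_le_four_mul (m : ℕ) {C : ℝ} (hC : 0 ≤ C) (k : ℕ) {n l : ℕ} (hn : 1 ≤ n)
    (h : n ≤ 4 * l) : stepBound m C k l ≤ 4 * stepBound m C k n := by
  have hn' : (0 : ℝ) < n := by exact_mod_cast hn
  have h' : (n : ℝ) / 4 ≤ l := by
    rw [div_le_iff₀' four_pos]
    exact_mod_cast h
  have sqrt_quarter : √(n / 4 : ℝ) = √n / 2 := by
    rw [Real.sqrt_div hn'.le, show (4 : ℝ) = 2 ^ 2 by norm_num, Real.sqrt_sq zero_le_two]
  calc stepBound m C k l ≤ C * k / (n / 4) + 70 * m / √(n / 4 : ℝ) := by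
        unfold stepBound; gcongr
    _ = 4 * (C * k / n) + 2 * (70 * m / √n) := by rw [sqrt_quarter]; field_simp
    _ ≤ 4 * stepBound m C k n := by
        rw [stepBound, mul_add]
        gcongr
        norm_num

theorem le_mul_stepBound (m : ℕ) {C : ℝ} (hC : 1 ≤ C) (k : ℕ) {n : ℕ} (hn : 1 ≤ n) :
    (k : ℝ) ≤ n * stepBound m C k n := by
  have hn' : (n : ℝ) ≠ 0 := Nat.cast_ne_zero.2 (by omega)
  calc (k : ℝ) ≤ C * k := le_mul_of_one_le_left k.cast_nonneg hC
    _ = n * (C * k / n) := (mul_div_cancel₀ _ hn').symm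
    _ ≤ n * stepBound m C k n := by
        unfold stepBound
        gcongr
        exact le_add_of_nonneg_right (by positivity)

/-- The second moment of the `q`-th coordinate. -/
noncomputable def secondMoment (F : FinMeas (Fin m → ℝ)) (q : Fin m) : ℝ :=
  pairing F fun x => x q ^ 2

theorem secondMoment_nonneg {F : FinMeas (Fin m → ℝ)} (hF : IsNonneg F) (q : Fin m) :
    0 ≤ secondMoment F q := pairing_nonneg hF fun _ => sq_nonneg _

section EvenStep

variable {N₀ : ℕ} {C : ℝ} {F : FinMeas (Fin m → ℝ)} {I : Fin m → Set ℝ} {N k : ℕ}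

theorem EvenStepBound.abs_pairing_comp_add_le (hH : EvenStepBound m N₀ C) (hC : 0 ≤ C)
    (hF : IsSymmProb F) (hk : 1 ≤ k) (hI : IsBox I) {l : ℕ} (hl : 1 ≤ l) (hlN : l ≤ N)
    (hNl : N ≤ 4 * l) (hN : N ≤ N₀) (x : Fin m → ℝ) :
    |pairing (F ^ l * (1 - F ^ (2 * k))) fun y => boxInd I (x + y)| ≤ 4 * stepBound m C k N :=
  (hH l k hl (hlN.trans hN) hk F hF _ (hI.boxShift x)).trans
    (stepBound_le_four_mul m hC k (hl.trans hlN) hNl)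

theorem abs_pairing_pow_mul_withDensity_sq_le_of_quarter (hF : IsSymmProb F) (q : Fin m)
    {n : ℕ} {ν : FinMeas (Fin m → ℝ)} {f : (Fin m → ℝ) → ℝ} {B : ℝ} (hB0 : 0 ≤ B)
    (hB : ∀ x, |pairing (F ^ (n - 2 * ((n + 2) / 4)) * ν) fun y => f (x + y)| ≤ B) :
    |pairing (F ^ n * ν * withDensity (fun x => x q) F ^ 2) f| ≤
      B * (4 * secondMoment F q / (n + 2)) := by
  set t := (n + 2) / 4
  have hodd : pairing F (fun x : Fin m → ℝ => x q) = 0 := hF.symm.pairing_odd fun _ => rfl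
  have hsq := abs_pairing_pow_mul_withDensity_sq_le hF.toIsProb hodd t hB
  rw [← mul_assoc, ← pow_add, show t + t + (n - 2 * t) = n by omega] at hsq
  have ht4 : (n + 2 : ℝ) ≤ 4 * (t + 1) := by
    exact_mod_cast (show n + 2 ≤ 4 * (t + 1) by omega)
  refine hsq.trans (mul_le_mul_of_nonneg_left ?_ hB0)
  rw [div_le_div_iff₀ (by positivity) (by positivity)]
  have := secondMoment_nonneg hF.nonneg q
  calc secondMoment F q * (n + 2) ≤ secondMoment F q * (4 * (t + 1)) := by gcongr
    _ = 4 * secondMoment F q * (t + 1) := by ring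

theorem abs_sub_add_sub_le {a b c d a' b' c' d' : ℝ} (ha : |a| ≤ a') (hb : |b| ≤ b')
    (hc : |c| ≤ c') (hd : |d| ≤ d') : |a - b + c - d| ≤ a' + b' + c' + d' := by
  rw [abs_le] at *
  constructor <;> linarith

theorem weight_budget {n k M b : ℝ} (hn : 0 ≤ n) (hk : 0 ≤ k) (hM : 0 ≤ M) (hb : 0 ≤ b)
    (hkn : k ≤ n + 2) (hkb : k ≤ (n + 2) * b) :
    (n + 2) * (n + 1) * (4 * b * (4 * M / (n + 2))) +
        2 * k * (2 * n + 2 * k + 3) * (1 * (4 * M / (n + 2))) +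
        (n + 2) * (M * (4 * b)) + 2 * k * M ≤ 54 * (n + 2) * M * b := by
  have hkMb : k * M ≤ (n + 2) * b * M := mul_le_mul_of_nonneg_right hkb hM
  have first : (n + 2) * (n + 1) * (4 * b * (4 * M / (n + 2))) ≤ 16 * (n + 2) * M * b := by
    have : (n + 2) * (n + 1) * (4 * b * (4 * M / (n + 2))) = 16 * (n + 1) * (M * b) := by
      field_simp; ring
    nlinarith [mul_nonneg hM hb]
  have second : 2 * k * (2 * n + 2 * k + 3) * (1 * (4 * M / (n + 2))) ≤ 32 * (k * M) := by
    calc 2 * k * (2 * n + 2 * k + 3) * (1 * (4 * M / (n + 2)))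
        ≤ 2 * k * (4 * (n + 2)) * (1 * (4 * M / (n + 2))) := by gcongr; linarith
      _ = 32 * (k * M) := by field_simp; ring
  linarith

theorem EvenStepBound.abs_pairing_sq_mul_boxInd_le (hH : EvenStepBound m N₀ C) (hC : 1 ≤ C)
    (hF : IsSymmProb F) (q : Fin m) (hN : 8 ≤ N) (hN₀ : N ≤ N₀) (hk : 1 ≤ k) (hkN : k ≤ N)
    (hI : IsBox I) :
    |pairing (F ^ N * (1 - F ^ (2 * k))) fun x => x q ^ 2 * boxInd I x| ≤
      54 * N * secondMoment F q * stepBound m C k N := by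
  obtain ⟨n, rfl⟩ : ∃ n, N = n + 2 := ⟨N - 2, by omega⟩
  have hC0 : 0 ≤ C := zero_le_one.trans hC
  set ξ : (Fin m → ℝ) → ℝ := fun x => x q with hξ_def
  set b := stepBound m C k (n + 2)
  have hb : 0 ≤ b := stepBound_nonneg m hC0 _ _
  have hM := secondMoment_nonneg hF.nonneg q
  have hG := isNonneg_withDensity_withDensity hF.nonneg ξ
  have hG_mass : mass (withDensity ξ (withDensity ξ F)) = secondMoment F q :=
    mass_withDensity_withDensity ξ F
  set M := secondMoment F q
  set G := withDensity ξ (withDensity ξ F)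
  have quarter (l : ℕ) (h : n - 2 * ((n + 2) / 4) ≤ l) (h' : l ≤ n + 1) :=
    hH.abs_pairing_comp_add_le hC0 hF hk hI (N := n + 2) (l := l) (by omega) (by omega) (by omega)
      hN₀
  have term₁ : |pairing (F ^ n * (1 - F ^ (2 * k)) * withDensity ξ F ^ 2) (boxInd I)| ≤
      4 * b * (4 * M / (n + 2)) :=
    abs_pairing_pow_mul_withDensity_sq_le_of_quarter hF q (by positivity)
      (quarter _ le_rfl (by omega))
  have term₂ : |pairing (F ^ (n + 2 * k) * withDensity ξ F ^ 2) (boxInd I)| ≤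
      1 * (4 * M / (n + 2)) := by
    rw [pow_add]
    refine abs_pairing_pow_mul_withDensity_sq_le_of_quarter hF q zero_le_one fun x => ?_
    exact ((hF.pow _).mul (hF.pow _)).abs_pairing_le fun y => abs_boxInd_le_one _ _
  have term₃ : |pairing (F ^ (n + 1) * (1 - F ^ (2 * k)) * G) (boxInd I)| ≤ M * (4 * b) := by
    rw [← hG_mass]
    exact abs_mul_pairing_le_mass_mul hG (quarter _ (by omega) le_rfl)
  have term₄ : |pairing (F ^ (n + 2 * k + 1) * G) (boxInd I)| ≤ M := by
    rw [← hG_mass, ← mul_one (mass G)]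
    exact abs_mul_pairing_le_mass_mul hG fun x => (hF.pow _).abs_pairing_le fun y =>
      abs_boxInd_le_one _ _
  have scale {c v w : ℝ} (hc : 0 ≤ c) (h : |v| ≤ w) : |c * v| ≤ c * w := by
    rw [abs_mul, abs_of_nonneg hc]; gcongr
  have expand : (pairing (F ^ (n + 2) * (1 - F ^ (2 * k))) fun x => x q ^ 2 * boxInd I x) =
      pairing (withDensity ξ (withDensity ξ (F ^ (n + 2) * (1 - F ^ (2 * k))))) (boxInd I) := by
    simp only [withDensity_pairing, hξ_def, sq, mul_assoc]
  rw [expand, withDensity_withDensity_pow_mul_one_sub_pow fun _ _ => rfl]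
  simp only [add_pairing, sub_pairing, smul_pairing, smul_eq_mul]
  refine (abs_sub_add_sub_le (scale (by positivity) term₁) (scale (by positivity) term₂)
    (scale (by positivity) term₃) (scale (by positivity) term₄)).trans ?_
  push_cast
  exact weight_budget n.cast_nonneg k.cast_nonneg hM hb (by exact_mod_cast hkN)
    (by exact_mod_cast le_mul_stepBound m hC k (by omega : 1 ≤ n + 2))

theorem ordConnected_setOf_sq_mul_le (u : ℝ) {t : ℝ} (ht : 0 ≤ t) :
    Set.OrdConnected {z : ℝ | z ^ 2 * t ≤ u} := by
  refine ⟨fun a (ha : a ^ 2 * t ≤ u) b (hb : b ^ 2 * t ≤ u) c hc => ?_⟩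
  have hc2 : c ^ 2 ≤ max (a ^ 2) (b ^ 2) := by
    rcases le_total 0 c with h | h
    · exact le_max_of_le_right (by nlinarith [hc.2])
    · exact le_max_of_le_left (by nlinarith [hc.1])
  rcases le_max_iff.1 hc2 with h | h
  · exact (mul_le_mul_of_nonneg_right h ht).trans ha
  · exact (mul_le_mul_of_nonneg_right h ht).trans hb

theorem integral_sq_mul_ind_setOf_sq_mul_le {x u : ℝ} (hu : 0 < u) (hx : u ≤ |x|) :
    ∫ t in (0 : ℝ)..1, x ^ 2 * ind {z | z ^ 2 * t ≤ u ^ 2} x = u ^ 2 := by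
  have hx2 : u ^ 2 ≤ x ^ 2 := by rw [← sq_abs x]; gcongr
  have hx0 : 0 < x ^ 2 := (by positivity : 0 < u ^ 2).trans_le hx2
  have threshold : (fun t : ℝ => x ^ 2 * ind {z | z ^ 2 * t ≤ u ^ 2} x) =
      {t | t ≤ u ^ 2 / x ^ 2}.indicator fun _ => x ^ 2 := by
    funext t
    by_cases h : t ≤ u ^ 2 / x ^ 2
    · have h' := h
      rw [le_div_iff₀' hx0] at h'
      simp [h, h']
    · have h' := h
      rw [le_div_iff₀' hx0] at h'
      simp [h, h']
  rw [threshold, intervalIntegral.integral_indicator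
    ⟨by positivity, (div_le_one hx0).2 hx2⟩, intervalIntegral.integral_const, smul_eq_mul,
    sub_zero, div_mul_cancel₀ _ hx0.ne']

theorem sq_mul_boxInd_eq_integral (q : Fin m) {u : ℝ} (hu : 0 < u) (hI : ∀ z ∈ I q, u ≤ |z|)
    (x : Fin m → ℝ) :
    u ^ 2 * boxInd I x =
      ∫ t in (0 : ℝ)..1, x q ^ 2 * (boxInd I x * ind {z | z ^ 2 * t ≤ u ^ 2} (x q)) := by
  by_cases hx : x q ∈ I q
  · simp only [mul_left_comm _ (boxInd I x)]
    rw [intervalIntegral.integral_const_mul,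
      integral_sq_mul_ind_setOf_sq_mul_le hu (hI _ hx), mul_comm]
  · simp [boxInd_of_notMem hx]

theorem intervalIntegrable_sq_mul_boxInd (I : Fin m → Set ℝ) (q : Fin m) (u : ℝ)
    (x : Fin m → ℝ) : IntervalIntegrable
      (fun t => x q ^ 2 * (boxInd I x * ind {z | z ^ 2 * t ≤ u ^ 2} (x q))) volume 0 1 := by
  refine Antitone.intervalIntegrable fun s t hst => ?_
  refine mul_le_mul_of_nonneg_left (mul_le_mul_of_nonneg_left ?_ (boxInd_nonneg _ _))
    (sq_nonneg _)
  by_cases h : x q ^ 2 * t ≤ u ^ 2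
  · have : x q ^ 2 * s ≤ u ^ 2 := (mul_le_mul_of_nonneg_left hst (sq_nonneg _)).trans h
    simp [h, this]
  · simpa [h] using ind_nonneg {z | z ^ 2 * s ≤ u ^ 2} (x q)

/- Chebyshev's inequality for a signed measure: `u ^ 2` is the integral over `t ∈ [0, 1]` of
`x ^ 2` on `{t * x ^ 2 ≤ u ^ 2}`, and intersecting `I` with that set yields again a box. -/
theorem EvenStepBound.abs_pairing_boxInd_le_of_le_abs (hH : EvenStepBound m N₀ C) (hC : 1 ≤ C)
    (hF : IsSymmProb F) (q : Fin m) (hN : 8 ≤ N) (hN₀ : N ≤ N₀) (hk : 1 ≤ k) (hkN : k ≤ N)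
    (hI : IsBox I) {u : ℝ} (hu : 0 < u) (hIu : ∀ z ∈ I q, u ≤ |z|) :
    |pairing (F ^ N * (1 - F ^ (2 * k))) (boxInd I)| ≤
      54 * N * secondMoment F q * stepBound m C k N / u ^ 2 := by
  set μ := F ^ N * (1 - F ^ (2 * k))
  set S : ℝ → Set ℝ := fun t => {z | z ^ 2 * t ≤ u ^ 2}
  have layer (t : ℝ) (x : Fin m → ℝ) :
      boxInd (Function.update I q (I q ∩ S t)) x = boxInd I x * ind (S t) (x q) := by
    conv_rhs => rw [← Function.update_eq_self q I]
    rw [boxInd_update, boxInd_update, ind_inter, mul_right_comm]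
  have layered : u ^ 2 * pairing μ (boxInd I) =
      ∫ t in (0 : ℝ)..1, pairing μ fun x => x q ^ 2 * (boxInd I x * ind (S t) (x q)) := by
    rw [← pairing_const_mul]
    simp only [sq_mul_boxInd_eq_integral q hu hIu, pairing_eq_sum]
    refine (Finset.sum_congr rfl fun x _ => (intervalIntegral.integral_const_mul _ _).symm).trans
      (intervalIntegral.integral_finsetSum fun x _ => ?_).symm
    exact (intervalIntegrable_sq_mul_boxInd I q u x).const_mul (μ.coeff x)
  have hlayer := intervalIntegral.norm_integral_le_of_norm_le_const (a := 0) (b := 1)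
    (f := fun t => pairing μ fun x => x q ^ 2 * (boxInd I x * ind (S t) (x q)))
    (C := 54 * N * secondMoment F q * stepBound m C k N) fun t ht => by
      rw [Set.uIoc_of_le zero_le_one] at ht
      simp only [← layer]
      exact hH.abs_pairing_sq_mul_boxInd_le hC hF q hN hN₀ hk hkN
        (hI.update q ((hI q).inter (ordConnected_setOf_sq_mul_le _ ht.1.le)))
  rw [le_div_iff₀' (pow_pos hu 2)]
  rwa [← layered, Real.norm_eq_abs, abs_mul, abs_of_pos (pow_pos hu 2), sub_zero, abs_one,
    mul_one] at hlayer

end EvenStep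

end TailBound

end FinMeas

namespace FinMeas

section Swap

variable {M : Type*} [AddCommGroup M] {F R μ ν κ : FinMeas M} {f : M → ℝ}

theorem abs_pairing_sub_le_of_mass_eq {M : Type*} {μ ν : FinMeas M} {f : M → ℝ} {c : ℝ}
    (hμ : IsNonneg μ) (hν : IsNonneg ν) (hμc : mass μ = c) (hνc : mass ν = c)
    (h0 : ∀ x, 0 ≤ f x) (h1 : ∀ x, f x ≤ 1) : |pairing (μ - ν) f| ≤ c := by
  rw [sub_pairing]
  refine abs_sub_le_of_nonneg_of_le (pairing_nonneg hμ h0) ?_ (pairing_nonneg hν h0) ?_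
  · simpa [hμc] using pairing_le_mass_mul hμ h1
  · simpa [hνc] using pairing_le_mass_mul hν h1

theorem abs_pairing_mul_pow_sub_pow_le (hF : IsProb F) (hR : IsProb R) {B : ℝ}
    (hB : ∀ ν, IsProb ν → |pairing (κ * ν * (F - R)) f| ≤ B) (j : ℕ) (hν : IsProb ν) :
    |pairing (κ * ν * (F ^ j - R ^ j)) f| ≤ j * B := by
  induction j generalizing ν with
  | zero => simp [zero_pairing]
  | succ j ih =>
    have telescope : κ * ν * (F ^ (j + 1) - R ^ (j + 1)) =
        κ * (ν * F ^ j) * (F - R) + κ * (ν * R) * (F ^ j - R ^ j) := by ring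
    rw [telescope, add_pairing]
    calc _ ≤ _ := abs_add_le _ _
      _ ≤ B + j * B := add_le_add (hB _ (hν.mul (hF.pow j))) (ih (hν.mul hR))
      _ = _ := by push_cast; ring

theorem abs_pairing_pow_sub_pow_le_mass (hF : IsProb F) (hR : IsProb R) (hμ : IsNonneg μ)
    (hFR : F = μ + (1 - mass μ) • R) (h0 : ∀ x, 0 ≤ f x) (h1 : ∀ x, f x ≤ 1) (j : ℕ)
    (hν : IsProb ν) : |pairing (ν * (F ^ j - R ^ j)) f| ≤ j * mass μ := by
  rw [← one_mul ν]
  refine abs_pairing_mul_pow_sub_pow_le hF hR (fun ν' hν' => ?_) j hν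
  have difference : 1 * ν' * (F - R) = ν' * μ - mass μ • (ν' * R) := by
    rw [one_mul, ← mul_smul_comm, ← mul_sub, hFR]; congr 1; module
  rw [difference]
  refine abs_pairing_sub_le_of_mass_eq (hν'.nonneg.mul hμ)
    ((hν'.nonneg.mul hR.nonneg).smul (mass_nonneg hμ)) ?_ ?_ h0 h1
  · rw [mass_mul, hν'.mass_eq_one, one_mul]
  · rw [mass, smul_pairing, ← mass, mass_mul, hν'.mass_eq_one, hR.mass_eq_one, one_mul,
      smul_eq_mul, mul_one]

theorem abs_pairing_pow_mul_one_sub_pow_le_one (hR : IsProb R) (h0 : ∀ x, 0 ≤ f x)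
    (h1 : ∀ x, f x ≤ 1) (n j : ℕ) : |pairing (R ^ n * (1 - R ^ j)) f| ≤ 1 := by
  rw [mul_sub, mul_one, ← pow_add]
  exact abs_pairing_sub_le_of_mass_eq (hR.pow n).nonneg (hR.pow _).nonneg (hR.pow n).mass_eq_one
    (hR.pow _).mass_eq_one h0 h1

end Swap

section Mixture

theorem sum_range_sq_mul_binomial (p : ℝ) (n : ℕ) :
    ∑ j ∈ Finset.range (n + 1), (n * p - j) ^ 2 * ((n.choose j : ℝ) * (p ^ j * (1 - p) ^ (n - j))) =
      n * p * (1 - p) := by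
  have h := congrArg (Polynomial.eval p) (bernsteinPolynomial.variance ℝ n)
  simpa only [Polynomial.eval_finsetSum, Polynomial.eval_mul, Polynomial.eval_pow,
    Polynomial.eval_sub, Polynomial.eval_smul, Polynomial.eval_X, Polynomial.eval_natCast,
    Polynomial.eval_one, bernsteinPolynomial, nsmul_eq_mul, mul_assoc] using h

theorem sum_filter_binomial_le {p : ℝ} (hp : 0 ≤ p) (hp2 : p ≤ 1 / 2) {n : ℕ} (hn : 1 ≤ n) :
    ∑ j ∈ Finset.range (n + 1) with 3 * n < 4 * j,
      (n.choose j : ℝ) * (p ^ j * (1 - p) ^ (n - j)) ≤ 4 / n := by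
  have hq : 0 ≤ 1 - p := by linarith
  have hn' : (0 : ℝ) < n := by exact_mod_cast hn
  set S := ∑ j ∈ Finset.range (n + 1) with 3 * n < 4 * j,
    (n.choose j : ℝ) * (p ^ j * (1 - p) ^ (n - j))
  have chebyshev : (n / 4 : ℝ) ^ 2 * S ≤ n * p * (1 - p) := by
    rw [← sum_range_sq_mul_binomial, Finset.mul_sum]
    refine (Finset.sum_le_sum fun j hj => ?_).trans
      (Finset.sum_le_sum_of_subset_of_nonneg (Finset.filter_subset _ _) fun j _ _ => by positivity)
    refine mul_le_mul_of_nonneg_right ?_ (by positivity)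
    have hj' : (3 * n : ℝ) < 4 * j := by exact_mod_cast (Finset.mem_filter.1 hj).2
    rw [← neg_sq (n * p - (j : ℝ))]
    exact pow_le_pow_left₀ (by positivity) (by nlinarith) 2
  have variance_le : (n : ℝ) * p * (1 - p) ≤ n / 4 := by nlinarith [sq_nonneg (p - 1 / 2)]
  rw [le_div_iff₀ hn']
  exact le_of_mul_le_mul_left (by nlinarith : (n : ℝ) * (S * n) ≤ n * 4) hn'

theorem add_smul_pow {A : Type*} [CommRing A] [Algebra ℝ A] (x y : A) (c : ℝ) (n : ℕ) :
    (x + c • y) ^ n = ∑ j ∈ Finset.range (n + 1),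
      ((n.choose j : ℝ) * c ^ (n - j)) • (x ^ j * y ^ (n - j)) := by
  rw [add_pow]
  refine Finset.sum_congr rfl fun j _ => ?_
  rw [smul_pow, mul_smul_comm, smul_mul_assoc, mul_comm (n.choose j : ℝ), mul_smul,
    ← nsmul_eq_mul', Nat.cast_smul_eq_nsmul]

variable {M : Type*} [AddCommGroup M] {R μ : FinMeas M}

/- Expanding the power of the mixture, `R` appears to a power `l ≥ n / 4` except with probability
at most `4 / n`. -/
theorem abs_pairing_mixture_pow_le (hR : IsProb R) (hμ : IsNonneg μ) (hμ2 : mass μ ≤ 1 / 2)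
    {f Φ : M → ℝ} (h0 : ∀ x, 0 ≤ f x) (h1 : ∀ x, f x ≤ 1) (hΦ0 : ∀ x, 0 ≤ Φ x) {n i : ℕ}
    (hn : 1 ≤ n)
    (hΦ : ∀ l ≤ n, n ≤ 4 * l → ∀ y, |pairing (R ^ l * (1 - R ^ i)) fun x => f (y + x)| ≤ Φ y) :
    |pairing ((μ + (1 - mass μ) • R) ^ n * (1 - R ^ i)) f| ≤
      pairing ((μ + (1 - mass μ) • (1 : FinMeas M)) ^ n) Φ + 4 / n := by
  set p := mass μ with hp_def
  have hp : 0 ≤ p := mass_nonneg hμ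
  have hq : 0 ≤ 1 - p := by linarith
  set c : ℕ → ℝ := fun j => (n.choose j : ℝ) * (1 - p) ^ (n - j)
  have hc (j : ℕ) : 0 ≤ c j := by positivity
  have bad (j : ℕ) : |pairing (μ ^ j * (R ^ (n - j) * (1 - R ^ i))) f| ≤ p ^ j := by
    rw [mul_pairing, hp_def, ← mass_pow, ← mul_one (mass _)]
    exact abs_pairing_le_mass_mul (hμ.pow j) fun y =>
      abs_pairing_pow_mul_one_sub_pow_le_one hR (fun _ => h0 _) (fun _ => h1 _) _ _
  have term (j : ℕ) (hj : j ∈ Finset.range (n + 1)) :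
      |c j * pairing (μ ^ j * (R ^ (n - j) * (1 - R ^ i))) f| ≤ c j * pairing (μ ^ j) Φ +
        if 3 * n < 4 * j then (n.choose j : ℝ) * (p ^ j * (1 - p) ^ (n - j)) else 0 := by
    rw [abs_mul, abs_of_nonneg (hc j)]
    split_ifs with hbad
    · have := mul_le_mul_of_nonneg_left (bad j) (hc j)
      have := mul_nonneg (hc j) (pairing_nonneg (hμ.pow j) hΦ0)
      linarith
    · have := Finset.mem_range.1 hj
      rw [add_zero, mul_pairing]
      exact mul_le_mul_of_nonneg_left (abs_pairing_le_pairing (hμ.pow j) fun y =>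
        hΦ (n - j) (by omega) (by omega) y) (hc j)
  simp only [add_smul_pow, Finset.sum_mul, smul_mul_assoc, mul_assoc (μ ^ _), sum_pairing,
    smul_pairing, smul_eq_mul, one_pow, mul_one]
  refine (Finset.abs_sum_le_sum_abs _ _).trans ((Finset.sum_le_sum term).trans ?_)
  rw [Finset.sum_add_distrib, ← Finset.sum_filter]
  gcongr
  exact sum_filter_binomial_le hp hμ2 hn

end Mixture

section Conditioning

variable {M : Type*} {F : FinMeas M} {T : Set M} {f : M → ℝ}

/-- The measure of a set. -/
noncomputable def prob (F : FinMeas M) (T : Set M) : ℝ := pairing F (ind T)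

/-- The restriction of a measure to a set. -/
noncomputable def restrict (F : FinMeas M) (T : Set M) : FinMeas M := withDensity (ind T) F

/-- The law `F` conditioned on the complement of `T`; meaningful when `prob F T < 1`. -/
noncomputable def condCompl (F : FinMeas M) (T : Set M) : FinMeas M :=
  (1 - prob F T)⁻¹ • restrict F Tᶜ

theorem isNonneg_restrict (hF : IsNonneg F) (T : Set M) : IsNonneg (restrict F T) :=
  hF.withDensity (ind_nonneg T)

theorem restrict_pairing (F : FinMeas M) (T : Set M) (f : M → ℝ) :
    pairing (restrict F T) f = pairing F fun x => ind T x * f x := withDensity_pairing _ _ _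

theorem mass_restrict (F : FinMeas M) (T : Set M) : mass (restrict F T) = prob F T := by
  simp only [mass, restrict_pairing, mul_one, prob]

theorem prob_nonneg (hF : IsNonneg F) (T : Set M) : 0 ≤ prob F T :=
  pairing_nonneg hF (ind_nonneg T)

theorem prob_compl (hF : IsProb F) (T : Set M) : prob F Tᶜ = 1 - prob F T := by
  simp only [prob, pairing_sub, pairing_const, hF.mass_eq_one, mul_one,
    funext (ind_compl T)]

theorem restrict_add_smul_condCompl (hT : prob F T < 1) :
    restrict F T + (1 - prob F T) • condCompl F T = F := by
  rw [condCompl, smul_smul, mul_inv_cancel₀ (by linarith), one_smul]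
  refine ext_coeff fun x => ?_
  simp only [restrict, AddMonoidAlgebra.coeff_add, Finsupp.add_apply, coeff_withDensity, ind_compl]
  ring

theorem condCompl_pairing (F : FinMeas M) (T : Set M) (f : M → ℝ) :
    pairing (condCompl F T) f = (1 - prob F T)⁻¹ * pairing F fun x => ind Tᶜ x * f x := by
  rw [condCompl, smul_pairing, restrict_pairing, smul_eq_mul]

theorem condCompl_pairing_le (hF : IsNonneg F) (hT : prob F T ≤ 1 / 2) (hf : ∀ x, 0 ≤ f x) :
    pairing (condCompl F T) f ≤ 2 * pairing F fun x => ind Tᶜ x * f x := by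
  rw [condCompl_pairing]
  refine mul_le_mul_of_nonneg_right ?_
    (pairing_nonneg hF fun x => mul_nonneg (ind_nonneg _ _) (hf x))
  rw [inv_le_comm₀ (by linarith) two_pos]
  linarith

theorem le_condCompl_pairing (hF : IsNonneg F) (hT : prob F T < 1) (hf : ∀ x, 0 ≤ f x) :
    (pairing F fun x => ind Tᶜ x * f x) ≤ pairing (condCompl F T) f := by
  rw [condCompl_pairing]
  refine le_mul_of_one_le_left
    (pairing_nonneg hF fun x => mul_nonneg (ind_nonneg _ _) (hf x)) ?_
  rw [one_le_inv₀ (by linarith)]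
  linarith [prob_nonneg hF T]

theorem coeff_ne_zero_and_notMem_of_coeff_condCompl_ne_zero {x : M}
    (h : (condCompl F T).coeff x ≠ 0) : F.coeff x ≠ 0 ∧ x ∉ T := by
  contrapose! h
  by_cases hx : F.coeff x = 0
  · simp [condCompl, restrict, coeff_withDensity, hx]
  · simp [condCompl, restrict, coeff_withDensity, h hx]

theorem isProb_condCompl (hF : IsProb F) (hT : prob F T < 1) : IsProb (condCompl F T) where
  nonneg := (isNonneg_restrict hF.nonneg _).smul (inv_nonneg.2 (by linarith))
  mass_eq_one := by
    rw [condCompl, mass, smul_pairing, ← mass, mass_restrict, prob_compl hF, smul_eq_mul,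
      inv_mul_cancel₀ (by linarith)]

end Conditioning

section SymmetricConditioning

variable {M : Type*} [AddCommGroup M] {F : FinMeas M} {T : Set M}

theorem IsSymm.restrict (hF : IsSymm F) (hT : ∀ x, -x ∈ T ↔ x ∈ T) : IsSymm (restrict F T) :=
  hF.withDensity fun x => by
    classical exact if_congr (hT x) rfl rfl

theorem isSymmProb_condCompl (hF : IsSymmProb F) (hT : ∀ x, -x ∈ T ↔ x ∈ T)
    (hp : prob F T < 1) : IsSymmProb (condCompl F T) :=
  ⟨isProb_condCompl hF.toIsProb hp, (hF.symm.restrict fun x => not_congr (hT x)).smul _⟩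

theorem IsSymm.one : IsSymm (1 : FinMeas M) := fun x => by
  rcases eq_or_ne x 0 with rfl | hx
  · rw [neg_zero]
  · simp [AddMonoidAlgebra.one_def, Finsupp.single_eq_of_ne, hx]

/-- The law that agrees with `F` on `T` and has the remaining mass at the origin. -/
noncomputable def collapseCompl (F : FinMeas M) (T : Set M) : FinMeas M :=
  restrict F T + (1 - prob F T) • (1 : FinMeas M)

theorem isSymmProb_collapseCompl (hF : IsSymmProb F) (hT : ∀ x, -x ∈ T ↔ x ∈ T)
    (hp : prob F T ≤ 1) : IsSymmProb (collapseCompl F T) where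
  nonneg := (isNonneg_restrict hF.nonneg T).add (IsNonneg.one.smul (by linarith))
  mass_eq_one := by
    rw [mass, collapseCompl, add_pairing, smul_pairing, one_pairing, ← mass, mass_restrict,
      smul_eq_mul]
    ring
  symm x := by
    simp only [collapseCompl, AddMonoidAlgebra.coeff_add, Finsupp.add_apply,
      (hF.symm.restrict hT) x, (IsSymm.one.smul (1 - prob F T)) x]

theorem abs_pairing_pow_mul_one_sub_condCompl_pow_le (hF : IsProb F) (hp : prob F T ≤ 1 / 2)
    {f Φ : M → ℝ} (h0 : ∀ x, 0 ≤ f x) (h1 : ∀ x, f x ≤ 1) (hΦ0 : ∀ x, 0 ≤ Φ x) {n i : ℕ}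
    (hn : 1 ≤ n)
    (hΦ : ∀ l ≤ n, n ≤ 4 * l → ∀ y,
      |pairing (condCompl F T ^ l * (1 - condCompl F T ^ i)) fun x => f (y + x)| ≤ Φ y) :
    |pairing (F ^ n * (1 - condCompl F T ^ i)) f| ≤
      pairing (collapseCompl F T ^ n) Φ + 4 / n := by
  have hR := isProb_condCompl hF (hp.trans_lt one_half_lt_one)
  have := abs_pairing_mixture_pow_le hR (isNonneg_restrict hF.nonneg T)
    (by rwa [mass_restrict]) h0 h1 hΦ0 hn hΦ
  rwa [mass_restrict, restrict_add_smul_condCompl (hp.trans_lt one_half_lt_one)] at this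

end SymmetricConditioning

end FinMeas

namespace FinMeas

section Centered

variable {M : Type*}

theorem pairing_ind_sub_prob {F : FinMeas M} (hF : IsProb F) (T : Set M) :
    (pairing F fun x => ind T x - prob F T) = 0 := by
  rw [pairing_sub, pairing_const, hF.mass_eq_one, one_mul]
  exact sub_self _

theorem pairing_sq_ind_sub_prob_le {F : FinMeas M} (hF : IsProb F) (T : Set M) :
    (pairing F fun x => (ind T x - prob F T) ^ 2) ≤ prob F T := by
  have expand (x : M) : (ind T x - prob F T) ^ 2 =
      (1 - 2 * prob F T) * ind T x + prob F T ^ 2 := by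
    linear_combination ind_mul_self T x
  simp only [expand, pairing_add, pairing_const_mul, pairing_const, hF.mass_eq_one, one_mul]
  rw [← prob]
  nlinarith [sq_nonneg (prob F T)]

theorem sub_condCompl_eq_smul_withDensity {F : FinMeas M} {T : Set M} (hT : prob F T < 1) :
    F - condCompl F T = (1 - prob F T)⁻¹ • withDensity (fun x => ind T x - prob F T) F := by
  have hne : 1 - prob F T ≠ 0 := by linarith
  refine ext_coeff fun x => ?_
  simp only [condCompl, restrict, AddMonoidAlgebra.coeff_sub, AddMonoidAlgebra.coeff_smul,
    Finsupp.sub_apply, Finsupp.smul_apply, coeff_withDensity, ind_compl, smul_eq_mul]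
  field_simp
  ring

theorem withDensity_eq_zero_of_pairing_sq_eq_zero {F : FinMeas M} (hF : IsNonneg F) {ξ : M → ℝ}
    (h : (pairing F fun x => ξ x ^ 2) = 0) : withDensity ξ F = 0 := by
  rw [pairing_eq_sum, Finset.sum_eq_zero_iff_of_nonneg fun x _ =>
    smul_nonneg (hF x) (sq_nonneg _)] at h
  refine ext_coeff fun x => ?_
  by_cases hx : F.coeff x = 0
  · simp [coeff_withDensity, hx]
  · have := h x (Finsupp.mem_support_iff.2 hx)
    simp_all [coeff_withDensity]

theorem abs_pairing_pow_mul_withDensity_mul_le_div [AddCommGroup M] {F ν : FinMeas M} {ξ : M → ℝ}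
    (hF : IsProb F) (hξ : pairing F ξ = 0) (N : ℕ) {f : M → ℝ} {W : ℝ}
    (hW : ∀ x, |pairing ν fun y => f (x + y)| * √(pairing F fun x => ξ x ^ 2) ≤ W) :
    |pairing (F ^ N * withDensity ξ F * ν) f| ≤ W / √(N + 1) := by
  have hV : 0 ≤ pairing F fun x => ξ x ^ 2 := pairing_nonneg hF.nonneg fun _ => sq_nonneg _
  rcases hV.eq_or_lt' with hV | hV
  · have hW0 : 0 ≤ W := by simpa [hV] using hW 0
    rw [withDensity_eq_zero_of_pairing_sq_eq_zero hF.nonneg hV, mul_zero, zero_mul, zero_pairing,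
      abs_zero]
    positivity
  · have hsV := Real.sqrt_pos.2 hV
    have := abs_pairing_pow_mul_withDensity_mul_le hF hξ N
      (fun x => (le_div_iff₀ hsV).2 (hW x)) 0
    simpa only [Real.sqrt_div hV.le, div_mul_div_cancel₀ hsV.ne', zero_add] using this

end Centered

section Window

variable {ι : Type*} {F : FinMeas (ι → ℝ)}

theorem ind_closedBall_add (c r a b : ℝ) :
    ind (Metric.closedBall c r) (a + b) = ind (Metric.closedBall (c - a) r) b := by
  rw [← ind_preimage (a + ·)]
  congr 1
  ext z
  simp only [Set.mem_preimage, Metric.mem_closedBall, Real.dist_eq]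
  rw [show a + z - c = z - (c - a) by ring]

theorem pairing_pow_mul_closedBall_mul_sqrt_le {ν : FinMeas (ι → ℝ)} (hF : IsSymmProb F)
    (hν : IsProb ν) (q : ι) {τ v : ℝ} (hτ : 0 < τ) (hv : 0 ≤ v) (b : ℝ) (N : ℕ) :
    pairing (F ^ N * ν) (fun y => ind (Metric.closedBall b (v * τ)) (y q)) *
      √((N + 1) * truncMoment F q τ) ≤ 2 * (1 + 2 * v) := by
  rw [mul_comm (F ^ N), mul_pairing, mul_comm, ← pairing_const_mul]
  refine hν.pairing_le fun z => ?_
  simp only [Pi.add_apply, ind_closedBall_add]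
  rw [mul_comm]
  exact pairing_pow_closedBall_mul_sqrt_le hF q hτ hv _ N

/-- The points whose `q`-th coordinate is at least `s` in absolute value. -/
def coordTail (q : ι) (s : ℝ) : Set (ι → ℝ) := {x | s ≤ |x q|}

theorem neg_mem_coordTail_iff (q : ι) (s : ℝ) (x : ι → ℝ) :
    -x ∈ coordTail q s ↔ x ∈ coordTail q s := by
  simp [coordTail]

theorem prob_coordTail_le_truncMoment (hF : IsNonneg F) (q : ι) {s : ℝ} (hs : 0 < s) :
    prob F (coordTail q s) ≤ truncMoment F q s := by
  refine pairing_le_pairing hF fun x => Set.indicator_apply_le' (fun (h : s ≤ |x q|) => ?_)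
    fun _ => le_min zero_le_one (sq_nonneg _)
  refine le_min le_rfl ?_
  rwa [← sq_abs, abs_div, abs_of_pos hs, Pi.one_apply, one_le_sq_iff₀ (by positivity),
    one_le_div hs]

theorem le_two_mul_sqrt_half_mul_sqrt (n : ℕ) :
    (n : ℝ) ≤ 2 * (√((n / 2 : ℕ) + 1) * √((n - n / 2 : ℕ) + 1)) := by
  have half : (n : ℝ) ≤ 2 * ((n / 2 : ℕ) + 1) := by
    exact_mod_cast (by omega : n ≤ 2 * (n / 2 + 1))
  have rest : (n : ℝ) ≤ 2 * ((n - n / 2 : ℕ) + 1) := by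
    exact_mod_cast (by omega : n ≤ 2 * (n - n / 2 + 1))
  rw [← Real.sqrt_mul (by positivity), ← div_le_iff₀' two_pos]
  refine Real.le_sqrt_of_sq_le ?_
  rw [div_pow]
  nlinarith [mul_le_mul half rest n.cast_nonneg (n.cast_nonneg.trans half)]

section WindowFunction

variable {q : ι} {s w x₀ : ℝ} {f : (ι → ℝ) → ℝ} {ν : FinMeas (ι → ℝ)}

theorem abs_pairing_comp_add_mul_sqrt_le (hF : IsSymmProb F) (hs : 0 < s) (hw : 0 ≤ w)
    (h0 : ∀ x, 0 ≤ f x) (hf : ∀ x, f x ≤ ind (Metric.closedBall x₀ (w * s)) (x q))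
    (hν : IsProb ν) (N : ℕ) (x : ι → ℝ) :
    |pairing (F ^ N * ν) fun y => f (x + y)| * √((N + 1) * truncMoment F q s) ≤
      2 * (1 + 2 * w) := by
  have hFν : IsNonneg (F ^ N * ν) := ((hF.pow N).mul hν).nonneg
  rw [abs_of_nonneg (pairing_nonneg hFν fun y => h0 _)]
  refine le_trans ?_ (pairing_pow_mul_closedBall_mul_sqrt_le hF hν q hs hw (x₀ - x q) N)
  gcongr
  refine pairing_le_pairing hFν fun y => (hf _).trans_eq ?_
  rw [Pi.add_apply, ind_closedBall_add]

theorem abs_pairing_pow_mul_sub_condCompl_le (hF : IsSymmProb F) (hs : 0 < s) (hw : 0 ≤ w)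
    (h0 : ∀ x, 0 ≤ f x) (hf : ∀ x, f x ≤ ind (Metric.closedBall x₀ (w * s)) (x q))
    (hp : prob F (coordTail q s) ≤ 1 / 2) {n : ℕ} (hn : 1 ≤ n) (hν : IsProb ν) :
    |pairing (F ^ n * ν * (F - condCompl F (coordTail q s))) f| ≤ 8 * (1 + 2 * w) / n := by
  set T := coordTail q s
  set ξ : (ι → ℝ) → ℝ := fun x => ind T x - prob F T
  set i := n / 2
  set j := n - n / 2
  have hn' : (0 : ℝ) < n := by exact_mod_cast hn
  have variance_le : pairing F (fun x => ξ x ^ 2) ≤ truncMoment F q s :=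
    (pairing_sq_ind_sub_prob_le hF.toIsProb T).trans (prob_coordTail_le_truncMoment hF.nonneg q hs)
  have hW (x : ι → ℝ) : |pairing (F ^ j * ν) fun y => f (x + y)| *
      √(pairing F fun x => ξ x ^ 2) ≤ 2 * (1 + 2 * w) / √(j + 1) := by
    rw [le_div_iff₀ (by positivity), mul_assoc, mul_comm (√_), ← Real.sqrt_mul (by positivity)]
    refine le_trans ?_ (abs_pairing_comp_add_mul_sqrt_le hF hs hw h0 hf hν j x)
    gcongr
  have centered : |pairing (F ^ i * withDensity ξ F * (F ^ j * ν)) f| ≤ 4 * (1 + 2 * w) / n := by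
    refine (abs_pairing_pow_mul_withDensity_mul_le_div hF.toIsProb
      (pairing_ind_sub_prob hF.toIsProb T) i hW).trans ?_
    rw [div_div, div_le_div_iff₀ (by positivity) hn', mul_comm (√_)]
    nlinarith [mul_le_mul_of_nonneg_left (le_two_mul_sqrt_half_mul_sqrt n)
      (by positivity : 0 ≤ 1 + 2 * w)]
  have factor : F ^ n * ν * (F - condCompl F T) =
      (1 - prob F T)⁻¹ • (F ^ i * withDensity ξ F * (F ^ j * ν)) := by
    rw [sub_condCompl_eq_smul_withDensity (by linarith), mul_smul_comm,
      show n = i + j by omega, pow_add]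
    congr 1
    ring
  have hinv : (1 - prob F T)⁻¹ ≤ 2 := by
    rw [inv_le_comm₀ (by linarith) two_pos]
    linarith
  rw [factor, smul_pairing, smul_eq_mul, abs_mul, abs_of_nonneg (inv_nonneg.2 (by linarith))]
  calc _ ≤ 2 * (4 * (1 + 2 * w) / n) := mul_le_mul hinv centered (abs_nonneg _) zero_le_two
    _ = _ := by ring

theorem abs_pairing_pow_sub_condCompl_pow_le (hF : IsSymmProb F) (hs : 0 < s) (hw : 0 ≤ w)
    (h0 : ∀ x, 0 ≤ f x) (hf : ∀ x, f x ≤ ind (Metric.closedBall x₀ (w * s)) (x q))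
    (hp : prob F (coordTail q s) ≤ 1 / 2) {n : ℕ} (hn : 1 ≤ n) (j : ℕ) :
    |pairing (F ^ n * (F ^ j - condCompl F (coordTail q s) ^ j)) f| ≤
      j * (8 * (1 + 2 * w) / n) := by
  rw [← mul_one (F ^ n)]
  exact abs_pairing_mul_pow_sub_pow_le hF.toIsProb
    (isProb_condCompl hF.toIsProb (hp.trans_lt one_half_lt_one))
    (fun ν hν => abs_pairing_pow_mul_sub_condCompl_le hF hs hw h0 hf hp hn hν) j
    ⟨IsNonneg.one, mass_one⟩

theorem pairing_pow_le_of_half_le_prob_coordTail (hF : IsSymmProb F) (hs : 0 < s) (hw : 0 ≤ w)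
    (h0 : ∀ x, 0 ≤ f x) (hf : ∀ x, f x ≤ ind (Metric.closedBall x₀ (w * s)) (x q))
    (hp : 1 / 2 ≤ prob F (coordTail q s)) {n N : ℕ} (hn : 1 ≤ n) (hN : n ≤ N) :
    pairing (F ^ N) f ≤ 3 * (1 + 2 * w) / √n := by
  have hn' : (0 : ℝ) < n := by exact_mod_cast hn
  have hN' : (n : ℝ) ≤ N := by exact_mod_cast hN
  have htm : 1 / 2 ≤ truncMoment F q s := hp.trans (prob_coordTail_le_truncMoment hF.nonneg q hs)
  have concentration : pairing (F ^ N) f * √((N + 1) * truncMoment F q s) ≤ 2 * (1 + 2 * w) := by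
    refine le_trans ?_ (pairing_pow_closedBall_mul_sqrt_le hF q hs hw x₀ N)
    gcongr
    exact pairing_le_pairing (hF.pow N).nonneg hf
  have hsqrt : √n * (2 / 3) ≤ √((N + 1) * truncMoment F q s) := by
    refine Real.le_sqrt_of_sq_le ?_
    rw [mul_pow, Real.sq_sqrt hn'.le]
    nlinarith
  rw [le_div_iff₀ (Real.sqrt_pos.2 hn')]
  linarith [mul_le_mul_of_nonneg_left hsqrt (pairing_nonneg (hF.pow N).nonneg h0)]

end WindowFunction

theorem truncMoment_sub_le_truncMoment_collapseCompl (hF : IsNonneg F) (T : Set (ι → ℝ)) (q : ι)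
    (ρ : ℝ) :
    truncMoment F q ρ - (pairing F fun x => ind Tᶜ x * x q ^ 2) / ρ ^ 2 ≤
      truncMoment (collapseCompl F T) q ρ := by
  have collapsed : truncMoment (collapseCompl F T) q ρ =
      pairing F fun x => ind T x * min 1 ((x q / ρ) ^ 2) := by
    simp [truncMoment, collapseCompl, add_pairing, smul_pairing, one_pairing, restrict_pairing]
  rw [collapsed, div_eq_inv_mul, ← pairing_const_mul, truncMoment, ← pairing_sub]
  refine pairing_le_pairing hF fun x => ?_
  have htrunc : min 1 ((x q / ρ) ^ 2) ≤ (ρ ^ 2)⁻¹ * x q ^ 2 :=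
    (min_le_right _ _).trans_eq (by rw [div_pow, div_eq_inv_mul])
  have := mul_le_mul_of_nonneg_left htrunc (ind_nonneg Tᶜ x)
  rw [ind_compl] at this ⊢
  linarith

end Window

section WindowDiscrepancy

variable {m : ℕ} {F : FinMeas (Fin m → ℝ)} {I : Fin m → Set ℝ} {C : ℝ} {n k : ℕ} {q : Fin m}
  {s ρ w x₀ D : ℝ}

theorem EvenStepBound.abs_pairing_comp_add_le_far (hH : EvenStepBound m n C) (hC : 1 ≤ C)
    (hF : IsSymmProb F) (hk : 1 ≤ k) (hI : IsBox I)
    (hIw : ∀ z ∈ I q, |z - x₀| ≤ w * ρ) (hρ : 0 < ρ) (hD : 0 < D)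
    (hmom : n * secondMoment F q ≤ 2 * ρ ^ 2) {l : ℕ} (hl : 8 ≤ l) (hkl : k ≤ l) (hln : l ≤ n)
    (hnl : n ≤ 4 * l) {y : Fin m → ℝ} (hy : (D + w) * ρ < |y q - x₀|) :
    |pairing (F ^ l * (1 - F ^ (2 * k))) fun x => boxInd I (y + x)| ≤
      432 * stepBound m C k n / D ^ 2 := by
  have hC0 : 0 ≤ C := zero_le_one.trans hC
  have hfar (z : ℝ) (hz : z ∈ boxShift y I q) : D * ρ ≤ |z| := by
    have hyz : |y q + z - x₀| ≤ w * ρ := hIw _ hz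
    have := abs_sub (y q + z - x₀) z
    rw [show y q + z - x₀ - z = y q - x₀ by ring] at this
    linarith
  have := hH.abs_pairing_boxInd_le_of_le_abs hC hF q hl hln hk hkl (hI.boxShift y)
    (by positivity) hfar
  refine this.trans ?_
  have hmom' : l * secondMoment F q ≤ 2 * ρ ^ 2 :=
    (mul_le_mul_of_nonneg_right (by exact_mod_cast hln) (secondMoment_nonneg hF.nonneg q)).trans
      hmom
  rw [mul_pow, div_le_div_iff₀ (by positivity) (by positivity)]
  calc 54 * l * secondMoment F q * stepBound m C k l * D ^ 2
      = 54 * (l * secondMoment F q) * stepBound m C k l * D ^ 2 := by ring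
    _ ≤ 54 * (2 * ρ ^ 2) * (4 * stepBound m C k n) * D ^ 2 := by
        have := stepBound_nonneg m hC0 k l
        gcongr
        exact stepBound_le_four_mul m hC0 k (by omega) hnl
    _ = 432 * stepBound m C k n * (D ^ 2 * ρ ^ 2) := by ring

/-- A majorant in `y` of the discrepancies of a box translated by `-y`: small when the box is far
away, of the order of the a priori bound when it is close. -/
noncomputable def windowMajorant (q : Fin m) (b D x₀ r : ℝ) (y : Fin m → ℝ) : ℝ :=
  432 * b / D ^ 2 + 4 * b * ind (Metric.closedBall x₀ r) (y q)

theorem windowMajorant_nonneg {b : ℝ} (hb : 0 ≤ b) (D x₀ r : ℝ) (y : Fin m → ℝ) :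
    0 ≤ windowMajorant q b D x₀ r y := by
  have := ind_nonneg (Metric.closedBall x₀ r) (y q)
  unfold windowMajorant
  positivity

theorem EvenStepBound.abs_pairing_comp_add_le_windowMajorant (hH : EvenStepBound m n C)
    (hC : 1 ≤ C) (hF : IsSymmProb F) (hk : 1 ≤ k) (hI : IsBox I)
    (hIw : ∀ z ∈ I q, |z - x₀| ≤ w * ρ) (hρ : 0 < ρ) (hD : 0 < D)
    (hmom : n * secondMoment F q ≤ 2 * ρ ^ 2) {l : ℕ} (hl : 8 ≤ l) (hkl : k ≤ l) (hln : l ≤ n)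
    (hnl : n ≤ 4 * l) (y : Fin m → ℝ) :
    |pairing (F ^ l * (1 - F ^ (2 * k))) fun x => boxInd I (y + x)| ≤
      windowMajorant q (stepBound m C k n) D x₀ ((D + w) * ρ) y := by
  have hC0 : 0 ≤ C := zero_le_one.trans hC
  unfold windowMajorant
  by_cases hy : y q ∈ Metric.closedBall x₀ ((D + w) * ρ)
  · have hb := stepBound_nonneg m hC0 k n
    simp only [ind, Set.indicator_of_mem hy, Pi.one_apply, mul_one]
    exact (hH.abs_pairing_comp_add_le hC0 hF hk hI (by omega) hln hnl le_rfl y).trans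
      (le_add_of_nonneg_left (by positivity))
  · simp only [ind, Set.indicator_of_notMem hy, mul_zero, add_zero]
    rw [Metric.mem_closedBall, Real.dist_eq, not_le] at hy
    exact hH.abs_pairing_comp_add_le_far hC hF hk hI hIw hρ hD hmom hl hkl hln hnl hy

theorem pairing_pow_windowMajorant_le {G : FinMeas (Fin m → ℝ)} (hG : IsSymmProb G) {b K : ℝ}
    (hb : 0 ≤ b) (hD : 0 ≤ D) (hw : 0 ≤ w) (hρ : 0 < ρ) (hK : 0 < K)
    (hKG : K ≤ n * truncMoment G q ρ) :
    pairing (G ^ n) (windowMajorant q b D x₀ ((D + w) * ρ)) ≤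
      432 * b / D ^ 2 + 8 * b * (1 + 2 * D + 2 * w) / √K := by
  set P := pairing (G ^ n) fun y => ind (Metric.closedBall x₀ ((D + w) * ρ)) (y q)
  have hsqrt : √K ≤ √((n + 1) * truncMoment G q ρ) :=
    Real.sqrt_le_sqrt (by linarith [truncMoment_nonneg hG.nonneg q ρ])
  have hP0 : 0 ≤ P := pairing_nonneg (hG.pow n).nonneg fun _ => ind_nonneg _ _
  have hP : P ≤ 2 * (1 + 2 * (D + w)) / √K := by
    rw [le_div_iff₀ (Real.sqrt_pos.2 hK)]
    exact (mul_le_mul_of_nonneg_left hsqrt hP0).trans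
      (pairing_pow_closedBall_mul_sqrt_le hG q hρ (by positivity) x₀ n)
  calc pairing (G ^ n) (windowMajorant q b D x₀ ((D + w) * ρ)) = 432 * b / D ^ 2 + 4 * b * P := by
        unfold windowMajorant
        rw [pairing_add, pairing_const, pairing_const_mul, (hG.pow n).mass_eq_one, one_mul]
    _ ≤ 432 * b / D ^ 2 + 4 * b * (2 * (1 + 2 * (D + w)) / √K) := by gcongr
    _ = _ := by ring

theorem EvenStepBound.abs_pairing_pow_mul_one_sub_condCompl_pow_le (hH : EvenStepBound m n C)
    (hC : 1 ≤ C) (hF : IsSymmProb F) (hn : 32 ≤ n) (hk : 1 ≤ k) (hkn : 4 * k ≤ n) (hI : IsBox I)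
    (hw : 0 ≤ w) (hIw : ∀ z ∈ I q, |z - x₀| ≤ w * ρ) (hρ : 0 < ρ) (hD : 0 < D) {K : ℝ}
    (hK : 0 < K) (htm : K + 1 ≤ n * truncMoment F q ρ)
    (hmom : n * (pairing F fun x => ind (coordTail q s)ᶜ x * x q ^ 2) ≤ ρ ^ 2)
    (hp : prob F (coordTail q s) ≤ 1 / 2) :
    |pairing (F ^ n * (1 - condCompl F (coordTail q s) ^ (2 * k))) (boxInd I)| ≤
      432 * stepBound m C k n / D ^ 2 +
        8 * stepBound m C k n * (1 + 2 * D + 2 * w) / √K + 4 / n := by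
  set T := coordTail q s
  have hC0 : 0 ≤ C := zero_le_one.trans hC
  have hb := stepBound_nonneg m hC0 k n
  have hT : ∀ x, -x ∈ T ↔ x ∈ T := neg_mem_coordTail_iff q s
  have hR := isSymmProb_condCompl hF hT (hp.trans_lt one_half_lt_one)
  have hR_mom : n * secondMoment (condCompl F T) q ≤ 2 * ρ ^ 2 := by
    have : secondMoment (condCompl F T) q ≤ 2 * pairing F fun x => ind Tᶜ x * x q ^ 2 :=
      condCompl_pairing_le hF.nonneg hp fun _ => sq_nonneg _
    nlinarith
  have hG_tm : K ≤ n * truncMoment (collapseCompl F T) q ρ := by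
    have h := truncMoment_sub_le_truncMoment_collapseCompl hF.nonneg T q ρ
    have : n * ((pairing F fun x => ind Tᶜ x * x q ^ 2) / ρ ^ 2) ≤ 1 := by
      rwa [mul_div_assoc', div_le_one (by positivity)]
    nlinarith
  refine (FinMeas.abs_pairing_pow_mul_one_sub_condCompl_pow_le hF.toIsProb hp (boxInd_nonneg I)
    (boxInd_le_one I) (windowMajorant_nonneg hb D x₀ ((D + w) * ρ)) (by omega)
    fun l hln hnl y => hH.abs_pairing_comp_add_le_windowMajorant hC hR hk hI hIw hρ hD hR_mom
      (by omega) (by omega) hln hnl y).trans ?_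
  gcongr
  exact pairing_pow_windowMajorant_le (isSymmProb_collapseCompl hF hT (by linarith)) hb hD.le hw hρ
    hK hG_tm

/- Boxes that are thin in one direction: exchanging `F` for its truncation `R` at scale `s` in that
direction costs `O(k / n)`, and the discrepancies of `R` are controlled by the a priori bound on
the window and by Chebyshev's inequality away from it. -/
theorem EvenStepBound.abs_pairing_boxInd_le_of_thin (hH : EvenStepBound m n C) (hC : 1 ≤ C)
    (hF : IsSymmProb F) (hn : 32 ≤ n) (hk : 1 ≤ k) (hkn : 4 * k ≤ n) (hI : IsBox I) (hs : 0 < s)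
    (hsρ : s ≤ ρ) (hw : 0 ≤ w) (hIw : ∀ z ∈ I q, |z - x₀| ≤ w * s) {K : ℝ} (hK : 0 < K)
    (hD : 0 < D) (htm : K + 1 ≤ n * truncMoment F q ρ)
    (hmom : n * (pairing F fun x => ind (coordTail q s)ᶜ x * x q ^ 2) ≤ ρ ^ 2) :
    |pairing (F ^ n * (1 - F ^ (2 * k))) (boxInd I)| ≤
      3 * (1 + 2 * w) / √n + (20 + 32 * w) * k / n + 432 * stepBound m C k n / D ^ 2 +
        8 * stepBound m C k n * (1 + 2 * D + 2 * w) / √K := by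
  set R := condCompl F (coordTail q s)
  have hb := stepBound_nonneg m (zero_le_one.trans hC) k n
  have h0 := boxInd_nonneg I
  have hf (x : Fin m → ℝ) : boxInd I x ≤ ind (Metric.closedBall x₀ (w * s)) (x q) :=
    (boxInd_le_ind I x q).trans (ind_mono hIw _)
  have hsqrt : 0 ≤ 3 * (1 + 2 * w) / √n := by positivity
  rcases le_total (1 / 2) (prob F (coordTail q s)) with hp | hp
  · have bound (N : ℕ) (hN : n ≤ N) : pairing (F ^ N) (boxInd I) ≤ 3 * (1 + 2 * w) / √n :=
      pairing_pow_le_of_half_le_prob_coordTail hF hs hw h0 hf hp (by omega) hN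
    rw [mul_sub, mul_one, ← pow_add, sub_pairing, add_assoc, add_assoc]
    exact (abs_sub_le_of_nonneg_of_le (pairing_nonneg (hF.pow _).nonneg h0) (bound _ le_rfl)
      (pairing_nonneg (hF.pow _).nonneg h0) (bound _ (by omega))).trans
      (le_add_of_nonneg_right (by positivity))
  · have swap := abs_pairing_pow_sub_condCompl_pow_le hF hs hw h0 hf hp (by omega : 1 ≤ n) (2 * k)
    have truncated := hH.abs_pairing_pow_mul_one_sub_condCompl_pow_le hC hF hn hk hkn hI hw
      (fun z hz => (hIw z hz).trans (by gcongr)) (hs.trans_le hsρ) hD hK htm hmom hp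
    have split : F ^ n * (1 - F ^ (2 * k)) =
        F ^ n * (1 - R ^ (2 * k)) - F ^ n * (F ^ (2 * k) - R ^ (2 * k)) := by ring
    rw [split, sub_pairing]
    refine (abs_sub _ _).trans ((add_le_add truncated swap).trans ?_)
    have errors : 4 / n + (2 * k : ℕ) * (8 * (1 + 2 * w) / n) ≤ (20 + 32 * w) * k / n := by
      have hk' : (1 : ℝ) ≤ k := by exact_mod_cast hk
      calc _ ≤ 4 * k / n + (2 * k : ℕ) * (8 * (1 + 2 * w) / n) := by gcongr; linarith
        _ = _ := by push_cast; ring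
    linarith

end WindowDiscrepancy

end FinMeas

namespace FinMeas

section Integral

variable {M V Ω : Type*} [NormedAddCommGroup V] [NormedSpace ℝ V] [MeasurableSpace Ω]
  {P : Measure Ω} {f : M → Ω → V}

theorem integrable_pairing (μ : FinMeas M) (hf : ∀ x, Integrable (f x) P) :
    Integrable (fun ω => pairing μ fun x => f x ω) P :=
  integrable_finsetSum _ fun x _ => (hf x).smul _

theorem pairing_integral (μ : FinMeas M) (hf : ∀ x, Integrable (f x) P) :
    pairing μ (fun x => ∫ ω, f x ω ∂P) = ∫ ω, pairing μ (fun x => f x ω) ∂P := by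
  simp only [pairing_eq_sum, ← integral_smul]
  exact (integral_finsetSum _ fun x _ => (hf x).smul _).symm

theorem pairing_ofReal (μ : FinMeas M) (f : M → ℝ) :
    pairing μ (fun x => (f x : ℂ)) = (pairing μ f : ℝ) := by
  simp [pairing_eq_sum]

end Integral

section CharFun

variable {ι : Type*} [Fintype ι]

/-- The characteristic function at `ξ`, as a ring homomorphism from the convolution algebra. -/
noncomputable def charFun (ξ : ι → ℝ) : FinMeas (ι → ℝ) →+* ℂ where
  toFun μ := pairing μ fun x => ∏ q, (Real.probChar (ξ q * x q) : ℂ)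
  map_zero' := zero_pairing _
  map_one' := by simp [one_pairing]
  map_add' μ ν := add_pairing μ ν _
  map_mul' μ ν := by
    simp only [mul_pairing, Pi.add_apply, mul_add, AddChar.map_add_eq_mul, Circle.coe_mul,
      Finset.prod_mul_distrib, pairing_const_mul]
    simp only [mul_comm _ (pairing ν _), pairing_const_mul]

theorem charFun_apply (ξ : ι → ℝ) (μ : FinMeas (ι → ℝ)) :
    charFun ξ μ = pairing μ fun x => ∏ q, (Real.probChar (ξ q * x q) : ℂ) := rfl

theorem prod_probChar (ξ x : ι → ℝ) :
    ∏ q, (Real.probChar (ξ q * x q) : ℂ) =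
      (Real.cos (∑ q, ξ q * x q) : ℂ) + Complex.I * (Real.sin (∑ q, ξ q * x q) : ℂ) := by
  simp only [Real.probChar_apply]
  rw [← Complex.exp_sum, ← Finset.sum_mul, ← Complex.ofReal_sum, Complex.exp_mul_I,
    Complex.ofReal_cos, Complex.ofReal_sin, mul_comm Complex.I]

theorem IsSymmProb.charFun_eq_ofReal {F : FinMeas (ι → ℝ)} (hF : IsSymmProb F) (ξ : ι → ℝ) :
    ∃ φ : ℝ, charFun ξ F = φ ∧ |φ| ≤ 1 := by
  refine ⟨pairing F fun x => Real.cos (∑ q, ξ q * x q), ?_,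
    hF.abs_pairing_le fun x => Real.abs_cos_le_one _⟩
  have sin_part : (pairing F fun x => Real.sin (∑ q, ξ q * x q)) = 0 :=
    hF.symm.pairing_odd fun x => by simp
  simp only [charFun_apply, prod_probChar]
  rw [pairing_add, pairing_const_mul, pairing_ofReal, pairing_ofReal, sin_part]
  simp

theorem integrable_mul_probChar {γ : Measure ℝ} {b : ℝ → ℂ} (hb : Integrable b γ) (x : ℝ) :
    Integrable (fun ξ => b ξ * Real.probChar (ξ * x)) γ := by
  have hcont : Continuous fun ξ : ℝ => (Real.probChar (ξ * x) : ℂ) :=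
    continuous_subtype_val.comp (Real.continuous_probChar.comp (continuous_mul_const x))
  exact hb.mul_bdd (c := 1) hcont.aestronglyMeasurable (.of_forall fun ξ => (Circle.norm_coe _).le)

section Inversion

variable {γ : ι → Measure ℝ} [∀ q, SigmaFinite (γ q)] {b : ι → ℝ → ℂ}

theorem prod_mul_charFun (b : ι → ℝ → ℂ) (μ : FinMeas (ι → ℝ)) (ξ : ι → ℝ) :
    (∏ q, b q (ξ q)) * charFun ξ μ =
      pairing μ fun x => ∏ q, (b q (ξ q) * Real.probChar (ξ q * x q)) := by
  rw [charFun_apply, ← pairing_const_mul]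
  simp only [Finset.prod_mul_distrib]

theorem integrable_prod_mul_probChar (hb : ∀ q, Integrable (b q) (γ q)) (x : ι → ℝ) :
    Integrable (fun ξ : ι → ℝ => ∏ q, (b q (ξ q) * Real.probChar (ξ q * x q))) (Measure.pi γ) :=
  Integrable.fintype_prod (f := fun q ξ => b q ξ * Real.probChar (ξ * x q)) fun q =>
    integrable_mul_probChar (hb q) (x q)

theorem integrable_prod_mul_charFun (hb : ∀ q, Integrable (b q) (γ q)) (μ : FinMeas (ι → ℝ)) :
    Integrable (fun ξ => (∏ q, b q (ξ q)) * charFun ξ μ) (Measure.pi γ) := by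
  simp only [prod_mul_charFun]
  exact integrable_pairing μ (integrable_prod_mul_probChar hb)

theorem pairing_prod_eq_integral_charFun (hb : ∀ q, Integrable (b q) (γ q)) {h : ι → ℝ → ℝ}
    (hh : ∀ q x, (h q x : ℂ) = ∫ ξ, b q ξ * Real.probChar (ξ * x) ∂(γ q)) (μ : FinMeas (ι → ℝ)) :
    ((pairing μ fun x => ∏ q, h q (x q) : ℝ) : ℂ) =
      ∫ ξ, (∏ q, b q (ξ q)) * charFun ξ μ ∂(Measure.pi γ) := by
  simp only [prod_mul_charFun]
  rw [← pairing_integral μ (integrable_prod_mul_probChar hb), ← pairing_ofReal]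
  congr 1 with x
  rw [integral_fintype_prod_eq_prod (f := fun q ξ => b q ξ * Real.probChar (ξ * x q)),
    Complex.ofReal_prod]
  simp only [hh]

end Inversion

theorem pow_mul_one_sub_pow_le {y : ℝ} (h0 : 0 ≤ y) (h1 : y ≤ 1) (r k : ℕ) :
    y ^ r * (1 - y ^ k) ≤ k / (r + 1) := by
  have bernoulli : 1 - y ^ k ≤ k * (1 - y) := by
    have := one_add_mul_le_pow (a := y - 1) (by linarith) k
    rw [add_sub_cancel] at this
    linarith
  have geometric : (r + 1) * (y ^ r * (1 - y)) ≤ 1 := by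
    have hsum : (r + 1) * y ^ r ≤ ∑ i ∈ Finset.range (r + 1), y ^ i := by
      simpa using Finset.card_nsmul_le_sum (Finset.range (r + 1)) (fun i => y ^ i) (y ^ r)
        fun i hi => pow_le_pow_of_le_one h0 h1 (Finset.mem_range_succ_iff.1 hi)
    have := mul_le_mul_of_nonneg_right hsum (sub_nonneg.2 h1)
    rw [geom_sum_mul_neg] at this
    linarith [pow_nonneg h0 (r + 1)]
  rw [le_div_iff₀ (by positivity)]
  calc y ^ r * (1 - y ^ k) * (r + 1) ≤ y ^ r * (k * (1 - y)) * (r + 1) := by gcongr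
    _ = k * ((r + 1) * (y ^ r * (1 - y))) := by ring
    _ ≤ k := mul_le_of_le_one_right (Nat.cast_nonneg k) geometric

theorem abs_pow_mul_one_sub_pow_le {φ : ℝ} (hφ : |φ| ≤ 1) {n : ℕ} (hn : 1 ≤ n) (k : ℕ) :
    |φ ^ n * (1 - φ ^ (2 * k))| ≤ 4 * k / n * φ ^ (2 * (n / 4)) := by
  set r := n / 4
  have hy0 : 0 ≤ φ ^ 2 := sq_nonneg φ
  have hy1 : φ ^ 2 ≤ 1 := by rw [← sq_abs]; exact pow_le_one₀ (abs_nonneg φ) hφ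
  have hk : 0 ≤ 1 - (φ ^ 2) ^ k := sub_nonneg.2 (pow_le_one₀ hy0 hy1)
  have split : |φ| ^ n ≤ (φ ^ 2) ^ r * (φ ^ 2) ^ r := by
    rw [← sq_abs, ← pow_mul, ← pow_add]
    exact pow_le_pow_of_le_one (abs_nonneg φ) hφ (by omega)
  have hn4 : (n : ℝ) ≤ 4 * (r + 1) := by exact_mod_cast (by omega : n ≤ 4 * (r + 1))
  rw [abs_mul, abs_pow, pow_mul, pow_mul, abs_of_nonneg hk]
  calc |φ| ^ n * (1 - (φ ^ 2) ^ k)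
      ≤ (φ ^ 2) ^ r * (φ ^ 2) ^ r * (1 - (φ ^ 2) ^ k) := by gcongr
    _ = (φ ^ 2) ^ r * (1 - (φ ^ 2) ^ k) * (φ ^ 2) ^ r := by ring
    _ ≤ k / (r + 1) * (φ ^ 2) ^ r := by gcongr; exact pow_mul_one_sub_pow_le hy0 hy1 r k
    _ ≤ 4 * k / n * (φ ^ 2) ^ r := by
      gcongr ?_ * _
      rw [div_le_div_iff₀ (by positivity) (by exact_mod_cast hn)]
      linarith [mul_le_mul_of_nonneg_left hn4 (Nat.cast_nonneg (α := ℝ) k)]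

end CharFun

end FinMeas

/-- `h` and `κ` are Fourier transforms with respect to a common reference measure, and the density
of `κ` dominates the modulus of the density of `h`. -/
def FourierMajorized (h κ : ℝ → ℝ) : Prop :=
  ∃ (γ : Measure ℝ) (b : ℝ → ℂ) (U : ℝ → ℝ), SigmaFinite γ ∧ Integrable b γ ∧ Integrable U γ ∧
    (∀ ξ, ‖b ξ‖ ≤ U ξ) ∧ (∀ x, (h x : ℂ) = ∫ ξ, b ξ * Real.probChar (ξ * x) ∂γ) ∧
      ∀ x, (κ x : ℂ) = ∫ ξ, (U ξ : ℂ) * Real.probChar (ξ * x) ∂γ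

namespace FinMeas

/- The characteristic function `φ` of a symmetric distribution is real, and
`|φ ^ n * (1 - φ ^ (2 * k))|` is bounded by `4 * k / n` times the characteristic function of an
even power, which is nonnegative. -/
theorem abs_pairing_pow_mul_one_sub_pow_prod_le {ι : Type*} [Fintype ι] {F : FinMeas (ι → ℝ)}
    (hF : IsSymmProb F) {n : ℕ} (hn : 1 ≤ n) (k : ℕ) {h κ : ι → ℝ → ℝ}
    (hhκ : ∀ q, FourierMajorized (h q) (κ q)) :
    |pairing (F ^ n * (1 - F ^ (2 * k))) fun x => ∏ q, h q (x q)| ≤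
      4 * k / n * pairing (F ^ (2 * (n / 4))) fun x => ∏ q, κ q (x q) := by
  choose γ b U hγ hb hU hbU hh hκ using hhκ
  set μ := F ^ n * (1 - F ^ (2 * k))
  set G := F ^ (2 * (n / 4))
  have hUG := integrable_prod_mul_charFun (fun q => (hU q).ofReal (𝕜 := ℂ)) G
  have majorant : pairing G (fun x => ∏ q, κ q (x q)) =
      ∫ ξ : ι → ℝ, ((∏ q, (U q (ξ q) : ℂ)) * charFun ξ G).re ∂(Measure.pi γ) := by
    rw [← Complex.ofReal_re (pairing G _),
      pairing_prod_eq_integral_charFun (fun q => (hU q).ofReal) hκ]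
    exact (integral_re hUG).symm
  rw [← Real.norm_eq_abs, ← Complex.norm_real, pairing_prod_eq_integral_charFun hb hh μ, majorant,
    ← integral_const_mul]
  refine norm_integral_le_of_norm_le (hUG.re.const_mul _) (.of_forall fun ξ => ?_)
  obtain ⟨φ, hφ, hφ1⟩ := hF.charFun_eq_ofReal ξ
  have hμ : charFun ξ μ = (φ ^ n * (1 - φ ^ (2 * k)) : ℝ) := by simp [μ, hφ]
  have hG : (∏ q, (U q (ξ q) : ℂ)) * charFun ξ G = ((∏ q, U q (ξ q)) * φ ^ (2 * (n / 4)) : ℝ) := by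
    simp [G, hφ]
  rw [hG, hμ, norm_mul, Complex.norm_real, Complex.ofReal_re, norm_prod, Real.norm_eq_abs]
  calc (∏ q, ‖b q (ξ q)‖) * |φ ^ n * (1 - φ ^ (2 * k))|
      ≤ (∏ q, U q (ξ q)) * (4 * k / n * φ ^ (2 * (n / 4))) := by
        gcongr with q
        · exact Finset.prod_nonneg fun q _ => (norm_nonneg _).trans (hbU q _)
        · exact hbU q _
        · exact abs_pow_mul_one_sub_pow_le hφ1 hn k
    _ = 4 * k / n * ((∏ q, U q (ξ q)) * φ ^ (2 * (n / 4))) := by ring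

end FinMeas

section GaussianSmoothing

variable {s L : ℝ} {A : Set ℝ}

/-- The unnormalised Gaussian density, which is its own Fourier transform up to a constant. -/
noncomputable def gaussKernel (y : ℝ) : ℝ := Real.exp (-y ^ 2 / 2)

theorem gaussKernel_pos (y : ℝ) : 0 < gaussKernel y := Real.exp_pos _

theorem gaussKernel_le_one (y : ℝ) : gaussKernel y ≤ 1 :=
  Real.exp_le_one_iff.2 (by linarith [sq_nonneg y])

theorem one_le_eight_mul_gaussKernel {y : ℝ} (hy : |y| ≤ 2) : 1 ≤ 8 * gaussKernel y := by
  have hexp : Real.exp 2 ≤ 8 := by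
    have h := Real.exp_one_lt_d9
    rw [show (2 : ℝ) = 1 + 1 by norm_num, Real.exp_add]
    nlinarith [Real.exp_pos 1]
  have hy2 : y ^ 2 ≤ 4 := by
    rw [← sq_abs]
    nlinarith [abs_nonneg y]
  calc (1 : ℝ) = Real.exp 2 * Real.exp (-2) := by rw [← Real.exp_add]; simp
    _ ≤ 8 * gaussKernel y := by
      unfold gaussKernel
      gcongr
      linarith

theorem integrable_gaussKernel_mul (hs : 0 < s) : Integrable fun ξ => gaussKernel (s * ξ) := by
  convert integrable_exp_neg_mul_sq (b := s ^ 2 / 2) (by positivity) using 2 with ξ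
  rw [gaussKernel]
  ring_nf

theorem integral_gaussKernel_mul_probChar (hs : 0 < s) (y : ℝ) :
    ∫ ξ, (gaussKernel (s * ξ) : ℂ) * Real.probChar (ξ * y) =
      (√(2 * Real.pi) / s * gaussKernel (y / s) : ℝ) := by
  have hs' : (s : ℂ) ≠ 0 := by exact_mod_cast hs.ne'
  have integrand (ξ : ℝ) : (gaussKernel (s * ξ) : ℂ) * Real.probChar (ξ * y) =
      Complex.exp (Complex.I * y * ξ) * Complex.exp (-((s ^ 2 / 2 : ℝ) : ℂ) * ξ ^ 2) := by
    rw [gaussKernel, Real.probChar_apply, mul_comm]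
    push_cast
    ring_nf
  have constant : ((Real.pi : ℂ) / ((s ^ 2 / 2 : ℝ) : ℂ)) ^ (1 / 2 : ℂ) =
      (√(2 * Real.pi) / s : ℝ) := by
    rw [show (1 / 2 : ℂ) = ((1 / 2 : ℝ) : ℂ) by simp, ← Complex.ofReal_div,
      ← Complex.ofReal_cpow (by positivity), ← Real.sqrt_eq_rpow,
      show Real.pi / (s ^ 2 / 2) = 2 * Real.pi / s ^ 2 by field_simp,
      Real.sqrt_div (by positivity), Real.sqrt_sq hs.le]
  simp only [integrand]
  rw [fourierIntegral_gaussian (by rw [Complex.ofReal_re]; positivity) (y : ℂ), constant,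
    gaussKernel]
  push_cast
  congr 2
  field_simp
  ring

/-- The convolution of the indicator of `A` with the centred Gaussian law of standard deviation
`s`. The scale `s = 0` is allowed and gives the indicator itself. -/
noncomputable def gaussSmooth (s : ℝ) (A : Set ℝ) (x : ℝ) : ℝ :=
  ∫ θ, ind A (x + s * θ) ∂(ProbabilityTheory.gaussianReal 0 1)

theorem gaussSmooth_zero (A : Set ℝ) (x : ℝ) : gaussSmooth 0 A x = ind A x := by
  simp [gaussSmooth]

theorem gaussSmooth_eq_setIntegral (hs : 0 < s) (hA : MeasurableSet A) (x : ℝ) :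
    gaussSmooth s A x = ∫ z in A, (√(2 * Real.pi) * s)⁻¹ * gaussKernel ((x - z) / s) := by
  set v : NNReal := ⟨s ^ 2, sq_nonneg s⟩
  have hv : v ≠ 0 := fun h => (pow_pos hs 2).ne' (congrArg NNReal.toReal h)
  have law : (ProbabilityTheory.gaussianReal 0 1).map (fun θ => x + s * θ) =
      ProbabilityTheory.gaussianReal x v := by
    have h1 := ProbabilityTheory.gaussianReal_map_const_mul (μ := 0) (v := 1) s
    have h2 := ProbabilityTheory.gaussianReal_map_const_add (μ := s * 0) (v := v * 1) x
    change _ = ProbabilityTheory.gaussianReal (s * 0) (v * 1) at h1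
    rw [← h1, Measure.map_map (by fun_prop) (by fun_prop)] at h2
    simpa [Function.comp_def] using h2
  have probability : gaussSmooth s A x = (ProbabilityTheory.gaussianReal x v).real A := by
    rw [← integral_indicator_one hA, ← law, integral_map (by fun_prop)
      (measurable_one.indicator hA).aestronglyMeasurable]
    rfl
  rw [probability, Measure.real, ProbabilityTheory.gaussianReal_apply_eq_integral _ hv,
    ENNReal.toReal_ofReal
      (integral_nonneg fun z => ProbabilityTheory.gaussianPDFReal_nonneg _ _ _)]
  refine integral_congr_ae (.of_forall fun z => ?_)
  have hvs : (v : ℝ) = s ^ 2 := rfl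
  simp only [ProbabilityTheory.gaussianPDFReal, gaussKernel, hvs]
  rw [Real.sqrt_mul (by positivity), Real.sqrt_sq hs.le]
  congr 2
  rw [div_pow, sub_sq_comm]
  field_simp

theorem norm_setIntegral_probChar_le (hL : 0 ≤ L) (hAL : A ⊆ Set.Icc (-L) L) (ξ : ℝ) :
    ‖∫ z in A, (Real.probChar (ξ * -z) : ℂ)‖ ≤ 2 * L := by
  have hvol : volume A ≤ ENNReal.ofReal (2 * L) := by
    refine (measure_mono hAL).trans_eq ?_
    rw [Real.volume_Icc, sub_neg_eq_add, two_mul]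
  refine (norm_setIntegral_le_of_norm_le_const (C := 1) (hvol.trans_lt ENNReal.ofReal_lt_top)
    fun z _ => (Circle.norm_coe _).le).trans ?_
  rw [one_mul]
  exact ENNReal.toReal_le_of_le_ofReal (by positivity) hvol

theorem ordConnected_ae_eq_Ioc (hA : A.OrdConnected) (hne : A.Nonempty) (hb : BddBelow A)
    (ha : BddAbove A) : A =ᵐ[volume] Set.Ioc (sInf A) (sSup A) := by
  have inner : Set.Ioo (sInf A) (sSup A) ⊆ A :=
    IsConnected.Ioo_csInf_csSup_subset ⟨hne, hA.isPreconnected⟩ hb ha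
  have outer : A ⊆ Set.Icc (sInf A) (sSup A) := subset_Icc_csInf_csSup hb ha
  exact (outer.eventuallyLE.trans Ioc_ae_eq_Icc.symm.le).antisymm
    (Ioo_ae_eq_Ioc.symm.le.trans inner.eventuallyLE)

theorem norm_setIntegral_probChar_mul_abs_le (hA : A.OrdConnected) (hb : BddBelow A)
    (ha : BddAbove A) (ξ : ℝ) : ‖∫ z in A, (Real.probChar (ξ * -z) : ℂ)‖ * |ξ| ≤ 2 := by
  rcases eq_or_ne ξ 0 with rfl | hξ
  · simp
  rcases A.eq_empty_or_nonempty with rfl | hne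
  · simp
  have hc : -((ξ : ℂ) * Complex.I) ≠ 0 := by simp [hξ]
  have hchar (z : ℝ) :
      (Real.probChar (ξ * -z) : ℂ) = Complex.exp (-((ξ : ℂ) * Complex.I) * z) := by
    rw [Real.probChar_apply]
    push_cast
    ring_nf
  have hnorm (z : ℝ) : ‖Complex.exp (-((ξ : ℂ) * Complex.I) * z)‖ = 1 := by
    rw [← hchar, Circle.norm_coe]
  rw [setIntegral_congr_set (ordConnected_ae_eq_Ioc hA hne hb ha),
    ← intervalIntegral.integral_of_le (csInf_le_csSup hne hb ha)]
  simp only [hchar]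
  rw [integral_exp_mul_complex hc, norm_div, norm_neg, norm_mul, Complex.norm_I, mul_one,
    Complex.norm_real, Real.norm_eq_abs, div_mul_cancel₀ _ (abs_ne_zero.2 hξ)]
  refine (norm_sub_le _ _).trans ?_
  rw [hnorm, hnorm]
  norm_num

/-- The sum of `τ * gaussKernel (τ * ξ)` over the dyadic scales `τ = s, 2 * s, …, 2 ^ J * s`. -/
noncomputable def dyadicGaussSum (s : ℝ) (J : ℕ) (ξ : ℝ) : ℝ :=
  ∑ i ∈ Finset.range (J + 1), s * 2 ^ i * gaussKernel (s * 2 ^ i * ξ)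

theorem mul_gaussKernel_le_dyadicGaussSum (hs : 0 < s) (ξ : ℝ) {B : ℝ} (hB : 0 ≤ B)
    (hBξ : B * |ξ| ≤ 1) (J : ℕ) (hBJ : B ≤ s * 2 ^ J) :
    B * gaussKernel (s * ξ) ≤ 8 * dyadicGaussSum s J ξ := by
  set t : ℕ → ℝ := fun i => s * 2 ^ i * gaussKernel (s * 2 ^ i * ξ)
  have scale_exists : ∃ i, B ≤ s * 2 ^ i := ⟨J, hBJ⟩
  classical
  obtain ⟨i, hiJ, hi⟩ : ∃ i ≤ J, B * gaussKernel (s * ξ) ≤ 8 * t i := by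
    have hfind := Nat.find_spec scale_exists
    refine ⟨Nat.find scale_exists, Nat.find_min' scale_exists hBJ, ?_⟩
    rcases h : Nat.find scale_exists with _ | i
    · rw [h, pow_zero, mul_one] at hfind
      have := mul_le_mul_of_nonneg_right hfind (gaussKernel_pos (s * ξ)).le
      simp only [t, pow_zero, mul_one]
      nlinarith [mul_pos hs (gaussKernel_pos (s * ξ))]
    · have hlt : s * 2 ^ i < B := not_le.1 (Nat.find_min scale_exists (by omega))
      have hξ : |s * 2 ^ (i + 1) * ξ| ≤ 2 := by
        rw [abs_mul, abs_of_pos (by positivity), pow_succ]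
        nlinarith [mul_le_mul_of_nonneg_right hlt.le (abs_nonneg ξ)]
      rw [h] at hfind
      calc B * gaussKernel (s * ξ) ≤ B * (8 * gaussKernel (s * 2 ^ (i + 1) * ξ)) := by
            gcongr
            exact (gaussKernel_le_one _).trans (one_le_eight_mul_gaussKernel hξ)
        _ ≤ s * 2 ^ (i + 1) * (8 * gaussKernel (s * 2 ^ (i + 1) * ξ)) := by
            have := gaussKernel_pos (s * 2 ^ (i + 1) * ξ)
            gcongr
        _ = 8 * t (i + 1) := by ring
  have hsum : t i ≤ dyadicGaussSum s J ξ := Finset.single_le_sum (f := t)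
    (fun j _ => mul_nonneg (by positivity) (gaussKernel_pos _).le) (Finset.mem_range_succ_iff.2 hiJ)
  linarith

/-- The Fourier density of `gaussSmooth s A`. -/
noncomputable def gaussSmoothDensity (s : ℝ) (A : Set ℝ) (ξ : ℝ) : ℂ :=
  ((2 * Real.pi)⁻¹ : ℝ) * gaussKernel (s * ξ) * ∫ z in A, (Real.probChar (ξ * -z) : ℂ)

theorem norm_gaussSmoothDensity_le (hs : 0 < s) (hA : A.OrdConnected) (J : ℕ)
    (hAJ : A ⊆ Set.Icc (-(s * 2 ^ J)) (s * 2 ^ J)) (ξ : ℝ) :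
    ‖gaussSmoothDensity s A ξ‖ ≤ 3 * dyadicGaussSum s J ξ := by
  have hg := gaussKernel_pos (s * ξ)
  rw [gaussSmoothDensity, norm_mul, norm_mul, Complex.norm_real,
    Complex.norm_real, Real.norm_of_nonneg (by positivity), Real.norm_of_nonneg hg.le]
  have hB1 := norm_setIntegral_probChar_le (by positivity) hAJ ξ
  have hB2 := norm_setIntegral_probChar_mul_abs_le hA (bddBelow_Icc.mono hAJ)
    (bddAbove_Icc.mono hAJ) ξ
  set B := ‖∫ z in A, (Real.probChar (ξ * -z) : ℂ)‖
  have hB : 0 ≤ B := norm_nonneg _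
  have dyadic := mul_gaussKernel_le_dyadicGaussSum hs ξ (B := B / 2) (by linarith) (by linarith) J
    (by linarith)
  calc (2 * Real.pi)⁻¹ * gaussKernel (s * ξ) * B
      = Real.pi⁻¹ * (B / 2 * gaussKernel (s * ξ)) := by rw [mul_inv]; ring
    _ ≤ 3⁻¹ * (B / 2 * gaussKernel (s * ξ)) := by
        gcongr
        exact Real.pi_gt_three.le
    _ ≤ 3 * dyadicGaussSum s J ξ := by linarith [mul_nonneg (div_nonneg hB two_pos.le) hg.le]

theorem gaussSmoothDensity_mul_probChar (s : ℝ) (A : Set ℝ) (x ξ : ℝ) :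
    gaussSmoothDensity s A ξ * Real.probChar (ξ * x) =
      ∫ z in A, ((2 * Real.pi)⁻¹ : ℝ) * gaussKernel (s * ξ) *
        (Real.probChar (ξ * (x - z)) : ℂ) := by
  have shift (z : ℝ) : (Real.probChar (ξ * (x - z)) : ℂ) =
      Real.probChar (ξ * -z) * Real.probChar (ξ * x) := by
    rw [← Circle.coe_mul, ← AddChar.map_add_eq_mul]
    ring_nf
  simp only [shift]
  rw [integral_const_mul, integral_mul_const, gaussSmoothDensity, mul_assoc]

theorem integrable_gaussKernel_mul_probChar_sub (hs : 0 < s) (hA : volume A ≠ ⊤) (x : ℝ) :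
    Integrable (Function.uncurry fun z ξ : ℝ => (((2 * Real.pi)⁻¹ : ℝ) : ℂ) *
      gaussKernel (s * ξ) * (Real.probChar (ξ * (x - z)) : ℂ))
      ((volume.restrict A).prod volume) := by
  have : IsFiniteMeasure (volume.restrict A) := isFiniteMeasure_restrict.2 hA
  have hprod : Integrable
      (fun p : ℝ × ℝ => (((2 * Real.pi)⁻¹ : ℝ) : ℂ) * (gaussKernel (s * p.2) : ℂ))
      ((volume.restrict A).prod volume) :=
    (integrable_const (((2 * Real.pi)⁻¹ : ℝ) : ℂ)).mul_prod (integrable_gaussKernel_mul hs).ofReal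
  have hcont : Continuous fun p : ℝ × ℝ => (Real.probChar (p.2 * (x - p.1)) : ℂ) :=
    continuous_subtype_val.comp (Real.continuous_probChar.comp (by fun_prop))
  exact hprod.mul_bdd (c := 1) hcont.aestronglyMeasurable
    (.of_forall fun p => (Circle.norm_coe _).le)

theorem integrable_gaussSmoothDensity (hs : 0 < s) (hA : volume A ≠ ⊤) :
    Integrable (gaussSmoothDensity s A) := by
  refine (integrable_gaussKernel_mul_probChar_sub hs hA 0).integral_prod_right.congr
    (.of_forall fun ξ => (gaussSmoothDensity_mul_probChar s A 0 ξ).symm.trans ?_)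
  simp

theorem gaussSmooth_eq_integral_density (hs : 0 < s) (hA : MeasurableSet A) (hA' : volume A ≠ ⊤)
    (x : ℝ) :
    (gaussSmooth s A x : ℂ) = ∫ ξ, gaussSmoothDensity s A ξ * Real.probChar (ξ * x) := by
  simp only [gaussSmoothDensity_mul_probChar]
  rw [← integral_integral_swap (integrable_gaussKernel_mul_probChar_sub hs hA' x),
    gaussSmooth_eq_setIntegral hs hA, ← integral_complex_ofReal]
  congr 1 with z
  simp only [mul_assoc]
  rw [integral_const_mul, integral_gaussKernel_mul_probChar hs,
    ← Complex.ofReal_mul, ← mul_assoc]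
  congr 2
  rw [← Real.mul_self_sqrt (by positivity : 0 ≤ 2 * Real.pi), Real.sqrt_mul_self (by positivity)]
  field_simp

/-- The Fourier transform of `ξ ↦ 3 * dyadicGaussSum s J ξ`. -/
noncomputable def dyadicGaussMajorant (s : ℝ) (J : ℕ) (x : ℝ) : ℝ :=
  3 * √(2 * Real.pi) * ∑ i ∈ Finset.range (J + 1), gaussKernel (x / (s * 2 ^ i))

theorem integrable_dyadicGaussSum (hs : 0 < s) (J : ℕ) : Integrable (dyadicGaussSum s J) :=
  integrable_finsetSum _ fun _ _ => (integrable_gaussKernel_mul (by positivity)).const_mul _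

theorem dyadicGaussMajorant_eq_integral (hs : 0 < s) (J : ℕ) (x : ℝ) :
    (dyadicGaussMajorant s J x : ℂ) =
      ∫ ξ, ((3 * dyadicGaussSum s J ξ : ℝ) : ℂ) * Real.probChar (ξ * x) := by
  have hτ (i : ℕ) : 0 < s * 2 ^ i := by positivity
  have expand (ξ : ℝ) : ((3 * dyadicGaussSum s J ξ : ℝ) : ℂ) * Real.probChar (ξ * x) =
      ∑ i ∈ Finset.range (J + 1), ((3 * (s * 2 ^ i) : ℝ) : ℂ) *
        ((gaussKernel (s * 2 ^ i * ξ) : ℂ) * Real.probChar (ξ * x)) := by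
    rw [dyadicGaussSum, Finset.mul_sum, Complex.ofReal_sum, Finset.sum_mul]
    refine Finset.sum_congr rfl fun i _ => ?_
    push_cast
    ring
  simp only [expand]
  have integrable_term (i : ℕ) : Integrable fun ξ => ((3 * (s * 2 ^ i) : ℝ) : ℂ) *
      ((gaussKernel (s * 2 ^ i * ξ) : ℂ) * Real.probChar (ξ * x)) :=
    (FinMeas.integrable_mul_probChar (integrable_gaussKernel_mul (hτ i)).ofReal x).const_mul _
  rw [integral_finsetSum _ fun i _ => integrable_term i]
  simp only [integral_const_mul, integral_gaussKernel_mul_probChar (hτ _), ← Complex.ofReal_mul,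
    ← Complex.ofReal_sum]
  rw [dyadicGaussMajorant, Finset.mul_sum]
  congr 1
  refine Finset.sum_congr rfl fun i _ => ?_
  field_simp

theorem fourierMajorized_gaussSmooth (hs : 0 < s) (hA : A.OrdConnected) (J : ℕ)
    (hAJ : A ⊆ Set.Icc (-(s * 2 ^ J)) (s * 2 ^ J)) :
    FourierMajorized (gaussSmooth s A) (dyadicGaussMajorant s J) := by
  have hvol : volume A ≠ ⊤ := ((measure_mono hAJ).trans_lt (by simp)).ne
  exact ⟨volume, gaussSmoothDensity s A, fun ξ => 3 * dyadicGaussSum s J ξ, inferInstance,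
    integrable_gaussSmoothDensity hs hvol, (integrable_dyadicGaussSum hs J).const_mul 3,
    norm_gaussSmoothDensity_le hs hA J hAJ,
    gaussSmooth_eq_integral_density hs hA.measurableSet hvol, dyadicGaussMajorant_eq_integral hs J⟩

theorem fourierMajorized_const {a : ℝ} (ha : |a| ≤ 1) :
    FourierMajorized (fun _ => a) fun _ => 1 :=
  ⟨.dirac 0, fun _ => a, fun _ => 1, inferInstance, integrable_const _, integrable_const _,
    fun _ => by rwa [Complex.norm_real], by simp, by simp⟩

end GaussianSmoothing

theorem sum_range_pow_le (p : ℕ) {a : ℕ → ℝ} (h0 : ∀ i, 0 ≤ a i) (h1 : ∀ i, a i ≤ 1) (J : ℕ) :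
    (∑ j ∈ Finset.range J, a j) ^ p ≤
      0 ^ p + ∑ j ∈ Finset.range J, p * ((j : ℝ) + 1) ^ p * a j := by
  induction J with
  | zero => simp
  | succ J ih =>
    rw [Finset.sum_range_succ, Finset.sum_range_succ]
    set y := ∑ j ∈ Finset.range J, a j
    have hy0 : 0 ≤ y := Finset.sum_nonneg fun i _ => h0 i
    have hyJ : y ≤ J := by
      simpa using Finset.sum_le_card_nsmul (Finset.range J) a 1 fun i _ => h1 i
    have hya : y + a J ≤ J + 1 := add_le_add hyJ (h1 J)
    have increment : (y + a J) ^ p - y ^ p ≤ p * ((J : ℝ) + 1) ^ p * a J := by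
      calc (y + a J) ^ p - y ^ p ≤ |y + a J - y| * p * max |y + a J| |y| ^ (p - 1) :=
            (le_abs_self _).trans (abs_pow_sub_pow_le _ _ _)
        _ = a J * p * (y + a J) ^ (p - 1) := by
            rw [add_sub_cancel_left, abs_of_nonneg (h0 J), abs_of_nonneg hy0,
              abs_of_nonneg (add_nonneg hy0 (h0 J)), max_eq_left (by linarith [h0 J])]
        _ ≤ a J * p * ((J : ℝ) + 1) ^ p := by
            gcongr
            · exact mul_nonneg (h0 J) p.cast_nonneg
            · exact (pow_le_pow_left₀ (add_nonneg hy0 (h0 J)) hya _).trans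
                (pow_le_pow_right₀ (by simp) (Nat.sub_le p 1))
        _ = p * ((J : ℝ) + 1) ^ p * a J := by ring
    linarith

/-- An upper bound for the series `∑ (j + 1) ^ p / 2 ^ j`. -/
noncomputable def polyGeomConst (p : ℕ) : ℝ := 2 * ∑' j : ℕ, (j : ℝ) ^ p * (1 / 2 : ℝ) ^ j

theorem polyGeomConst_nonneg (p : ℕ) : 0 ≤ polyGeomConst p :=
  mul_nonneg two_pos.le (tsum_nonneg fun j => by positivity)

theorem sum_range_succ_pow_mul_half_pow_le (p J : ℕ) :
    ∑ j ∈ Finset.range J, ((j : ℝ) + 1) ^ p * (1 / 2 : ℝ) ^ j ≤ polyGeomConst p := by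
  have partial_le := (summable_pow_mul_geometric_of_norm_lt_one p
    (show ‖(1 / 2 : ℝ)‖ < 1 by norm_num)).sum_le_tsum (Finset.range (J + 1))
      fun j _ => by positivity
  rw [Finset.sum_range_succ'] at partial_le
  calc ∑ j ∈ Finset.range J, ((j : ℝ) + 1) ^ p * (1 / 2 : ℝ) ^ j
      = 2 * ∑ j ∈ Finset.range J, ((j + 1 : ℕ) : ℝ) ^ p * (1 / 2 : ℝ) ^ (j + 1) := by
        rw [Finset.mul_sum]
        refine Finset.sum_congr rfl fun j _ => ?_
        push_cast
        ring
    _ ≤ polyGeomConst p := by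
        rw [polyGeomConst]
        have : (0 : ℝ) ≤ ((0 : ℕ) : ℝ) ^ p * (1 / 2 : ℝ) ^ 0 := by positivity
        linarith

theorem prod_le_one_add_sum_pow {ι : Type*} [Fintype ι] {a : ι → ℝ} (h : ∀ q, 0 ≤ a q) :
    ∏ q, a q ≤ 1 + ∑ q, a q ^ Fintype.card ι := by
  rcases isEmpty_or_nonempty ι with _ | _
  · simp
  · obtain ⟨q₀, hq₀⟩ := Finite.exists_max a
    calc ∏ q, a q ≤ ∏ _q : ι, a q₀ := Finset.prod_le_prod (fun q _ => h q) fun q _ => hq₀ q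
      _ = a q₀ ^ Fintype.card ι := by simp
      _ ≤ ∑ q, a q ^ Fintype.card ι := Finset.single_le_sum
          (f := fun q => a q ^ Fintype.card ι) (fun q _ => pow_nonneg (h q) _) (Finset.mem_univ q₀)
      _ ≤ 1 + ∑ q, a q ^ Fintype.card ι := by linarith

theorem gaussKernel_mul_sq_le (y : ℝ) : gaussKernel y * y ^ 2 ≤ 2 := by
  have hexp : y ^ 2 / 2 ≤ Real.exp (y ^ 2 / 2) := by linarith [Real.add_one_le_exp (y ^ 2 / 2)]
  calc gaussKernel y * y ^ 2 = 2 * (gaussKernel y * (y ^ 2 / 2)) := by ring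
    _ ≤ 2 * (gaussKernel y * Real.exp (y ^ 2 / 2)) := by
        gcongr
        exact (gaussKernel_pos y).le
    _ = 2 := by rw [gaussKernel, ← Real.exp_add]; ring_nf; simp

theorem gaussKernel_div_le_sum_ind_closedBall {τ : ℝ} (hτ : 0 < τ) (y : ℝ) (I : ℕ) :
    gaussKernel (y / τ) ≤ (∑ i ∈ Finset.range I,
      8 * (1 / 4 : ℝ) ^ i * ind (Metric.closedBall 0 (τ * 2 ^ i)) y) + 8 * (1 / 4 : ℝ) ^ I := by
  induction I with
  | zero => simpa using (gaussKernel_le_one _).trans (by norm_num)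
  | succ I ih =>
    have hsum (I : ℕ) : 0 ≤ ∑ i ∈ Finset.range I,
        8 * (1 / 4 : ℝ) ^ i * ind (Metric.closedBall 0 (τ * 2 ^ i)) y :=
      Finset.sum_nonneg fun i _ => mul_nonneg (by positivity) (ind_nonneg _ _)
    by_cases hy : y ∈ Metric.closedBall 0 (τ * 2 ^ I)
    · have hp : (0 : ℝ) < (1 / 4) ^ (I + 1) := by positivity
      rw [Finset.sum_range_succ, ind, Set.indicator_of_mem hy, Pi.one_apply]
      linarith
    · rw [mem_closedBall_zero_iff, Real.norm_eq_abs, not_le] at hy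
      have hyτ : (4 : ℝ) ^ I ≤ (y / τ) ^ 2 := by
        rw [show (4 : ℝ) ^ I = (2 ^ I) ^ 2 by rw [← pow_mul, mul_comm, pow_mul]; norm_num]
        refine sq_le_sq.2 ?_
        rw [abs_div, abs_of_pos hτ, abs_of_pos (by positivity), le_div_iff₀ hτ]
        linarith
      have decay : gaussKernel (y / τ) * 4 ^ I ≤ 2 :=
        (mul_le_mul_of_nonneg_left hyτ (gaussKernel_pos _).le).trans (gaussKernel_mul_sq_le _)
      have : gaussKernel (y / τ) ≤ 8 * (1 / 4) ^ (I + 1) := by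
        rw [← le_div_iff₀ (by positivity)] at decay
        refine decay.trans_eq ?_
        rw [one_div, inv_pow, pow_succ]
        field_simp
        norm_num
      linarith [hsum (I + 1)]

theorem dyadicGaussMajorant_nonneg (s : ℝ) (J : ℕ) (x : ℝ) : 0 ≤ dyadicGaussMajorant s J x :=
  mul_nonneg (by positivity) (Finset.sum_nonneg fun _ _ => (gaussKernel_pos _).le)

theorem dyadicGaussMajorant_pow_le (s : ℝ) (J p : ℕ) (x : ℝ) :
    dyadicGaussMajorant s J x ^ p ≤ 8 ^ p * (1 + ∑ j ∈ Finset.range (J + 1),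
      p * ((j : ℝ) + 1) ^ p * gaussKernel (x / (s * 2 ^ (J - j)))) := by
  have const_le : 3 * √(2 * Real.pi) ≤ 8 := by
    have : √(2 * Real.pi) ≤ 8 / 3 := by
      rw [Real.sqrt_le_left (by norm_num)]
      linarith [Real.pi_lt_d2]
    linarith
  have reflect := Finset.sum_range_reflect (fun i => gaussKernel (x / (s * 2 ^ i))) (J + 1)
  rw [Nat.add_sub_cancel] at reflect
  rw [dyadicGaussMajorant, ← reflect, mul_pow]
  have hsum := sum_range_pow_le p (fun j => (gaussKernel_pos (x / (s * 2 ^ (J - j)))).le)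
    (fun j => gaussKernel_le_one _) (J + 1)
  gcongr
  · exact pow_nonneg (Finset.sum_nonneg fun _ _ => (gaussKernel_pos _).le) p
  · linarith [pow_le_one₀ (n := p) le_rfl (zero_le_one (α := ℝ))]

namespace FinMeas

theorem pairing_pow_congr {M V : Type*} [AddMonoid M] [AddCommGroup V] [Module ℝ V] {R : FinMeas M}
    {S : AddSubmonoid M} (hR : ∀ x, R.coeff x ≠ 0 → x ∈ S) {f g : M → V}
    (hfg : ∀ x ∈ S, f x = g x) (j : ℕ) : pairing (R ^ j) f = pairing (R ^ j) g := by
  induction j generalizing f g with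
  | zero => rw [pow_zero, one_pairing, one_pairing, hfg 0 S.zero_mem]
  | succ j ih =>
    rw [pow_succ, mul_pairing, mul_pairing]
    exact ih fun x hx => pairing_congr_support fun y hy => hfg _ (S.add_mem hx (hR y hy))

section Concentration

variable {ι : Type*} {μ : FinMeas (ι → ℝ)} {q : ι} {s ρ W T τ : ℝ}

theorem pairing_gaussKernel_le (hμ : IsProb μ) (hs : 0 < s) (hρ : 0 < ρ) (hW : 0 ≤ W)
    (hconc : ∀ τ, s ≤ τ → pairing μ (fun x => ind (Metric.closedBall 0 τ) (x q)) ≤ W * τ / ρ)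
    (hτ : s ≤ τ) : pairing μ (fun x => gaussKernel (x q / τ)) ≤ 16 * W * τ / ρ := by
  have hτ0 : 0 < τ := hs.trans_le hτ
  have truncated (I : ℕ) : pairing μ (fun x => gaussKernel (x q / τ)) ≤
      16 * W * τ / ρ + 8 * (1 / 4 : ℝ) ^ I := by
    refine (pairing_le_pairing hμ.nonneg fun x =>
      gaussKernel_div_le_sum_ind_closedBall hτ0 (x q) I).trans ?_
    rw [pairing_add, pairing_sum, pairing_const, hμ.mass_eq_one, one_mul]
    simp only [pairing_const_mul]
    gcongr
    calc ∑ i ∈ Finset.range I,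
          8 * (1 / 4 : ℝ) ^ i * pairing μ (fun x => ind (Metric.closedBall 0 (τ * 2 ^ i)) (x q))
        ≤ ∑ i ∈ Finset.range I, 8 * (W * τ / ρ) * (1 / 2 : ℝ) ^ i := by
          refine Finset.sum_le_sum fun i _ => ?_
          have hτi : s ≤ τ * 2 ^ i :=
            hτ.trans (le_mul_of_one_le_right hτ0.le (one_le_pow₀ one_le_two))
          calc _ ≤ 8 * (1 / 4 : ℝ) ^ i * (W * (τ * 2 ^ i) / ρ) := by
                gcongr
                exact hconc _ hτi
            _ = 8 * (W * τ / ρ) * ((1 / 4 : ℝ) * 2) ^ i := by rw [mul_pow]; ring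
            _ = 8 * (W * τ / ρ) * (1 / 2 : ℝ) ^ i := by norm_num
      _ ≤ 8 * (W * τ / ρ) * 2 := by
          rw [← Finset.mul_sum]
          gcongr
          exact sum_geometric_two_le I
      _ = 16 * W * τ / ρ := by ring
  have limit : Filter.Tendsto (fun I : ℕ => 16 * W * τ / ρ + 8 * (1 / 4 : ℝ) ^ I) Filter.atTop
      (nhds (16 * W * τ / ρ + 8 * 0)) :=
    ((tendsto_pow_atTop_nhds_zero_of_lt_one (by norm_num) (by norm_num)).const_mul 8).const_add _
  rw [mul_zero, add_zero] at limit
  exact ge_of_tendsto' limit truncated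

theorem pairing_dyadicGaussMajorant_pow_le (hμ : IsProb μ) (hs : 0 < s) (hρ : 0 < ρ) (hW : 0 ≤ W)
    (hT : 0 ≤ T) {J : ℕ} (hJ : s * 2 ^ J ≤ 2 * T * ρ)
    (hconc : ∀ τ, s ≤ τ → pairing μ (fun x => ind (Metric.closedBall 0 τ) (x q)) ≤ W * τ / ρ)
    (p : ℕ) : pairing μ (fun x => dyadicGaussMajorant s J (x q) ^ p) ≤
      8 ^ p * (1 + p * (32 * W * T) * polyGeomConst p) := by
  refine (pairing_le_pairing hμ.nonneg fun x => dyadicGaussMajorant_pow_le s J p (x q)).trans ?_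
  simp only [pairing_const_mul, pairing_add, pairing_const, hμ.mass_eq_one, mul_one, pairing_sum]
  gcongr
  calc ∑ j ∈ Finset.range (J + 1),
        p * ((j : ℝ) + 1) ^ p * pairing μ (fun x => gaussKernel (x q / (s * 2 ^ (J - j))))
      ≤ ∑ j ∈ Finset.range (J + 1),
          p * (32 * W * T) * (((j : ℝ) + 1) ^ p * (1 / 2 : ℝ) ^ j) := by
        refine Finset.sum_le_sum fun j hj => ?_
        have hjJ : j ≤ J := Finset.mem_range_succ_iff.1 hj
        have hτ : s ≤ s * 2 ^ (J - j) := le_mul_of_one_le_right hs.le (one_le_pow₀ one_le_two)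
        have scale : s * 2 ^ (J - j) = s * 2 ^ J * (1 / 2) ^ j := by
          rw [pow_sub₀ _ two_ne_zero hjJ, one_div, inv_pow]
          ring
        have gauss_le : pairing μ (fun x => gaussKernel (x q / (s * 2 ^ (J - j)))) ≤
            32 * W * T * (1 / 2) ^ j := by
          refine (pairing_gaussKernel_le hμ hs hρ hW hconc hτ).trans ?_
          rw [scale, div_le_iff₀ hρ]
          linarith [mul_le_mul_of_nonneg_right hJ (show 0 ≤ 16 * W * (1 / 2 : ℝ) ^ j by positivity)]
        calc _ ≤ p * ((j : ℝ) + 1) ^ p * (32 * W * T * (1 / 2) ^ j) := by gcongr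
          _ = _ := by ring
    _ ≤ p * (32 * W * T) * polyGeomConst p := by
        rw [← Finset.mul_sum]
        gcongr
        exact sum_range_succ_pow_mul_half_pow_le p (J + 1)

theorem exists_fourierMajorized_gaussSmooth (hμ : IsProb μ) {A : Set ℝ} (hA : A.OrdConnected)
    (hW : 0 ≤ W) (hT : 0 ≤ T) (hρ : 0 < ρ) (hs : 0 ≤ s)
    (hscale : s ≠ 0 → ∃ J : ℕ, A ⊆ Set.Icc (-(s * 2 ^ J)) (s * 2 ^ J) ∧ s * 2 ^ J ≤ 2 * T * ρ)
    (hconc : s ≠ 0 → ∀ τ, s ≤ τ →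
      pairing μ (fun x => ind (Metric.closedBall 0 τ) (x q)) ≤ W * τ / ρ) (p : ℕ) :
    ∃ h κ : ℝ → ℝ, FourierMajorized h κ ∧ (∀ x, 0 ≤ κ x) ∧
      (∀ x, (s = 0 → x = 0) → gaussSmooth s A x = h x) ∧
      pairing μ (fun x => κ (x q) ^ p) ≤ 8 ^ p * (1 + p * (32 * W * T) * polyGeomConst p) := by
  rcases hs.eq_or_lt with rfl | hs
  · have hconst : |ind A 0| ≤ 1 := by
      rw [abs_of_nonneg (ind_nonneg _ _)]
      exact ind_le_one _ _
    refine ⟨_, _, fourierMajorized_const hconst, fun _ => zero_le_one, fun x hx => ?_, ?_⟩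
    · rw [hx rfl, gaussSmooth_zero]
    · simp only [one_pow, pairing_const, hμ.mass_eq_one, mul_one]
      have h8 : (1 : ℝ) ≤ 8 ^ p := one_le_pow₀ (by norm_num)
      have hz : 0 ≤ p * (32 * W * T) * polyGeomConst p :=
        mul_nonneg (by positivity) (polyGeomConst_nonneg p)
      exact one_le_mul_of_one_le_of_one_le h8 (le_add_of_nonneg_right hz)
  · obtain ⟨J, hAJ, hJ⟩ := hscale hs.ne'
    exact ⟨_, _, fourierMajorized_gaussSmooth hs hA J hAJ, dyadicGaussMajorant_nonneg s J,
      fun _ _ => rfl, pairing_dyadicGaussMajorant_pow_le hμ hs hρ hW hT hJ (hconc hs.ne') p⟩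

end Concentration

section FourierEstimate

variable {ι : Type*} [Fintype ι] {R : FinMeas (ι → ℝ)} {N : ℕ} {s ρ : ι → ℝ} {A : ι → Set ℝ}
  {W T : ℝ}

theorem abs_pairing_pow_mul_one_sub_pow_gaussSmooth_le (hR : IsSymmProb R) (hN : 1 ≤ N) (k : ℕ)
    (hA : IsBox A) (hW : 0 ≤ W) (hT : 0 ≤ T) (hρ : ∀ q, 0 < ρ q) (hs : ∀ q, 0 ≤ s q)
    (hscale : ∀ q, s q ≠ 0 →
      ∃ J : ℕ, A q ⊆ Set.Icc (-(s q * 2 ^ J)) (s q * 2 ^ J) ∧ s q * 2 ^ J ≤ 2 * T * ρ q)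
    (hconc : ∀ q, s q ≠ 0 → ∀ τ, s q ≤ τ →
      pairing (R ^ (2 * (N / 4))) (fun x => ind (Metric.closedBall 0 τ) (x q)) ≤ W * τ / ρ q)
    (hdeg : ∀ x, R.coeff x ≠ 0 → ∀ q, s q = 0 → x q = 0) :
    |pairing (R ^ N * (1 - R ^ (2 * k))) fun x => ∏ q, gaussSmooth (s q) (A q) (x q)| ≤
      4 * k / N * (1 + Fintype.card ι * (8 ^ Fintype.card ι *
        (1 + Fintype.card ι * (32 * W * T) * polyGeomConst (Fintype.card ι)))) := by
  have hG : IsProb (R ^ (2 * (N / 4))) := hR.toIsProb.pow _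
  choose h κ hhκ hκ_nonneg hh hκ using fun q => exists_fourierMajorized_gaussSmooth hG (q := q)
    (hA q) hW hT (hρ q) (hs q) (hscale q) (hconc q) (Fintype.card ι)
  let S : AddSubmonoid (ι → ℝ) :=
    { carrier := {x | ∀ q, s q = 0 → x q = 0}
      zero_mem' := fun _ _ => rfl
      add_mem' := fun {x y} hx hy q hq => by rw [Pi.add_apply, hx q hq, hy q hq, add_zero] }
  have hprod : ∀ x ∈ S, ∏ q, gaussSmooth (s q) (A q) (x q) = ∏ q, h q (x q) :=
    fun x hx => Finset.prod_congr rfl fun q _ => hh q _ (hx q)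
  rw [mul_sub, mul_one, ← pow_add, sub_pairing, pairing_pow_congr (S := S) hdeg hprod,
    pairing_pow_congr (S := S) hdeg hprod, ← sub_pairing, pow_add, ← mul_one_sub]
  refine (abs_pairing_pow_mul_one_sub_pow_prod_le hR hN k hhκ).trans ?_
  gcongr
  calc pairing (R ^ (2 * (N / 4))) (fun x => ∏ q, κ q (x q))
      ≤ pairing (R ^ (2 * (N / 4))) (fun x => 1 + ∑ q, κ q (x q) ^ Fintype.card ι) :=
        pairing_le_pairing hG.nonneg fun x => prod_le_one_add_sum_pow fun q => hκ_nonneg q _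
    _ = 1 + ∑ q, pairing (R ^ (2 * (N / 4))) (fun x => κ q (x q) ^ Fintype.card ι) := by
        rw [pairing_add, pairing_const, hG.mass_eq_one, one_mul, pairing_sum]
    _ ≤ _ := by
        gcongr
        refine (Finset.sum_le_sum fun q _ => hκ q).trans_eq ?_
        simp

end FourierEstimate

end FinMeas

namespace FinMeas

section Scales

variable {ι : Type*} {F : FinMeas (ι → ℝ)} {q : ι} {n : ℕ} {K κ s ρ : ℝ}

/-- The second moment of the `q`-th coordinate over `{x | |x q| < t}`. -/
noncomputable def momentLT (F : FinMeas (ι → ℝ)) (q : ι) (t : ℝ) : ℝ :=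
  pairing F fun x => ind (coordTail q t)ᶜ x * x q ^ 2

/-- The second moment of the `q`-th coordinate over `{x | |x q| ≤ t}`. -/
noncomputable def momentLE (F : FinMeas (ι → ℝ)) (q : ι) (t : ℝ) : ℝ :=
  pairing F fun x => ind {x | |x q| ≤ t} x * x q ^ 2

theorem momentLT_zero (F : FinMeas (ι → ℝ)) (q : ι) : momentLT F q 0 = 0 := by
  have : (coordTail q 0)ᶜ = (∅ : Set (ι → ℝ)) := by simp [coordTail]
  simp [momentLT, this, ind, pairing_const]

theorem momentLE_zero (F : FinMeas (ι → ℝ)) (q : ι) : momentLE F q 0 = 0 := by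
  have (x : ι → ℝ) : ind {x : ι → ℝ | |x q| ≤ 0} x * x q ^ 2 = 0 := by
    by_cases h : x q = 0 <;> simp [ind, h]
  simp only [momentLE, this, pairing_const, mul_zero]

theorem momentLT_eq_zero_or_eq_momentLE (F : FinMeas (ι → ℝ)) (q : ι) (t : ℝ) :
    momentLT F q t = 0 ∨
      ∃ x, F.coeff x ≠ 0 ∧ |x q| < t ∧ momentLT F q t = momentLE F q |x q| := by
  classical
  set S := F.coeff.support.filter fun x => |x q| < t
  have mem_S {x : ι → ℝ} : x ∈ S ↔ F.coeff x ≠ 0 ∧ |x q| < t := by simp [S]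
  rcases S.eq_empty_or_nonempty with hS | hS
  · refine .inl ?_
    have vanish (x : ι → ℝ) (hx : F.coeff x ≠ 0) : ind (coordTail q t)ᶜ x * x q ^ 2 = 0 := by
      have : x ∈ coordTail q t := not_lt.1 fun h =>
        Finset.notMem_empty x (hS ▸ mem_S.2 ⟨hx, h⟩)
      simp [ind, this]
    rw [momentLT, pairing_congr_support vanish, pairing_const, mul_zero]
  · obtain ⟨x₀, hx₀, hmax⟩ := S.exists_max_image (fun x => |x q|) hS
    obtain ⟨hF₀, ht₀⟩ := mem_S.1 hx₀
    refine .inr ⟨x₀, hF₀, ht₀, pairing_congr_support fun x hx => ?_⟩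
    have same_level : x ∈ (coordTail q t)ᶜ ↔ x ∈ {x : ι → ℝ | |x q| ≤ |x₀ q|} :=
      ⟨fun h => hmax x (mem_S.2 ⟨hx, not_le.1 h⟩), fun h => not_le.2 (h.trans_lt ht₀)⟩
    simp only [ind, Set.indicator_apply, same_level]

/-- Two length scales for the `q`-th coordinate of `F`, adapted to the `n`-fold convolution power.
Truncating at `ρ` removes about `K / n` of the mass, while the variance `n * momentLT F q s`
accumulated by the part below `s ≤ κ * ρ` is about `ρ ^ 2`. The value `s = 0` encodes the
degenerate case in which the part below `ρ` is concentrated at `0`. -/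
structure ScalePair (F : FinMeas (ι → ℝ)) (n : ℕ) (K κ : ℝ) (q : ι) (s ρ : ℝ) : Prop where
  nonneg : 0 ≤ s
  pos : 0 < ρ
  le_mul : s ≤ κ * ρ
  truncMoment_le : n * truncMoment F q ρ ≤ K
  le_truncMoment : s ≠ 0 → K ≤ n * truncMoment F q ρ
  momentLT_le : n * momentLT F q s ≤ ρ ^ 2
  eq_or_le_momentLE : s ≠ 0 → s = κ * ρ ∨ ρ ^ 2 ≤ n * momentLE F q s
  eq_zero_of_abs_le : s = 0 → ∀ x, F.coeff x ≠ 0 → |x q| ≤ ρ → x q = 0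

theorem exists_pos_lt_abs_of_coeff_ne_zero (F : FinMeas (ι → ℝ)) (q : ι) :
    ∃ a : ℝ, 0 < a ∧ ∀ x, F.coeff x ≠ 0 → x q ≠ 0 → a < |x q| := by
  have small : ∀ᶠ a : ℝ in nhdsWithin 0 (Set.Ioi 0),
      ∀ x ∈ F.coeff.support, x q ≠ 0 → a < |x q| := by
    rw [Filter.eventually_all_finset]
    intro x _
    by_cases hx : x q = 0
    · simp [hx]
    · exact ((eventually_lt_nhds (abs_pos.2 hx)).filter_mono nhdsWithin_le_nhds).mono
        fun a ha _ => ha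
  obtain ⟨a, hgap, ha⟩ := (small.and self_mem_nhdsWithin).exists
  exact ⟨a, ha, fun x hx => hgap x (Finsupp.mem_support_iff.2 hx)⟩

theorem continuousOn_truncMoment (F : FinMeas (ι → ℝ)) (q : ι) :
    ContinuousOn (truncMoment F q) (Set.Ioi 0) := by
  unfold truncMoment
  simp only [pairing_eq_sum, smul_eq_mul]
  refine continuousOn_finsetSum _ fun x _ => continuousOn_const.mul ?_
  exact continuousOn_const.inf
    ((continuousOn_const.div continuousOn_id fun τ hτ => (Set.mem_Ioi.1 hτ).ne').pow 2)

theorem tendsto_truncMoment_atTop (F : FinMeas (ι → ℝ)) (q : ι) :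
    Filter.Tendsto (truncMoment F q) Filter.atTop (nhds 0) := by
  have term (x : ι → ℝ) : Filter.Tendsto (fun τ : ℝ => F.coeff x * min 1 ((x q / τ) ^ 2))
      Filter.atTop (nhds 0) := by
    simpa using ((tendsto_const_nhds (x := (1 : ℝ))).min
      ((Filter.tendsto_id.const_div_atTop (x q)).pow 2)).const_mul (F.coeff x)
  unfold truncMoment
  simp only [pairing_eq_sum, smul_eq_mul]
  simpa using tendsto_finsetSum _ fun x _ => term x

theorem exists_mul_truncMoment_eq {a : ℝ} (ha : 0 < a) (hK : 0 < K)
    (h : K ≤ n * truncMoment F q a) : ∃ ρ, 0 < ρ ∧ n * truncMoment F q ρ = K := by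
  have tendsto_zero : Filter.Tendsto (fun τ => n * truncMoment F q τ) Filter.atTop (nhds 0) := by
    simpa using (tendsto_truncMoment_atTop F q).const_mul (n : ℝ)
  obtain ⟨b, hb, hab⟩ :=
    ((tendsto_zero.eventually_lt_const hK).and (Filter.eventually_ge_atTop a)).exists
  have hpos : Set.Icc a b ⊆ Set.Ioi 0 := fun x hx => ha.trans_le hx.1
  obtain ⟨ρ, hρ, hρK⟩ := intermediate_value_Icc' hab
    (((continuousOn_truncMoment F q).mono hpos).const_smul (n : ℝ)) ⟨hb.le, h⟩
  exact ⟨ρ, hpos hρ, hρK⟩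

theorem exists_balanced_scale (hκ : 0 < κ) (hρ : 0 < ρ) :
    ∃ s, 0 < s ∧ s ≤ κ * ρ ∧ n * momentLT F q s ≤ ρ ^ 2 ∧
      (s = κ * ρ ∨ ρ ^ 2 ≤ n * momentLE F q s) := by
  classical
  by_cases hκρ : n * momentLT F q (κ * ρ) ≤ ρ ^ 2
  · exact ⟨κ * ρ, by positivity, le_rfl, hκρ, .inl rfl⟩
  set S := F.coeff.support.filter fun x => |x q| < κ * ρ ∧ ρ ^ 2 < n * momentLE F q |x q|
  have mem_S {x : ι → ℝ} :
      x ∈ S ↔ F.coeff x ≠ 0 ∧ |x q| < κ * ρ ∧ ρ ^ 2 < n * momentLE F q |x q| := by simp [S]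
  have level {t : ℝ} (ht : t ≤ κ * ρ) (h : ρ ^ 2 < n * momentLT F q t) :
      ∃ x ∈ S, |x q| < t := by
    rcases momentLT_eq_zero_or_eq_momentLE F q t with h0 | ⟨x, hx, hxt, hxM⟩
    · rw [h0, mul_zero] at h
      exact absurd h (sq_nonneg ρ).not_gt
    · exact ⟨x, mem_S.2 ⟨hx, hxt.trans_le ht, hxM ▸ h⟩, hxt⟩
  obtain ⟨x, hx, -⟩ := level le_rfl (not_le.1 hκρ)
  obtain ⟨x₀, hx₀, hmin⟩ := S.exists_min_image (fun x => |x q|) ⟨x, hx⟩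
  obtain ⟨-, hκ₀, hM₀⟩ := mem_S.1 hx₀
  refine ⟨|x₀ q|, (abs_nonneg _).lt_of_ne fun h => ?_, hκ₀.le, not_lt.1 fun h => ?_, .inr hM₀.le⟩
  · rw [← h, momentLE_zero, mul_zero] at hM₀
    exact (sq_nonneg ρ).not_gt hM₀
  · obtain ⟨y, hy, hyx⟩ := level hκ₀.le h
    exact (hmin y hy).not_gt hyx

theorem exists_scalePair (F : FinMeas (ι → ℝ)) (n : ℕ) (hK : 0 < K) (hκ : 0 < κ) (q : ι) :
    ∃ s ρ, ScalePair F n K κ q s ρ := by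
  obtain ⟨a, ha, hgap⟩ := exists_pos_lt_abs_of_coeff_ne_zero F q
  by_cases hc : n * truncMoment F q a ≤ K
  · refine ⟨0, a, le_rfl, ha, by positivity, hc, fun h => absurd rfl h, ?_,
      fun h => absurd rfl h, fun _ x hx hxa => ?_⟩
    · rw [momentLT_zero, mul_zero]
      positivity
    · exact not_not.1 fun h => (hgap x hx h).not_ge hxa
  · obtain ⟨ρ, hρ, hρK⟩ := exists_mul_truncMoment_eq ha hK (not_le.1 hc).le
    obtain ⟨s, hs, hsκ, hmom, hbal⟩ := exists_balanced_scale (F := F) (q := q) (n := n) hκ hρ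
    exact ⟨s, ρ, hs.le, hρ, hsκ, hρK.le, fun _ => hρK.ge, hmom, fun _ => hbal,
      fun h => absurd h hs.ne'⟩

end Scales

end FinMeas

section BoxSmooth

variable {ι : Type*} [Fintype ι]

/-- The standard Gaussian measure on `ι → ℝ`. -/
noncomputable def gaussPi (ι : Type*) [Fintype ι] : Measure (ι → ℝ) :=
  Measure.pi fun _ => ProbabilityTheory.gaussianReal 0 1

instance : IsProbabilityMeasure (gaussPi ι) := by unfold gaussPi; infer_instance

theorem measurePreserving_eval_gaussPi (q : ι) :
    MeasurePreserving (Function.eval q) (gaussPi ι) (ProbabilityTheory.gaussianReal 0 1) :=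
  measurePreserving_eval (fun _ : ι => ProbabilityTheory.gaussianReal 0 1) q

theorem integrable_sq_gaussPi (q : ι) : Integrable (fun θ : ι → ℝ => θ q ^ 2) (gaussPi ι) :=
  ((measurePreserving_eval_gaussPi q).integrable_comp_of_integrable
    (ProbabilityTheory.memLp_id_gaussianReal 2).integrable_sq :)

theorem integral_sq_gaussPi (q : ι) : ∫ θ, θ q ^ 2 ∂(gaussPi ι) = 1 := by
  have variance_eq := ProbabilityTheory.variance_id_gaussianReal (μ := 0) (v := 1)
  rw [ProbabilityTheory.variance_of_integral_eq_zero (by fun_prop) (by simp),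
    ← (measurePreserving_eval_gaussPi q).map_eq,
    integral_map (measurable_pi_apply q).aemeasurable (by fun_prop)] at variance_eq
  exact_mod_cast variance_eq

theorem abs_integral_gaussPi_le {Ψ : (ι → ℝ) → ℝ} {a b : ℝ}
    (h : ∀ θ, |Ψ θ| ≤ ∑ q, (a + b * θ q ^ 2)) :
    |∫ θ, Ψ θ ∂(gaussPi ι)| ≤ Fintype.card ι * (a + b) := by
  have integrable_summand (q : ι) : Integrable (fun θ : ι → ℝ => a + b * θ q ^ 2) (gaussPi ι) :=
    (integrable_const a).add ((integrable_sq_gaussPi q).const_mul b)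
  calc ‖∫ θ, Ψ θ ∂(gaussPi ι)‖
      ≤ ∫ θ, ∑ q, (a + b * θ q ^ 2) ∂(gaussPi ι) :=
        norm_integral_le_of_norm_le (integrable_finsetSum _ fun q _ => integrable_summand q)
          (.of_forall h)
    _ = ∑ _ : ι, (a + b) := by
        rw [integral_finsetSum _ fun q _ => integrable_summand q]
        refine Finset.sum_congr rfl fun q _ => ?_
        rw [integral_add (integrable_const a) ((integrable_sq_gaussPi q).const_mul b),
          integral_const_mul, integral_sq_gaussPi]
        simp
    _ = Fintype.card ι * (a + b) := by
        rw [Finset.sum_const, Finset.card_univ, nsmul_eq_mul]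

/-- The indicator of the box `I`, smoothed by a centred Gaussian of scale `s q` in the `q`-th
coordinate. -/
noncomputable def boxSmooth (s : ι → ℝ) (I : ι → Set ℝ) (x : ι → ℝ) : ℝ :=
  ∏ q, gaussSmooth (s q) (I q) (x q)

theorem boxSmooth_zero (I : ι → Set ℝ) : boxSmooth 0 I = boxInd I := by
  funext x
  simp only [boxSmooth, Pi.zero_apply, gaussSmooth_zero, boxInd]

theorem boxSmooth_eq_integral (s : ι → ℝ) (I : ι → Set ℝ) (x : ι → ℝ) :
    boxSmooth s I x = ∫ θ, boxInd (boxShift (s * θ) I) x ∂(gaussPi ι) := by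
  simp only [boxInd_boxShift, add_comm _ x]
  exact (integral_fintype_prod_eq_prod _).symm

theorem boxSmooth_add (s : ι → ℝ) (I : ι → Set ℝ) (y x : ι → ℝ) :
    boxSmooth s I (y + x) = boxSmooth s (boxShift y I) x := by
  simp only [boxSmooth_eq_integral, boxInd_boxShift, add_left_comm y]

theorem boxSmooth_nonneg (s : ι → ℝ) (I : ι → Set ℝ) (x : ι → ℝ) : 0 ≤ boxSmooth s I x := by
  rw [boxSmooth_eq_integral]
  exact integral_nonneg fun _ => boxInd_nonneg _ _

theorem integrable_boxInd_boxShift {I : ι → Set ℝ} (hI : IsBox I) (s x : ι → ℝ) :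
    Integrable (fun θ => boxInd (boxShift (s * θ) I) x) (gaussPi ι) := by
  refine Integrable.of_bound (C := 1) (Measurable.aestronglyMeasurable ?_)
    (.of_forall fun θ => abs_boxInd_le_one _ _)
  refine Finset.measurable_prod _ fun q _ => ?_
  exact (measurable_one.indicator (hI q).measurableSet).comp (by fun_prop :
    Measurable fun θ : ι → ℝ => (s * θ) q + x q)

theorem boxSmooth_le_one {I : ι → Set ℝ} (hI : IsBox I) (s x : ι → ℝ) : boxSmooth s I x ≤ 1 := by
  rw [boxSmooth_eq_integral]
  simpa using integral_mono (integrable_boxInd_boxShift hI s x) (integrable_const (1 : ℝ))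
    fun θ => boxInd_le_one _ _

namespace FinMeas

theorem integrable_pairing_boxInd_boxShift {I : ι → Set ℝ} (hI : IsBox I) (s : ι → ℝ)
    (μ : FinMeas (ι → ℝ)) :
    Integrable (fun θ => pairing μ (boxInd (boxShift (s * θ) I))) (gaussPi ι) :=
  integrable_pairing μ fun x => integrable_boxInd_boxShift hI s x

theorem pairing_boxSmooth {I : ι → Set ℝ} (hI : IsBox I) (s : ι → ℝ) (μ : FinMeas (ι → ℝ)) :
    pairing μ (boxSmooth s I) = ∫ θ, pairing μ (boxInd (boxShift (s * θ) I)) ∂(gaussPi ι) := by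
  rw [← pairing_integral μ fun x => integrable_boxInd_boxShift hI s x]
  exact congrArg _ (funext (boxSmooth_eq_integral s I))

theorem abs_pairing_boxSmooth_sub_le [DecidableEq ι] (μ : FinMeas (ι → ℝ)) {I I' : ι → Set ℝ}
    (hI : IsBox I) (hI' : IsBox I') (s s' : ι → ℝ) {a b : ℝ}
    (h : ∀ q J, IsBox J → ∀ t : ℝ,
      |pairing μ (boxInd (Function.update J q ((s q * t + ·) ⁻¹' I q))) -
        pairing μ (boxInd (Function.update J q ((s' q * t + ·) ⁻¹' I' q)))| ≤ a + b * t ^ 2) :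
    |pairing μ (boxSmooth s I) - pairing μ (boxSmooth s' I')| ≤ Fintype.card ι * (a + b) := by
  rw [pairing_boxSmooth hI, pairing_boxSmooth hI', ← integral_sub
    (integrable_pairing_boxInd_boxShift hI s μ) (integrable_pairing_boxInd_boxShift hI' s' μ)]
  refine abs_integral_gaussPi_le fun θ => ?_
  refine abs_sub_le_sum_of_update (fun J => pairing μ (boxInd J)) _ _ _ fun q J hJ => ?_
  refine h q J (fun r => ?_) (θ q)
  rcases hJ r with hr | hr <;> rw [hr]
  · exact hI.boxShift _ r
  · exact hI'.boxShift _ r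

end FinMeas

end BoxSmooth

theorem abs_sub_le_of_mem_sdiff_preimage_add {A : Set ℝ} (hA : A.OrdConnected) {c : ℝ} :
    ∀ y ∈ A \ (c + ·) ⁻¹' A, ∀ z ∈ A \ (c + ·) ⁻¹' A, |y - z| ≤ |c| := by
  have sub_le : ∀ y ∈ A \ (c + ·) ⁻¹' A, ∀ z ∈ A \ (c + ·) ⁻¹' A, z - y ≤ |c| := by
    rintro y ⟨hy, hyc⟩ z ⟨hz, hzc⟩
    by_contra! far
    rcases abs_cases c with ⟨hc, hc0⟩ | ⟨hc, hc0⟩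
    · exact hyc (hA.out hy hz ⟨by linarith, by linarith⟩)
    · exact hzc (hA.out hy hz ⟨by linarith, by linarith⟩)
  exact fun y hy z hz => abs_sub_le_iff.2 ⟨sub_le z hz y hy, sub_le y hy z hz⟩

theorem ordConnected_sdiff_preimage_add {A : Set ℝ} (hA : A.OrdConnected) (c : ℝ) :
    (A \ (c + ·) ⁻¹' A).OrdConnected := by
  refine ⟨?_⟩
  rintro y ⟨hy, hyc⟩ z ⟨hz, hzc⟩ x ⟨hyx, hxz⟩
  refine ⟨hA.out hy hz ⟨hyx, hxz⟩, fun hxc : c + x ∈ A => ?_⟩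
  rcases le_total 0 c with hc | hc
  · exact hyc (hA.out hy hxc ⟨by linarith, by linarith⟩)
  · exact hzc (hA.out hxc hz ⟨by linarith, by linarith⟩)

theorem ind_sub_ind_inter_Icc (A : Set ℝ) {t : ℝ} (ht : 0 ≤ t) (y : ℝ) :
    ind A y - ind (A ∩ Set.Icc (-t) t) y =
      ind (A ∩ Set.Ioi t) y + ind (A ∩ Set.Iio (-t)) y := by
  have trichotomy : 1 - ind (Set.Icc (-t) t) y = ind (Set.Ioi t) y + ind (Set.Iio (-t)) y := by
    rcases lt_or_ge y (-t) with h | h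
    · simp [h, h.not_ge, (show y ≤ t by linarith)]
    · rcases le_or_gt y t with h' | h' <;> simp [h, h', not_le.2, not_lt.2]
  simp only [ind_inter, ← mul_add, ← trichotomy]
  ring

namespace FinMeas

variable {m : ℕ} {F : FinMeas (Fin m → ℝ)} {C K D T : ℝ} {N n k : ℕ} {I : Fin m → Set ℝ}
  {s ρ : Fin m → ℝ}

theorem pairing_boxInd_of_eq_empty {ι : Type*} [Fintype ι] (μ : FinMeas (ι → ℝ))
    {J : ι → Set ℝ} {q : ι} (hJ : J q = ∅) : pairing μ (boxInd J) = 0 := by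
  have : boxInd J = fun _ => 0 := funext fun x => boxInd_of_notMem (q := q) (by simp [hJ])
  rw [this, pairing_const, mul_zero]

theorem EvenStepBound.abs_pairing_boxInd_sub_boxInd_le (hH : EvenStepBound m n C) (hC : 1 ≤ C)
    (hF : IsSymmProb F) (hn : 32 ≤ n) (hk : 1 ≤ k) (hkn : 4 * k ≤ n) {J : Fin m → Set ℝ}
    (hJ : IsBox J) {q : Fin m} {A : Set ℝ} (hA : A.OrdConnected) (hK : 0 < K) (hD : 0 < D)
    {s ρ : ℝ} (hs : 0 < s) (hsρ : s ≤ ρ) (htm : K + 1 ≤ n * truncMoment F q ρ)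
    (hmom : n * momentLT F q s ≤ ρ ^ 2) (t : ℝ) :
    |pairing (F ^ n * (1 - F ^ (2 * k))) (boxInd (Function.update J q A)) -
      pairing (F ^ n * (1 - F ^ (2 * k))) (boxInd (Function.update J q ((s * t + ·) ⁻¹' A)))| ≤
      2 * (3 * (1 + 2 * |t|) / √n + (20 + 32 * |t|) * k / n + 432 * stepBound m C k n / D ^ 2 +
        8 * stepBound m C k n * (1 + 2 * D + 2 * |t|) / √K) := by
  set ν := F ^ n * (1 - F ^ (2 * k))
  set c := s * t
  set B := (c + ·) ⁻¹' A
  have hβ := stepBound_nonneg m (zero_le_one.trans hC) k n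
  have thin {P : Set ℝ} (hP : P.OrdConnected) (hP_diam : ∀ y ∈ P, ∀ z ∈ P, |y - z| ≤ |c|) :
      |pairing ν (boxInd (Function.update J q P))| ≤
        3 * (1 + 2 * |t|) / √n + (20 + 32 * |t|) * k / n + 432 * stepBound m C k n / D ^ 2 +
          8 * stepBound m C k n * (1 + 2 * D + 2 * |t|) / √K := by
    rcases P.eq_empty_or_nonempty with rfl | ⟨x₀, hx₀⟩
    · rw [pairing_boxInd_of_eq_empty ν (q := q) (Function.update_self ..), abs_zero]
      positivity
    · refine hH.abs_pairing_boxInd_le_of_thin hC hF hn hk hkn (hJ.update q hP) hs hsρ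
        (abs_nonneg t) (x₀ := x₀) (fun z hz => ?_) hK hD htm hmom
      rw [Function.update_self] at hz
      calc |z - x₀| ≤ |s * t| := hP_diam z hz x₀ hx₀
        _ = |t| * s := by rw [abs_mul, abs_of_pos hs, mul_comm]
  have hB : B.OrdConnected := hA.preimage_mono (monotone_const.add monotone_id)
  have hBA : B \ A = B \ (-c + ·) ⁻¹' B := by ext y; simp [B]
  have left := thin (ordConnected_sdiff_preimage_add hA c)
    (abs_sub_le_of_mem_sdiff_preimage_add hA)
  have right := thin (P := B \ A) (hBA ▸ ordConnected_sdiff_preimage_add hB (-c))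
    (by rw [hBA, ← abs_neg c]; exact abs_sub_le_of_mem_sdiff_preimage_add hB)
  have split : pairing ν (boxInd (Function.update J q A)) -
      pairing ν (boxInd (Function.update J q B)) =
        pairing ν (boxInd (Function.update J q (A \ B))) -
          pairing ν (boxInd (Function.update J q (B \ A))) := by
    rw [← pairing_sub, ← pairing_sub]
    exact congrArg _ (funext (boxInd_update_sub J q A B))
  rw [split]
  exact ((abs_sub _ _).trans (add_le_add left right)).trans_eq (two_mul _).symm

theorem EvenStepBound.abs_pairing_boxInd_sub_boxSmooth_le (hH : EvenStepBound m n C) (hC : 1 ≤ C)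
    (hF : IsSymmProb F) (hn : 32 ≤ n) (hk : 1 ≤ k) (hkn : 4 * k ≤ n) (hI : IsBox I) {κ : ℝ}
    (hK : 1 < K) (hκ : κ ≤ 1) (hD : 0 < D) (hQ : ∀ q, ScalePair F n K κ q (s q) (ρ q)) :
    |pairing (F ^ n * (1 - F ^ (2 * k))) (boxInd I) -
      pairing (F ^ n * (1 - F ^ (2 * k))) (boxSmooth s I)| ≤
      2 * m * (9 / √n + 52 * k / n + 432 * stepBound m C k n / D ^ 2 +
        8 * stepBound m C k n * (3 + 2 * D) / √(K - 1)) := by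
  set ν := F ^ n * (1 - F ^ (2 * k))
  set β := stepBound m C k n
  have hβ : 0 ≤ β := stepBound_nonneg m (zero_le_one.trans hC) k n
  set a := 3 / √n + 20 * k / n + 432 * β / D ^ 2 + 8 * β * (1 + 2 * D) / √(K - 1) with ha
  set b := 6 / √n + 32 * k / n + 16 * β / √(K - 1) with hb
  have : 0 ≤ a := by positivity
  have : 0 ≤ b := by positivity
  rw [← boxSmooth_zero]
  refine (abs_pairing_boxSmooth_sub_le ν hI hI 0 s (a := 2 * a + b) (b := b)
    fun q J hJ t => ?_).trans_eq ?_
  · simp only [Pi.zero_apply, zero_mul, zero_add, Set.preimage_id']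
    rcases eq_or_ne (s q) 0 with hs | hs
    · simp only [hs, zero_mul, zero_add, Set.preimage_id', sub_self, abs_zero]
      positivity
    · have scale_le : s q ≤ ρ q :=
        (hQ q).le_mul.trans (mul_le_of_le_one_left (hQ q).pos.le hκ)
      have face := hH.abs_pairing_boxInd_sub_boxInd_le hC hF hn hk hkn hJ (hI q) (sub_pos.2 hK) hD
        ((hQ q).nonneg.lt_of_ne' hs) scale_le (by linarith [(hQ q).le_truncMoment hs])
        (hQ q).momentLT_le t
      have two_mul_abs_le : 2 * |t| ≤ 1 + t ^ 2 := by
        rw [← sq_abs]; linarith [sq_nonneg (|t| - 1)]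
      calc _ ≤ _ := face
        _ = 2 * a + b * (2 * |t|) := by rw [ha, hb]; ring
        _ ≤ 2 * a + b * (1 + t ^ 2) := by gcongr
        _ = 2 * a + b + b * t ^ 2 := by ring
  · rw [Fintype.card_fin, ha, hb]; ring

theorem EvenStepBound.abs_pairing_boxInd_le_of_far (hH : EvenStepBound m N C) (hC : 1 ≤ C)
    (hF : IsSymmProb F) {l : ℕ} (hl : 8 ≤ l) (hlN : l ≤ N) (hNl : N ≤ 4 * l) (hk : 1 ≤ k)
    (hkl : k ≤ l) (hI : IsBox I) (hK : 0 ≤ K) (hT : 0 < T) {q : Fin m} {ρ c t : ℝ} (hρ : 0 < ρ)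
    (hmom : l * secondMoment F q ≤ 2 * K * ρ ^ 2) (hc : |c| ≤ ρ * |t|)
    (hIfar : ∀ z ∈ I q, T * ρ ≤ |c + z|) :
    |pairing (F ^ l * (1 - F ^ (2 * k))) (boxInd I)| ≤
      1728 * K / T ^ 2 * stepBound m C k N + 16 / T ^ 2 * stepBound m C k N * t ^ 2 := by
  have hC0 : 0 ≤ C := zero_le_one.trans hC
  have hβ := stepBound_nonneg m hC0 k N
  have hβl := stepBound_le_four_mul m hC0 k (show 1 ≤ N by omega) hNl
  rcases le_or_gt |t| (T / 2) with ht | ht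
  · have away : ∀ z ∈ I q, T * ρ / 2 ≤ |z| := fun z hz => by
      linarith [hIfar z hz, abs_add_le c z, mul_le_mul_of_nonneg_left ht hρ.le]
    calc _ ≤ 54 * l * secondMoment F q * stepBound m C k l / (T * ρ / 2) ^ 2 :=
          hH.abs_pairing_boxInd_le_of_le_abs hC hF q hl hlN hk hkl hI (by positivity) away
      _ = 54 * (l * secondMoment F q) * stepBound m C k l / (T * ρ / 2) ^ 2 := by ring
      _ ≤ 54 * (2 * K * ρ ^ 2) * (4 * stepBound m C k N) / (T * ρ / 2) ^ 2 := by
          have := stepBound_nonneg m hC0 k l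
          gcongr
      _ = 1728 * K / T ^ 2 * stepBound m C k N := by field_simp; ring
      _ ≤ _ := le_add_of_nonneg_right (by positivity)
  · calc _ ≤ stepBound m C k l := hH l k (by omega) hlN hk F hF I hI
      _ ≤ 4 * stepBound m C k N := hβl
      _ = 16 / T ^ 2 * stepBound m C k N * (T / 2) ^ 2 := by field_simp; ring
      _ ≤ 16 / T ^ 2 * stepBound m C k N * t ^ 2 := by
          rw [← sq_abs t]; gcongr
      _ ≤ _ := le_add_of_nonneg_left (by positivity)

theorem EvenStepBound.abs_pairing_boxSmooth_sub_inter_Icc_le (hH : EvenStepBound m N C)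
    (hC : 1 ≤ C) (hF : IsSymmProb F) {l : ℕ} (hl : 8 ≤ l) (hlN : l ≤ N) (hNl : N ≤ 4 * l)
    (hk : 1 ≤ k) (hkl : k ≤ l) (hI : IsBox I) (hK : 0 ≤ K) (hT : 0 < T) (hs : ∀ q, 0 ≤ s q)
    (hsρ : ∀ q, s q ≤ ρ q) (hρ : ∀ q, 0 < ρ q)
    (hmom : ∀ q, l * secondMoment F q ≤ 2 * K * ρ q ^ 2) :
    |pairing (F ^ l * (1 - F ^ (2 * k))) (boxSmooth s I) -
      pairing (F ^ l * (1 - F ^ (2 * k)))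
        (boxSmooth s fun q => I q ∩ Set.Icc (-(T * ρ q)) (T * ρ q))| ≤
      2 * m * ((1728 * K + 16) / T ^ 2 * stepBound m C k N) := by
  set ν := F ^ l * (1 - F ^ (2 * k))
  set β := stepBound m C k N
  refine (abs_pairing_boxSmooth_sub_le ν hI (fun q => (hI q).inter Set.ordConnected_Icc) s s
    (a := 2 * (1728 * K / T ^ 2 * β)) (b := 2 * (16 / T ^ 2 * β)) fun q J hJ t => ?_).trans_eq
    (by rw [Fintype.card_fin]; ring)
  set c := s q * t with hc
  have hcρ : |c| ≤ ρ q * |t| := by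
    rw [hc, abs_mul, abs_of_nonneg (hs q)]
    exact mul_le_mul_of_nonneg_right (hsρ q) (abs_nonneg _)
  have far {P : Set ℝ} (hP : P.OrdConnected) (hP_far : ∀ y ∈ P, T * ρ q ≤ |y|) :
      |pairing ν (boxInd (Function.update J q ((c + ·) ⁻¹' P)))| ≤
        1728 * K / T ^ 2 * β + 16 / T ^ 2 * β * t ^ 2 :=
    hH.abs_pairing_boxInd_le_of_far hC hF hl hlN hNl hk hkl
      (hJ.update q (hP.preimage_mono (monotone_const.add monotone_id))) hK hT (hρ q) (hmom q) hcρ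
      fun z hz => hP_far _ (by rwa [Function.update_self] at hz)
  have upper := far ((hI q).inter Set.ordConnected_Ioi) fun y hy =>
    le_abs.2 (.inl (le_of_lt hy.2))
  have lower := far ((hI q).inter Set.ordConnected_Iio) fun y hy =>
    le_abs.2 (.inr (le_neg.1 (le_of_lt hy.2)))
  have split := congrArg (pairing ν) (funext fun x : Fin m → ℝ =>
    congrArg (· * ∏ r ∈ Finset.univ.erase q, ind (J r) (x r))
      (ind_sub_ind_inter_Icc (I q) (mul_pos hT (hρ q)).le (c + x q)))
  simp only [sub_mul, add_mul, ← ind_preimage (c + ·), ← boxInd_update, pairing_sub,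
    pairing_add] at split
  rw [split]
  exact ((abs_add_le _ _).trans (add_le_add upper lower)).trans_eq (by ring)

end FinMeas

namespace FinMeas

section LargeSet

variable {ι : Type*} {F : FinMeas (ι → ℝ)} {ρ : ι → ℝ} {n : ℕ} {K : ℝ}

/-- The points having a coordinate `q` of absolute value larger than `ρ q`. -/
def largeSet (ρ : ι → ℝ) : Set (ι → ℝ) := {x | ∃ q, ρ q < |x q|}

theorem neg_mem_largeSet_iff (ρ x : ι → ℝ) : -x ∈ largeSet ρ ↔ x ∈ largeSet ρ := by
  simp [largeSet]

theorem mul_prob_largeSet_le [Fintype ι] (hF : IsNonneg F) (hρ : ∀ q, 0 < ρ q)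
    (htm : ∀ q, n * truncMoment F q (ρ q) ≤ K) :
    n * prob F (largeSet ρ) ≤ Fintype.card ι * K := by
  have union_bound : prob F (largeSet ρ) ≤ ∑ q, truncMoment F q (ρ q) := by
    unfold prob truncMoment
    rw [← pairing_sum]
    have nonneg (x : ι → ℝ) (q : ι) : 0 ≤ min 1 ((x q / ρ q) ^ 2) :=
      le_min zero_le_one (sq_nonneg _)
    refine pairing_le_pairing hF fun x => Set.indicator_apply_le' (fun ⟨q, hq⟩ => ?_)
      fun _ => Finset.sum_nonneg fun q _ => nonneg x q
    refine le_trans (le_min le_rfl ?_)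
      (Finset.single_le_sum (fun q _ => nonneg x q) (Finset.mem_univ q))
    rw [← sq_abs, abs_div, abs_of_pos (hρ q), Pi.one_apply,
      one_le_sq_iff₀ (div_nonneg (abs_nonneg _) (hρ q).le), one_le_div (hρ q)]
    exact hq.le
  calc n * prob F (largeSet ρ) ≤ ∑ q, n * truncMoment F q (ρ q) := by
        rw [← Finset.mul_sum]; gcongr
    _ ≤ ∑ _ : ι, K := Finset.sum_le_sum fun q _ => htm q
    _ = Fintype.card ι * K := by rw [Finset.sum_const, Finset.card_univ, nsmul_eq_mul]

end LargeSet

theorem secondMoment_condCompl_largeSet_le {m : ℕ} {F : FinMeas (Fin m → ℝ)} {ρ : Fin m → ℝ}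
    (hF : IsNonneg F) (hρ : ∀ q, 0 < ρ q) (hp : prob F (largeSet ρ) ≤ 1 / 2) (q : Fin m) :
    secondMoment (condCompl F (largeSet ρ)) q ≤ 2 * (truncMoment F q (ρ q) * ρ q ^ 2) := by
  refine (condCompl_pairing_le hF hp fun x => sq_nonneg (x q)).trans ?_
  rw [truncMoment, mul_comm (pairing _ _), ← pairing_const_mul _ _ (ρ q ^ 2)]
  refine mul_le_mul_of_nonneg_left (pairing_le_pairing hF fun x => ?_) zero_le_two
  by_cases hx : x ∈ largeSet ρ
  · have : 0 ≤ min 1 ((x q / ρ q) ^ 2) := le_min zero_le_one (sq_nonneg _)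
    simp only [ind, Set.indicator_of_notMem (Set.notMem_compl_iff.2 hx), zero_mul]
    positivity
  · have small : |x q / ρ q| ≤ 1 := by
      rw [abs_div, abs_of_pos (hρ q), div_le_one (hρ q)]
      exact not_lt.1 fun h => hx ⟨q, h⟩
    rw [min_eq_right ((sq_le_one_iff_abs_le_one _).2 small), div_pow,
      mul_div_cancel₀ _ (pow_pos (hρ q) 2).ne']
    exact mul_le_of_le_one_left (sq_nonneg _) (ind_le_one _ _)

section Concentration

variable {ι : Type*} {F : FinMeas (ι → ℝ)} {T : Set (ι → ℝ)} {q : ι} {n l : ℕ}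
  {K κ p s τ ρ : ℝ}

theorem momentLE_sub_le_truncMoment_condCompl (hF : IsNonneg F) (hT : prob F T < 1) (q : ι)
    (hs : 0 < s) (hτ : s ≤ τ) :
    momentLE F q s - s ^ 2 * prob F T ≤ τ ^ 2 * truncMoment (condCompl F T) q τ := by
  have hτ0 : 0 < τ := hs.trans_le hτ
  calc momentLE F q s - s ^ 2 * prob F T
      ≤ τ ^ 2 * pairing F fun x => ind Tᶜ x * min 1 ((x q / τ) ^ 2) := by
        rw [momentLE, prob, ← pairing_const_mul, ← pairing_const_mul, ← pairing_sub]
        refine pairing_le_pairing hF fun x => ?_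
        have rhs_nonneg : 0 ≤ τ ^ 2 * ((1 - ind T x) * min 1 ((x q / τ) ^ 2)) :=
          mul_nonneg (sq_nonneg τ) (mul_nonneg (sub_nonneg.2 (ind_le_one T x))
            (le_min zero_le_one (sq_nonneg _)))
        rw [ind_compl]
        by_cases hx : |x q| ≤ s
        · have below : (x q / τ) ^ 2 ≤ 1 := by
            rw [sq_le_one_iff_abs_le_one, abs_div, abs_of_pos hτ0, div_le_one hτ0]
            exact hx.trans hτ
          have sq_le : x q ^ 2 ≤ s ^ 2 := sq_le_sq.2 (hx.trans (le_abs_self s))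
          rw [min_eq_right below, div_pow, mul_left_comm, mul_div_cancel₀ _ (by positivity)]
          by_cases hxT : x ∈ T <;> simp [hx, hxT, sq_le]
        · refine le_trans ?_ rhs_nonneg
          simpa [hx] using mul_nonneg (sq_nonneg s) (ind_nonneg T x)
    _ ≤ τ ^ 2 * truncMoment (condCompl F T) q τ := by
        gcongr
        exact le_condCompl_pairing hF hT fun x => le_min zero_le_one (sq_nonneg _)

theorem pairing_condCompl_pow_closedBall_le (hF : IsSymmProb F) (hT : ∀ x, -x ∈ T ↔ x ∈ T)
    (hT1 : prob F T < 1) (hn : 1 ≤ n) (hnl : n ≤ 4 * l) (hp : n * prob F T ≤ p)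
    (hκ : κ ^ 2 * p ≤ 1 / 2) (hs : 0 < s) (hρ : 0 < ρ) (hsκ : s ≤ κ * ρ)
    (hM : ρ ^ 2 ≤ n * momentLE F q s) (hτ : s ≤ τ) :
    pairing (condCompl F T ^ (2 * (l / 4))) (fun x => ind (Metric.closedBall 0 τ) (x q)) ≤
      34 * τ / ρ := by
  have hτ0 : 0 < τ := hs.trans_le hτ
  have hR : IsSymmProb (condCompl F T) := isSymmProb_condCompl hF hT hT1
  set t := truncMoment (condCompl F T) q τ
  set N := 2 * (l / 4)
  have removed_le : n * (s ^ 2 * prob F T) ≤ ρ ^ 2 / 2 :=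
    calc n * (s ^ 2 * prob F T) = s ^ 2 * (n * prob F T) := by ring
      _ ≤ (κ * ρ) ^ 2 * p := by
          have := prob_nonneg hF.nonneg T
          gcongr
      _ = κ ^ 2 * p * ρ ^ 2 := by ring
      _ ≤ 1 / 2 * ρ ^ 2 := by gcongr
      _ = ρ ^ 2 / 2 := by ring
  have variance_ge : ρ ^ 2 / 2 ≤ n * (τ ^ 2 * t) := by
    have := mul_le_mul_of_nonneg_left
      (momentLE_sub_le_truncMoment_condCompl hF.nonneg hT1 q hs hτ) n.cast_nonneg
    rw [mul_sub] at this
    linarith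
  have ht : 0 ≤ t := truncMoment_nonneg hR.nonneg q τ
  have power_ge : (n : ℝ) ≤ 16 * (N + 1) := by
    exact_mod_cast (show n ≤ 16 * (N + 1) by omega)
  have sqrt_ge : 3 / 17 * (ρ / τ) ≤ √((N + 1) * t) := by
    refine Real.le_sqrt_of_sq_le ?_
    rw [mul_pow, div_pow ρ, ← mul_div_assoc, div_le_iff₀ (by positivity)]
    have := mul_le_mul_of_nonneg_right power_ge (mul_nonneg (sq_nonneg τ) ht)
    nlinarith [sq_nonneg ρ]
  have concentration := pairing_pow_closedBall_mul_sqrt_le hR q hτ0 zero_le_one 0 N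
  rw [one_mul] at concentration
  set P := pairing (condCompl F T ^ N) fun x => ind (Metric.closedBall 0 τ) (x q)
  have hP : 0 ≤ P := pairing_nonneg (hR.toIsProb.pow N).nonneg fun x => ind_nonneg _ _
  calc P = P * (3 / 17 * (ρ / τ)) * (17 / 3 * (τ / ρ)) := by field_simp
    _ ≤ 2 * (1 + 2 * 1) * (17 / 3 * (τ / ρ)) := by
        exact mul_le_mul_of_nonneg_right
          ((mul_le_mul_of_nonneg_left sqrt_ge hP).trans concentration) (by positivity)
    _ = 34 * τ / ρ := by ring

theorem ScalePair.pairing_condCompl_pow_closedBall_le (h : ScalePair F n K κ q s ρ)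
    (hF : IsSymmProb F) (hT : ∀ x, -x ∈ T ↔ x ∈ T) (hT1 : prob F T < 1) (hn : 1 ≤ n)
    (hnl : n ≤ 4 * l) (hp : n * prob F T ≤ p) (hκ0 : 0 < κ) (hκ : κ ^ 2 * p ≤ 1 / 2)
    (hs : s ≠ 0) (hτ : s ≤ τ) :
    pairing (condCompl F T ^ (2 * (l / 4))) (fun x => ind (Metric.closedBall 0 τ) (x q)) ≤
      (34 + 1 / κ) * τ / ρ := by
  have hs0 : 0 < s := h.nonneg.lt_of_ne' hs
  have hτ0 : 0 < τ := hs0.trans_le hτ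
  have hρ := h.pos
  rcases h.eq_or_le_momentLE hs with rfl | hM
  · calc _ ≤ (1 : ℝ) :=
          ((isSymmProb_condCompl hF hT hT1).toIsProb.pow _).pairing_le fun _ => ind_le_one _ _
      _ ≤ 1 / κ * τ / ρ := by
          rwa [one_le_div hρ, one_div, ← div_eq_inv_mul, le_div_iff₀' hκ0]
      _ ≤ (34 + 1 / κ) * τ / ρ := by gcongr; linarith
  · refine (FinMeas.pairing_condCompl_pow_closedBall_le hF hT hT1 hn hnl hp hκ hs0 hρ h.le_mul hM
      hτ).trans ?_
    gcongr
    exact le_add_of_nonneg_right (by positivity)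

end Concentration

theorem exists_mul_two_pow_between {s t : ℝ} (hs : 0 < s) (hst : s ≤ t) :
    ∃ J : ℕ, t ≤ s * 2 ^ J ∧ s * 2 ^ J ≤ 2 * t := by
  obtain ⟨J, hJ, hJ'⟩ := exists_nat_pow_near ((one_le_div hs).2 hst) one_lt_two
  rw [le_div_iff₀ hs] at hJ
  rw [div_lt_iff₀ hs] at hJ'
  exact ⟨J + 1, by linarith, by rw [pow_succ]; linarith⟩

/-- The constant of the Fourier estimate for boxes in dimension `m` smoothed at scale `s`, cut at
`T` times the truncation scale, for laws of concentration constant `W`. -/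
noncomputable def smoothConst (m : ℕ) (W T : ℝ) : ℝ :=
  1 + m * (8 ^ m * (1 + m * (32 * W * T) * polyGeomConst m))

theorem smoothConst_nonneg (m : ℕ) {W T : ℝ} (hW : 0 ≤ W) (hT : 0 ≤ T) :
    0 ≤ smoothConst m W T := by
  have := polyGeomConst_nonneg m
  unfold smoothConst
  positivity

section SmoothBox

variable {m N k n : ℕ} {F R : FinMeas (Fin m → ℝ)} {I : Fin m → Set ℝ} {C K T W κ : ℝ}
  {s ρ : Fin m → ℝ}

theorem EvenStepBound.abs_pairing_boxSmooth_le (hH : EvenStepBound m n C) (hC : 1 ≤ C)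
    (hR : IsSymmProb R) {l : ℕ} (hl : 8 ≤ l) (hln : l ≤ n) (hnl : n ≤ 4 * l) (hk : 1 ≤ k)
    (hkl : k ≤ l) (hI : IsBox I) (hK : 0 ≤ K) (hT : 1 ≤ T) (hW : 0 ≤ W) (hρ : ∀ q, 0 < ρ q)
    (hs : ∀ q, 0 ≤ s q) (hsρ : ∀ q, s q ≤ ρ q)
    (hmom : ∀ q, n * secondMoment R q ≤ 2 * K * ρ q ^ 2)
    (hconc : ∀ q, s q ≠ 0 → ∀ τ, s q ≤ τ →
      pairing (R ^ (2 * (l / 4))) (fun x => ind (Metric.closedBall 0 τ) (x q)) ≤ W * τ / ρ q)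
    (hdeg : ∀ x, R.coeff x ≠ 0 → ∀ q, s q = 0 → x q = 0) :
    |pairing (R ^ l * (1 - R ^ (2 * k))) (boxSmooth s I)| ≤
      2 * m * ((1728 * K + 16) / T ^ 2 * stepBound m C k n) +
        16 * k / n * smoothConst m W T := by
  have hT0 : 0 < T := zero_lt_one.trans_le hT
  have hln' : (l : ℝ) ≤ n := Nat.cast_le.2 hln
  have hnl' : (n : ℝ) ≤ 4 * l := by exact_mod_cast hnl
  have hl0 : (0 : ℝ) < l := Nat.cast_pos.2 (by omega)
  have cut_box := hH.abs_pairing_boxSmooth_sub_inter_Icc_le hC hR hl hln hnl hk hkl hI hK hT0 hs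
    hsρ hρ fun q => (mul_le_mul_of_nonneg_right hln' (secondMoment_nonneg hR.nonneg q)).trans
      (hmom q)
  have dyadic (q : Fin m) (hq : s q ≠ 0) : ∃ J : ℕ,
      I q ∩ Set.Icc (-(T * ρ q)) (T * ρ q) ⊆ Set.Icc (-(s q * 2 ^ J)) (s q * 2 ^ J) ∧
        s q * 2 ^ J ≤ 2 * T * ρ q := by
    obtain ⟨J, hJ, hJ'⟩ := exists_mul_two_pow_between ((hs q).lt_of_ne' hq)
      ((hsρ q).trans (le_mul_of_one_le_left (hρ q).le hT))
    exact ⟨J, Set.inter_subset_right.trans (Set.Icc_subset_Icc (neg_le_neg hJ) hJ),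
      by rwa [mul_assoc]⟩
  have fourier := abs_pairing_pow_mul_one_sub_pow_gaussSmooth_le hR (by omega : 1 ≤ l) k
    (fun q => (hI q).inter Set.ordConnected_Icc) hW hT0.le hρ hs dyadic hconc hdeg
  rw [Fintype.card_fin] at fourier
  have four_div_le : (4 * k / l : ℝ) ≤ 16 * k / n := by
    rw [div_le_div_iff₀ hl0 (hl0.trans_le hln')]
    nlinarith [(k.cast_nonneg : (0 : ℝ) ≤ k)]
  calc _ ≤ _ := abs_sub_abs_le_abs_sub _ _ |> sub_le_iff_le_add.1
    _ ≤ _ := add_le_add cut_box (fourier.trans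
      (mul_le_mul_of_nonneg_right four_div_le (smoothConst_nonneg m hW hT0.le)))

theorem EvenStepBound.abs_pairing_condCompl_boxSmooth_le (hH : EvenStepBound m n C) (hC : 1 ≤ C)
    (hF : IsSymmProb F) {l : ℕ} (hn : 100 ≤ n) (hln : l ≤ n) (hnl : n ≤ 4 * l) (hk : 1 ≤ k)
    (hkn : 100 * k ≤ n) (hI : IsBox I) (hK : 0 ≤ K) (hκ0 : 0 < κ) (hκ1 : κ ≤ 1)
    (hκ : κ ^ 2 * (m * K) ≤ 1 / 2) (hT : 1 ≤ T)
    (hQ : ∀ q, ScalePair F n K κ q (s q) (ρ q)) (hp : prob F (largeSet ρ) ≤ 1 / 2) :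
    |pairing (condCompl F (largeSet ρ) ^ l * (1 - condCompl F (largeSet ρ) ^ (2 * k)))
        (boxSmooth s I)| ≤
      2 * m * ((1728 * K + 16) / T ^ 2 * stepBound m C k n) +
        16 * k / n * smoothConst m (34 + 1 / κ) T := by
  have hρ (q : Fin m) : 0 < ρ q := (hQ q).pos
  have hp1 : prob F (largeSet ρ) < 1 := by linarith
  have removed := mul_prob_largeSet_le hF.nonneg hρ fun q => (hQ q).truncMoment_le
  rw [Fintype.card_fin] at removed
  have hsymm := neg_mem_largeSet_iff ρ
  refine hH.abs_pairing_boxSmooth_le hC (isSymmProb_condCompl hF hsymm hp1) (by omega) hln hnl hk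
    (by omega) hI hK hT (by positivity) hρ (fun q => (hQ q).nonneg)
    (fun q => (hQ q).le_mul.trans (mul_le_of_le_one_left (hρ q).le hκ1)) (fun q => ?_)
    (fun q hq τ hτ => (hQ q).pairing_condCompl_pow_closedBall_le hF hsymm hp1 (by omega) hnl
      removed hκ0 hκ hq hτ) fun x hx q hq => ?_
  · have := mul_le_mul_of_nonneg_left (secondMoment_condCompl_largeSet_le hF.nonneg hρ hp q)
      (n.cast_nonneg (α := ℝ))
    linarith [mul_le_mul_of_nonneg_right (hQ q).truncMoment_le (sq_nonneg (ρ q))]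
  · obtain ⟨hFx, hx_small⟩ := coeff_ne_zero_and_notMem_of_coeff_condCompl_ne_zero hx
    exact (hQ q).eq_zero_of_abs_le hq x hFx (not_lt.1 fun h => hx_small ⟨q, h⟩)

theorem EvenStepBound.abs_pairing_pow_boxSmooth_le (hH : EvenStepBound m n C) (hC : 1 ≤ C)
    (hF : IsSymmProb F) (hn : 100 ≤ n) (hk : 1 ≤ k) (hkn : 100 * k ≤ n) (hI : IsBox I)
    (hK : 0 ≤ K) (hKn : 2 * (m * K) ≤ n) (hκ0 : 0 < κ) (hκ1 : κ ≤ 1)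
    (hκ : κ ^ 2 * (m * K) ≤ 1 / 2) (hT : 1 ≤ T)
    (hQ : ∀ q, ScalePair F n K κ q (s q) (ρ q)) :
    |pairing (F ^ n * (1 - F ^ (2 * k))) (boxSmooth s I)| ≤
      2 * k * (m * K / n) + 4 / n + 2 * m * ((1728 * K + 16) / T ^ 2 * stepBound m C k n) +
        16 * k / n * smoothConst m (34 + 1 / κ) T := by
  set S := largeSet ρ
  set B := 2 * m * ((1728 * K + 16) / T ^ 2 * stepBound m C k n) +
    16 * k / n * smoothConst m (34 + 1 / κ) T
  have hn' : (0 : ℝ) < n := Nat.cast_pos.2 (by omega)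
  have removed : prob F S ≤ m * K / n := by
    rw [le_div_iff₀' hn']
    simpa using mul_prob_largeSet_le hF.nonneg (fun q => (hQ q).pos)
      fun q => (hQ q).truncMoment_le
  have hp : prob F S ≤ 1 / 2 := removed.trans (by rw [div_le_iff₀ hn']; linarith)
  have hR := isSymmProb_condCompl hF (neg_mem_largeSet_iff ρ) (by linarith)
  set R := condCompl F S
  have h0 := boxSmooth_nonneg s I
  have h1 := boxSmooth_le_one hI s
  have hB0 : 0 ≤ B := by
    have := smoothConst_nonneg m (W := 34 + 1 / κ) (by positivity) (zero_le_one.trans hT)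
    have := stepBound_nonneg m (zero_le_one.trans hC) k n
    positivity
  have truncated : |pairing (F ^ n * (1 - R ^ (2 * k))) (boxSmooth s I)| ≤ B + 4 / n := by
    have := FinMeas.abs_pairing_pow_mul_one_sub_condCompl_pow_le hF.toIsProb hp h0 h1
      (Φ := fun _ => B) (fun _ => hB0) (n := n) (i := 2 * k) (by omega) fun l hln hnl y => by
        simp only [boxSmooth_add]
        exact hH.abs_pairing_condCompl_boxSmooth_le hC hF hn hln hnl hk hkn (hI.boxShift y) hK hκ0
          hκ1 hκ hT hQ hp
    rwa [pairing_const, ((isSymmProb_collapseCompl hF (neg_mem_largeSet_iff ρ)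
      (by linarith)).toIsProb.pow n).mass_eq_one, one_mul] at this
  have replaced : |pairing (F ^ n * (F ^ (2 * k) - R ^ (2 * k))) (boxSmooth s I)| ≤
      2 * k * (m * K / n) := by
    have decomposition : F = restrict F S + (1 - mass (restrict F S)) • R := by
      rw [mass_restrict, restrict_add_smul_condCompl (by linarith)]
    have := abs_pairing_pow_sub_pow_le_mass hF.toIsProb hR.toIsProb
      (isNonneg_restrict hF.nonneg S) decomposition h0 h1 (2 * k) (hF.toIsProb.pow n)
    rw [mass_restrict] at this
    push_cast at this
    exact this.trans (by gcongr)
  rw [show F ^ n * (1 - F ^ (2 * k)) =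
    F ^ n * (1 - R ^ (2 * k)) - F ^ n * (F ^ (2 * k) - R ^ (2 * k)) by ring, sub_pairing]
  linarith [abs_sub (pairing (F ^ n * (1 - R ^ (2 * k))) (boxSmooth s I))
    (pairing (F ^ n * (F ^ (2 * k) - R ^ (2 * k))) (boxSmooth s I))]

end SmoothBox

end FinMeas

namespace FinMeas

section Constants

/-- The bound imposed in dimension `m` on the expected numbers of summands that exceed their
truncation scales. It is large enough for the smoothing error to be absorbed by the induction. -/
noncomputable def truncLevel (m : ℕ) : ℝ := 10 ^ 10 * m ^ 4

/-- The bound imposed in dimension `m` on the ratios of smoothing scales to truncation scales. -/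
noncomputable def scaleRatio (m : ℕ) : ℝ := 1 / √(2 * (m * truncLevel m))

/-- The multiple of the truncation scales at which boxes are cut in dimension `m`. -/
noncomputable def cutRatio (m : ℕ) : ℝ := 10 ^ 3 * m * truncLevel m

/-- The additive constant of an induction step, which replaces the constant `C` of
`EvenStepBound` by `stepConst m + C / 2`. -/
noncomputable def stepConst (m : ℕ) : ℝ :=
  104 * m + 2 * (m * truncLevel m) + 104 +
    16 * smoothConst m (34 + 1 / scaleRatio m) (cutRatio m)

variable {m : ℕ}

theorem le_truncLevel (hm : 1 ≤ m) : 10 ^ 10 ≤ truncLevel m :=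
  le_mul_of_one_le_right (by norm_num) (one_le_pow₀ (Nat.one_le_cast.2 hm))

theorem truncLevel_nonneg (m : ℕ) : 0 ≤ truncLevel m := by
  unfold truncLevel; positivity

theorem one_le_mul_truncLevel (hm : 1 ≤ m) : 1 ≤ m * truncLevel m :=
  one_le_mul_of_one_le_of_one_le (Nat.one_le_cast.2 hm) (by linarith [le_truncLevel hm])

theorem scaleRatio_nonneg (m : ℕ) : 0 ≤ scaleRatio m := by
  unfold scaleRatio; positivity

theorem scaleRatio_pos (hm : 1 ≤ m) : 0 < scaleRatio m := by
  have := one_le_mul_truncLevel hm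
  unfold scaleRatio
  positivity

theorem scaleRatio_le_one (hm : 1 ≤ m) : scaleRatio m ≤ 1 := by
  have := one_le_mul_truncLevel hm
  exact div_le_one_of_le₀ (Real.one_le_sqrt.2 (by linarith)) (Real.sqrt_nonneg _)

theorem scaleRatio_sq_mul (hm : 1 ≤ m) : scaleRatio m ^ 2 * (m * truncLevel m) = 1 / 2 := by
  have := one_le_mul_truncLevel hm
  rw [scaleRatio, div_pow, Real.sq_sqrt (by positivity), one_pow, one_div, mul_inv, mul_assoc,
    inv_mul_cancel₀ (by positivity), mul_one, one_div]

theorem one_le_cutRatio (hm : 1 ≤ m) : 1 ≤ cutRatio m := by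
  rw [cutRatio, mul_assoc]
  linarith [one_le_mul_truncLevel hm]

theorem smoothConst_scaleRatio_nonneg (m : ℕ) :
    0 ≤ smoothConst m (34 + 1 / scaleRatio m) (cutRatio m) := by
  have := scaleRatio_nonneg m
  have := truncLevel_nonneg m
  exact smoothConst_nonneg m (by positivity) (by unfold cutRatio; positivity)

theorem le_stepConst (m : ℕ) : 104 + 2 * (m * truncLevel m) ≤ stepConst m := by
  have := smoothConst_scaleRatio_nonneg m
  unfold stepConst
  linarith [m.cast_nonneg (α := ℝ)]

theorem stepConst_nonneg (m : ℕ) : 0 ≤ stepConst m := by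
  have := truncLevel_nonneg m
  exact le_trans (by positivity) (le_stepConst m)

theorem le_sqrt_truncLevel_sub_one (hm : 1 ≤ m) : 99999 * (m : ℝ) ^ 2 ≤ √(truncLevel m - 1) := by
  have : (1 : ℝ) ≤ m ^ 4 := one_le_pow₀ (Nat.one_le_cast.2 hm)
  refine Real.le_sqrt_of_sq_le ?_
  unfold truncLevel
  linear_combination (10 ^ 10 - 99999 ^ 2) * this

theorem cut_error_le (hm : 1 ≤ m) :
    2 * m * ((1728 * truncLevel m + 16) / cutRatio m ^ 2) ≤ 1 / 16 := by
  have hm' : (1 : ℝ) ≤ m := Nat.one_le_cast.2 hm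
  have hK := le_truncLevel hm
  have hT := one_le_cutRatio hm
  rw [← mul_div_assoc, div_le_iff₀ (by positivity)]
  calc 2 * m * (1728 * truncLevel m + 16) ≤ 2 * m ^ 2 * (truncLevel m * truncLevel m) := by
        gcongr
        · exact le_self_pow₀ hm' two_ne_zero
        · nlinarith
    _ ≤ 1 / 16 * cutRatio m ^ 2 := by
        have : 0 ≤ (m : ℝ) ^ 2 * (truncLevel m * truncLevel m) := by positivity
        unfold cutRatio
        linear_combination (62500 - 2) * this

theorem smoothing_error_le (hm : 1 ≤ m) {β : ℝ} (hβ : 0 ≤ β) :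
    2 * m * (432 * β / (120 * m) ^ 2 + 8 * β * (3 + 2 * (120 * m)) / √(truncLevel m - 1)) ≤
      1 / 10 * β := by
  have hm' : (1 : ℝ) ≤ m := Nat.one_le_cast.2 hm
  have variance_part : 2 * m * (432 * β / (120 * m) ^ 2) ≤ 6 / 100 * β :=
    calc 2 * m * (432 * β / (120 * m) ^ 2) = 6 / 100 * β / m := by field_simp; ring
      _ ≤ 6 / 100 * β := div_le_self (by positivity) hm'
  have tail_part : 2 * m * (8 * β * (3 + 2 * (120 * m)) / √(truncLevel m - 1)) ≤ 4 / 100 * β :=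
    calc 2 * m * (8 * β * (3 + 2 * (120 * m)) / √(truncLevel m - 1))
        ≤ 2 * m * (8 * β * (243 * m) / (99999 * m ^ 2)) := by
          gcongr
          · linarith
          · exact le_sqrt_truncLevel_sub_one hm
      _ = 3888 / 99999 * β := by field_simp; ring
      _ ≤ 4 / 100 * β := mul_le_mul_of_nonneg_right (by norm_num) hβ
  rw [mul_add]
  linarith

end Constants

section Bootstrap

variable {m N k n : ℕ} {F : FinMeas (Fin m → ℝ)} {I : Fin m → Set ℝ} {C : ℝ}

theorem abs_pairing_boxInd_le_stepBound_of_le_mul (hF : IsProb F) (hn : 1 ≤ n)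
    (h : (n : ℝ) ≤ C * k) :
    |pairing (F ^ n * (1 - F ^ (2 * k))) (boxInd I)| ≤ stepBound m C k n :=
  calc |pairing (F ^ n * (1 - F ^ (2 * k))) (boxInd I)| ≤ 1 :=
        abs_pairing_pow_mul_one_sub_pow_le_one hF (boxInd_nonneg I) (boxInd_le_one I) n (2 * k)
    _ ≤ C * k / n := (one_le_div (Nat.cast_pos.2 hn)).2 h
    _ ≤ stepBound m C k n := le_add_of_nonneg_right (by positivity)

theorem EvenStepBound.abs_pairing_boxInd_le (hH : EvenStepBound m n C) (hm : 1 ≤ m) (hC : 1 ≤ C)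
    (hF : IsSymmProb F) (hn : 100 ≤ n) (hk : 1 ≤ k) (hkn : 100 * k ≤ n)
    (hKn : 2 * (m * truncLevel m) ≤ n) (hI : IsBox I) :
    |pairing (F ^ n * (1 - F ^ (2 * k))) (boxInd I)| ≤
      stepConst m * k / n + 18 * m / √n + (1 / 10 + 1 / 16) * stepBound m C k n := by
  have hK := le_truncLevel hm
  choose s ρ hQ using fun q => exists_scalePair F n (by linarith) (scaleRatio_pos hm) q
  have smoothed := hH.abs_pairing_boxInd_sub_boxSmooth_le hC hF (by omega) hk (by omega) hI
    (by linarith) (scaleRatio_le_one hm) (by positivity : (0 : ℝ) < 120 * m) hQ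
  have fourier := hH.abs_pairing_pow_boxSmooth_le hC hF hn hk hkn hI (by linarith) hKn
    (scaleRatio_pos hm) (scaleRatio_le_one hm) (scaleRatio_sq_mul hm).le (one_le_cutRatio hm) hQ
  set ν := F ^ n * (1 - F ^ (2 * k))
  set β := stepBound m C k n
  set Q := smoothConst m (34 + 1 / scaleRatio m) (cutRatio m)
  have hβ : 0 ≤ β := stepBound_nonneg m (zero_le_one.trans hC) k n
  have smoothing_error := smoothing_error_le hm hβ
  have cut_error := mul_le_mul_of_nonneg_right (cut_error_le hm) hβ
  have four_div_le : (4 : ℝ) / n ≤ 104 * k / n := by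
    gcongr
    linarith [(Nat.one_le_cast.2 hk : (1 : ℝ) ≤ k)]
  have stepConst_eq : stepConst m * k / n =
      104 * m * k / n + 2 * k * (m * truncLevel m / n) + 104 * k / n + 16 * k / n * Q := by
    unfold stepConst; ring
  calc |pairing ν (boxInd I)|
      ≤ |pairing ν (boxInd I) - pairing ν (boxSmooth s I)| + |pairing ν (boxSmooth s I)| := by
        simpa using abs_add_le (pairing ν (boxInd I) - pairing ν (boxSmooth s I))
          (pairing ν (boxSmooth s I))
    _ ≤ _ := add_le_add smoothed fourier
    _ ≤ stepConst m * k / n + 18 * m / √n + (1 / 10 + 1 / 16) * β := by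
        rw [stepConst_eq]
        linear_combination smoothing_error + cut_error + four_div_le

theorem EvenStepBound.add_half (hH : EvenStepBound m N C) (hm : 1 ≤ m) (hC : 1 ≤ C) :
    EvenStepBound m N (stepConst m + C / 2) := by
  intro n k hn hnN hk F hF I hI
  have hHn : EvenStepBound m n C := fun n' k' h1 h2 => hH n' k' h1 (h2.trans hnN)
  have hk' : (1 : ℝ) ≤ k := Nat.one_le_cast.2 hk
  have hconst := le_stepConst m
  have hK := one_le_mul_truncLevel hm
  rcases lt_or_ge n (100 * k) with hkn | hkn
  · have : (n : ℝ) ≤ 100 * k := by exact_mod_cast hkn.le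
    exact abs_pairing_boxInd_le_stepBound_of_le_mul hF.toIsProb hn (by nlinarith)
  rcases lt_or_ge (n : ℝ) (2 * (m * truncLevel m)) with hKn | hKn
  · exact abs_pairing_boxInd_le_stepBound_of_le_mul hF.toIsProb hn (by nlinarith)
  refine (hHn.abs_pairing_boxInd_le hm hC hF (by omega) hk hkn hKn hI).trans ?_
  have h1 : 0 ≤ C * (k / n : ℝ) := by positivity
  have h2 : 0 ≤ (m / √n : ℝ) := by positivity
  unfold stepBound
  linear_combination (1 / 2 - (1 / 10 + 1 / 16)) * h1 + (70 - 70 * (1 / 10 + 1 / 16) - 18) * h2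

theorem evenStepBound_add_div_two_pow (hm : 1 ≤ m) (N j : ℕ) :
    EvenStepBound m N (2 * stepConst m + 2 + N / 2 ^ j) := by
  have hconst := stepConst_nonneg m
  induction j with
  | zero =>
    intro n k hn hnN hk F hF I _
    have hk' : (1 : ℝ) ≤ k := Nat.one_le_cast.2 hk
    have hN : (n : ℝ) ≤ N := Nat.cast_le.2 hnN
    rw [pow_zero, div_one]
    exact abs_pairing_boxInd_le_stepBound_of_le_mul hF.toIsProb hn (by nlinarith)
  | succ j ih =>
    intro n k hn hnN hk F hF I hI
    have hj : 0 ≤ (N / 2 ^ j : ℝ) := by positivity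
    have halving : stepConst m + (2 * stepConst m + 2 + N / 2 ^ j) / 2 ≤
        2 * stepConst m + 2 + N / 2 ^ (j + 1) := by
      rw [pow_succ, ← div_div]
      linarith
    refine (ih.add_half hm (by linarith) n k hn hnN hk F hF I hI).trans ?_
    unfold stepBound
    gcongr

theorem evenStepBound_two_mul_stepConst_add_two (hm : 1 ≤ m) (N : ℕ) :
    EvenStepBound m N (2 * stepConst m + 2) := by
  intro n k hn hnN hk F hF I hI
  have limit : Filter.Tendsto (fun j : ℕ => stepBound m (2 * stepConst m + 2 + N / 2 ^ j) k n)
      Filter.atTop (nhds (stepBound m (2 * stepConst m + 2 + 0) k n)) := by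
    have : Filter.Tendsto (fun j : ℕ => (N : ℝ) / 2 ^ j) Filter.atTop (nhds 0) :=
      tendsto_const_nhds.div_atTop (tendsto_pow_atTop_atTop_of_one_lt one_lt_two)
    exact (((tendsto_const_nhds.add this).mul_const _).div_const _).add_const _
  rw [add_zero] at limit
  exact ge_of_tendsto' limit fun j =>
    evenStepBound_add_div_two_pow hm N j n k hn hnN hk F hF I hI

theorem abs_pairing_pow_sub_pairing_pow_le (hm : 1 ≤ m) (hF : IsSymmProb F) (hn : 1 ≤ n)
    (hk : 1 ≤ k) (hI : IsBox I) :
    |pairing (F ^ n) (boxInd I) - pairing (F ^ (n + 2 * k + 1)) (boxInd I)| ≤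
      72 * m / √n + (2 * stepConst m + 2) * k * (n : ℝ)⁻¹ := by
  have : (0 : ℝ) < n := Nat.cast_pos.2 hn
  have hconst := stepConst_nonneg m
  have one_step := abs_pairing_pow_sub_pairing_pow_succ_le hF hI n
  have even_step := evenStepBound_two_mul_stepConst_add_two hm (n + 1) (n + 1) k (by omega) le_rfl
    hk F hF I hI
  rw [show F ^ (n + 1) * (1 - F ^ (2 * k)) = F ^ (n + 1) - F ^ (n + 2 * k + 1) by ring,
    sub_pairing] at even_step
  calc _ ≤ _ := abs_sub_le _ (pairing (F ^ (n + 1)) (boxInd I)) _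
    _ ≤ 2 * m / √(n + 1) + stepBound m (2 * stepConst m + 2) k (n + 1) := by
        rw [Fintype.card_fin] at one_step
        exact add_le_add one_step even_step
    _ ≤ 2 * m / √n + ((2 * stepConst m + 2) * k / n + 70 * m / √n) := by
        unfold stepBound
        push_cast
        gcongr <;> linarith
    _ = 72 * m / √n + (2 * stepConst m + 2) * k * (n : ℝ)⁻¹ := by ring

end Bootstrap

end FinMeas

section Collisions

theorem one_sub_sq_div_le_descFactorial_div_pow (n : ℕ) {N : ℕ} (hN : 1 ≤ N) :
    1 - (n : ℝ) ^ 2 / N ≤ N.descFactorial n / (N : ℝ) ^ n := by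
  have hN' : (0 : ℝ) < N := Nat.cast_pos.2 hN
  rcases le_or_gt n N with h | h
  · have hn : (n : ℝ) ≤ N := Nat.cast_le.2 h
    have ratio_le : (n : ℝ) / N ≤ 1 := (div_le_one hN').2 hn
    calc 1 - (n : ℝ) ^ 2 / N = 1 + n * -(n / N : ℝ) := by ring
      _ ≤ (1 + -(n / N : ℝ)) ^ n := one_add_mul_le_pow (by linarith) n
      _ = (N - n : ℝ) ^ n / N ^ n := by rw [← sub_eq_add_neg, one_sub_div hN'.ne', div_pow]
      _ ≤ (N + 1 - n : ℕ) ^ n / (N : ℝ) ^ n := by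
          have : (N - n : ℝ) ≤ (N + 1 - n : ℕ) := by
            rw [Nat.cast_sub (by omega)]
            push_cast
            linarith
          have := sub_nonneg.2 hn
          gcongr
      _ ≤ N.descFactorial n / (N : ℝ) ^ n := by
          gcongr
          exact_mod_cast Nat.pow_sub_le_descFactorial N n
  · have hn : (N : ℝ) ≤ n := Nat.cast_le.2 h.le
    have : (1 : ℝ) ≤ N := Nat.one_le_cast.2 hN
    have : 1 ≤ (n : ℝ) ^ 2 / N := (one_le_div hN').2 (by nlinarith)
    exact (sub_nonpos.2 this).trans (by positivity)

theorem abs_expect_sub_le_of_injective {ι : Type*} [Fintype ι] [Nonempty ι] {n : ℕ}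
    {e : (Fin n → ι) → ℝ} {A : ℝ} (hA : A ∈ Set.Icc 0 1) (he : ∀ a, e a ∈ Set.Icc 0 1)
    (heA : ∀ a, Function.Injective a → e a = A) :
    |𝔼 a, e a - A| ≤ (n : ℝ) ^ 2 / Fintype.card ι := by
  classical
  have deviation (a : Fin n → ι) : |e a - A| ≤ 1 - if Function.Injective a then (1 : ℝ) else 0 := by
    split_ifs with h
    · simp [heA a h]
    · rw [sub_zero]
      exact (abs_sub_le_of_le_of_le (he a).1 (he a).2 hA.1 hA.2).trans_eq (sub_zero 1)
  have card_injective : (𝔼 a : Fin n → ι, if Function.Injective a then (1 : ℝ) else 0) =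
      (Fintype.card ι).descFactorial n / (Fintype.card ι : ℝ) ^ n := by
    rw [Fintype.expect_eq_sum_div_card, Finset.sum_boole, ← Fintype.card_subtype,
      Fintype.card_congr (Equiv.subtypeInjectiveEquivEmbedding (Fin n) ι),
      Fintype.card_embedding_eq]
    simp
  calc |𝔼 a, e a - A| = |𝔼 a, (e a - A)| := by
        rw [Finset.expect_sub_distrib, Fintype.expect_const]
    _ ≤ 𝔼 a : Fin n → ι, (1 - if Function.Injective a then (1 : ℝ) else 0) :=
        (Finset.abs_expect_le _ _).trans (Finset.expect_le_expect fun a _ => deviation a)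
    _ ≤ (n : ℝ) ^ 2 / Fintype.card ι := by
        rw [Finset.expect_sub_distrib, Fintype.expect_const, card_injective]
        linarith [one_sub_sq_div_le_descFactorial_div_pow n (Fintype.card_pos (α := ι))]

end Collisions

namespace FinMeas

section SymmEmpirical

variable {ι M : Type*} [Fintype ι] [AddCommGroup M]

/-- The empirical law of the sample `v` symmetrised by random signs: the uniform law on the points
`± v i`, counted with multiplicity. -/
noncomputable def symmEmpirical (v : ι → M) : FinMeas M :=
  (Fintype.card (ι × ℤˣ) : ℝ)⁻¹ • ∑ p : ι × ℤˣ, single (p.2 • v p.1) 1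

theorem isSymmProb_symmEmpirical [Nonempty ι] (v : ι → M) : IsSymmProb (symmEmpirical v) := by
  refine ⟨⟨.smul (by positivity) (.sum fun p _ => .single zero_le_one), ?_⟩, .smul _ fun x => ?_⟩
  · simp only [mass, symmEmpirical, smul_pairing, sum_pairing, single_pairing, smul_eq_mul,
      mul_one, Finset.sum_const, Finset.card_univ, nsmul_eq_mul]
    exact inv_mul_cancel₀ (Nat.cast_ne_zero.2 Fintype.card_ne_zero)
  · classical
    simp only [AddMonoidAlgebra.coeff_sum, Finsupp.finsetSum_apply,
      AddMonoidAlgebra.coeff_single, Finsupp.single_apply]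
    refine Fintype.sum_equiv ((Equiv.refl ι).prodCongr (Equiv.neg ℤˣ)) _ _ fun p => ?_
    simp [neg_eq_iff_eq_neg]

theorem pairing_symmEmpirical_pow (v : ι → M) (n : ℕ) (f : M → ℝ) :
    pairing (symmEmpirical v ^ n) f =
      𝔼 a : Fin n → ι, 𝔼 ε : Fin n → ℤˣ, f (∑ r, ε r • v (a r)) :=
  calc pairing (symmEmpirical v ^ n) f
      = 𝔼 p : Fin n → ι × ℤˣ, f (∑ r, (p r).2 • v (p r).1) := by
        rw [symmEmpirical, smul_pow, smul_pairing, Fintype.sum_pow, sum_pairing,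
          Fintype.expect_eq_sum_div_card, div_eq_inv_mul, Fintype.card_fun, Fintype.card_fin,
          Nat.cast_pow, inv_pow]
        simp only [AddMonoidAlgebra.prod_single, Finset.prod_const_one, single_pairing, smul_eq_mul,
          one_mul]
    _ = 𝔼 q : (Fin n → ι) × (Fin n → ℤˣ), f (∑ r, q.2 r • v (q.1 r)) :=
        Fintype.expect_equiv (Equiv.arrowProdEquivProdArrow (Fin n) (fun _ => ι) fun _ => ℤˣ) _ _
          fun _ => rfl
    _ = 𝔼 a : Fin n → ι, 𝔼 ε : Fin n → ℤˣ, f (∑ r, ε r • v (a r)) :=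
        Finset.expect_product Finset.univ Finset.univ _

theorem pairing_symmEmpirical_comp_pow {M' H : Type*} [AddCommGroup M'] [FunLike H M M']
    [AddMonoidHomClass H M M'] (L : H) (v : ι → M) (n : ℕ) (f : M' → ℝ) :
    pairing (symmEmpirical (fun i => L (v i)) ^ n) f =
      pairing (symmEmpirical v ^ n) fun x => f (L x) := by
  simp only [pairing_symmEmpirical_pow, map_sum, Units.smul_def, map_zsmul]

end SymmEmpirical

end FinMeas

section Integral

variable {α : Type*} [MeasurableSpace α] {P : Measure α}

theorem integrable_expect {κ : Type*} [Fintype κ] {f : κ → α → ℝ} (hf : ∀ i, Integrable (f i) P) :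
    Integrable (fun x => 𝔼 i, f i x) P := by
  simp only [Fintype.expect_eq_sum_div_card]
  exact (integrable_finsetSum _ fun i _ => hf i).div_const _

theorem integral_expect {κ : Type*} [Fintype κ] {f : κ → α → ℝ} (hf : ∀ i, Integrable (f i) P) :
    ∫ x, 𝔼 i, f i x ∂P = 𝔼 i, ∫ x, f i x ∂P := by
  simp only [Fintype.expect_eq_sum_div_card]
  rw [integral_div, integral_finsetSum _ fun i _ => hf i]

theorem integral_mem_Icc_zero_one [IsProbabilityMeasure P] {f : α → ℝ}
    (hf : ∀ x, f x ∈ Set.Icc 0 1) : ∫ x, f x ∂P ∈ Set.Icc 0 1 := by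
  refine ⟨integral_nonneg fun x => (hf x).1, ?_⟩
  simpa using integral_mono_of_nonneg (.of_forall fun x => (hf x).1) (integrable_const (1 : ℝ))
    (.of_forall fun x => (hf x).2) (μ := P)

end Integral

section Sampling

variable {d : ℕ} {F : Measure (Euc d)}

theorem isProbabilityMeasure_convPow [IsProbabilityMeasure F] (n : ℕ) :
    IsProbabilityMeasure (convPow F n) := by
  induction n with
  | zero => exact Measure.dirac.isProbabilityMeasure
  | succ n ih => exact Measure.isProbabilityMeasure_map (by fun_prop)

theorem IsSymmMeasure.map_units_smul (hF : IsSymmMeasure F) (ε : ℤˣ) :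
    F.map (fun x => ε • x) = F := by
  rcases Int.units_eq_one_or ε with rfl | rfl
  · simp
  · simpa [Units.smul_def, IsSymmMeasure] using hF

theorem map_sum_units_smul_eq_convPow {Ω κ : Type*} [MeasurableSpace Ω] {P : Measure Ω}
    [IsProbabilityMeasure P] (hF : IsSymmMeasure F) {X : κ → Ω → Euc d}
    (hX : ∀ r, Measurable (X r)) (hindep : ProbabilityTheory.iIndepFun X P)
    (hlaw : ∀ r, P.map (X r) = F) (ε : κ → ℤˣ) (s : Finset κ) :
    P.map (∑ r ∈ s, fun ω => ε r • X r ω) = convPow F s.card := by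
  classical
  have smul_meas (r : κ) : Measurable fun x : Euc d => ε r • x := by
    simp only [Units.smul_def]; fun_prop
  induction s using Finset.induction_on with
  | empty => simp [convPow, Pi.zero_def]
  | insert a s ha ih =>
    have signed_meas (r : κ) : Measurable fun ω => ε r • X r ω := (smul_meas r).comp (hX r)
    have indep_sum := (hindep.comp (fun r x => ε r • x) smul_meas).indepFun_finsetSum_of_notMem
      signed_meas ha
    have law_a : P.map (fun ω => ε a • X a ω) = F :=
      (Measure.map_map (smul_meas a) (hX a)).symm.trans <| by rw [hlaw, hF.map_units_smul]
    rw [Finset.sum_insert ha, Finset.card_insert_of_notMem ha, add_comm]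
    have map_add := indep_sum.map_add_eq_map_conv_map (by fun_prop) (signed_meas a)
    refine map_add.trans ?_
    change (P.map (∑ r ∈ s, fun ω => ε r • X r ω)).conv (P.map fun ω => ε a • X a ω) = _
    rw [ih, law_a]
    rfl

section EmpiricalAverage

open FinMeas

variable {ι : Type*} [Fintype ι] {g : Euc d → ℝ} [IsProbabilityMeasure F]

theorem integral_pi_sum_units_smul (hF : IsSymmMeasure F) (hg : Measurable g) {n : ℕ}
    {a : Fin n → ι} (ha : Function.Injective a) (ε : Fin n → ℤˣ) :
    ∫ x, g (∑ r, ε r • x (a r)) ∂(Measure.pi fun _ : ι => F) = ∫ y, g y ∂convPow F n := by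
  have indep : ProbabilityTheory.iIndepFun (fun r (x : ι → Euc d) => x (a r))
      (Measure.pi fun _ : ι => F) :=
    (ProbabilityTheory.iIndepFun_pi (X := fun _ => id) fun _ => aemeasurable_id).precomp ha
  have law := map_sum_units_smul_eq_convPow hF (fun r => measurable_pi_apply (a r)) indep
    (fun r => (measurePreserving_eval _ (a r)).map_eq) ε Finset.univ
  rw [Finset.card_univ, Fintype.card_fin] at law
  rw [← law, integral_map _ hg.aestronglyMeasurable]
  · simp
  · simp only [Units.smul_def]
    fun_prop

theorem integrable_comp_sum_units_smul (hg : Measurable g) (hg01 : ∀ y, g y ∈ Set.Icc 0 1) {n : ℕ}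
    (a : Fin n → ι) (ε : Fin n → ℤˣ) :
    Integrable (fun x => g (∑ r, ε r • x (a r))) (Measure.pi fun _ : ι => F) := by
  refine .of_mem_Icc 0 1 (hg.comp ?_).aemeasurable (.of_forall fun x => hg01 _)
  simp only [Units.smul_def]
  fun_prop

theorem integrable_pairing_symmEmpirical_pow (hg : Measurable g) (hg01 : ∀ y, g y ∈ Set.Icc 0 1)
    (n : ℕ) :
    Integrable (fun x => pairing (symmEmpirical x ^ n) g) (Measure.pi fun _ : ι => F) := by
  simp only [pairing_symmEmpirical_pow]
  exact integrable_expect fun a => integrable_expect fun ε =>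
    integrable_comp_sum_units_smul hg hg01 a ε

theorem abs_integral_pairing_symmEmpirical_pow_sub_le [Nonempty ι] (hF : IsSymmMeasure F)
    (hg : Measurable g) (hg01 : ∀ y, g y ∈ Set.Icc 0 1) (n : ℕ) :
    |∫ x, pairing (symmEmpirical x ^ n) g ∂(Measure.pi fun _ : ι => F) - ∫ y, g y ∂convPow F n| ≤
      (n : ℝ) ^ 2 / Fintype.card ι := by
  have integrable_signed (a : Fin n → ι) (ε : Fin n → ℤˣ) :=
    integrable_comp_sum_units_smul (F := F) hg hg01 a ε
  have average_mem (a : Fin n → ι) (x : ι → Euc d) :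
      𝔼 ε : Fin n → ℤˣ, g (∑ r, ε r • x (a r)) ∈ Set.Icc 0 1 :=
    ⟨Finset.expect_nonneg fun ε _ => (hg01 _).1,
      Finset.expect_le Finset.univ_nonempty fun ε _ => (hg01 _).2⟩
  have := isProbabilityMeasure_convPow (F := F) n
  simp only [pairing_symmEmpirical_pow]
  rw [integral_expect fun a => integrable_expect (integrable_signed a)]
  refine abs_expect_sub_le_of_injective (integral_mem_Icc_zero_one hg01)
    (fun a => integral_mem_Icc_zero_one (average_mem a)) fun a ha => ?_
  simp only [integral_expect (integrable_signed a), integral_pi_sum_units_smul hF hg ha,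
    Fintype.expect_const]

theorem abs_integral_convPow_sub_le_of_symmEmpirical (hF : IsSymmMeasure F) (hg : Measurable g)
    (hg01 : ∀ y, g y ∈ Set.Icc 0 1) {n n' : ℕ} {B : ℝ}
    (hB : ∀ (N : ℕ) (x : Fin (N + 1) → Euc d),
      |pairing (symmEmpirical x ^ n) g - pairing (symmEmpirical x ^ n') g| ≤ B) :
    |∫ y, g y ∂convPow F n - ∫ y, g y ∂convPow F n'| ≤ B := by
  have bound (N : ℕ) : |∫ y, g y ∂convPow F n - ∫ y, g y ∂convPow F n'| ≤
      B + ((n : ℝ) ^ 2 + (n' : ℝ) ^ 2) / ((N + 1 : ℕ) : ℝ) := by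
    set P := Measure.pi fun _ : Fin (N + 1) => F
    have sampling (k : ℕ) : |∫ x, pairing (symmEmpirical x ^ k) g ∂P - ∫ y, g y ∂convPow F k| ≤
        (k : ℝ) ^ 2 / ((N + 1 : ℕ) : ℝ) := by
      simpa only [Fintype.card_fin] using
        abs_integral_pairing_symmEmpirical_pow_sub_le (ι := Fin (N + 1)) hF hg hg01 k
    have average : |∫ x, pairing (symmEmpirical x ^ n) g ∂P -
        ∫ x, pairing (symmEmpirical x ^ n') g ∂P| ≤ B := by
      rw [← integral_sub (integrable_pairing_symmEmpirical_pow hg hg01 n)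
        (integrable_pairing_symmEmpirical_pow hg hg01 n')]
      simpa using norm_integral_le_of_norm_le_const (μ := P)
        (.of_forall fun x => (Real.norm_eq_abs _).trans_le (hB N x))
    rw [add_div]
    have := abs_le.1 (sampling n)
    have := abs_le.1 (sampling n')
    have := abs_le.1 average
    exact abs_le.2 ⟨by linarith, by linarith⟩
  have vanishing : Filter.Tendsto
      (fun N : ℕ => ((n : ℝ) ^ 2 + (n' : ℝ) ^ 2) / ((N + 1 : ℕ) : ℝ)) Filter.atTop (nhds 0) :=
    (tendsto_const_div_atTop_nhds_zero_nat _).comp (Filter.tendsto_add_atTop_nat 1)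
  exact ge_of_tendsto' (by simpa only [add_zero] using vanishing.const_add B) bound

end EmpiricalAverage

end Sampling

section Polyhedra

variable {d m : ℕ}

/-- The linear map `x ↦ (⟪x, t q⟫)_q`, under which the polyhedra with directions `t` are the
preimages of boxes. -/
noncomputable def coords (t : Fin m → Euc d) : Euc d →L[ℝ] (Fin m → ℝ) :=
  .pi fun q => innerSL ℝ (t q)

theorem exists_isBox_of_mem_polyhedra {X : Set (Euc d)} (hX : X ∈ polyhedra d m) :
    ∃ (t : Fin m → Euc d) (I : Fin m → Set ℝ), IsBox I ∧ X = coords t ⁻¹' Set.univ.pi I := by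
  obtain ⟨t, a, b, rfl⟩ := hX
  refine ⟨t, fun q => (Real.toEReal ⁻¹' Set.Icc (a q) (b q)),
    fun q => Set.ordConnected_Icc.preimage_mono fun _ _ => EReal.coe_le_coe, ?_⟩
  ext x
  simp [coords, real_inner_comm]

theorem boxInd_eq_ind_pi (I : Fin m → Set ℝ) : boxInd I = ind (Set.univ.pi I) := by
  ext x
  by_cases hx : x ∈ Set.univ.pi I
  · rw [boxInd_of_mem fun q => hx q trivial, ind, Set.indicator_of_mem hx, Pi.one_apply]
  · obtain ⟨q, hq⟩ : ∃ q, x q ∉ I q := by simpa using hx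
    rw [boxInd_of_notMem hq, ind, Set.indicator_of_notMem hx]

theorem IsBox.measurableSet_pi {I : Fin m → Set ℝ} (hI : IsBox I) :
    MeasurableSet (Set.univ.pi I) :=
  .univ_pi fun q => (hI q).measurableSet

theorem IsBox.measurable_boxInd {I : Fin m → Set ℝ} (hI : IsBox I) : Measurable (boxInd I) := by
  rw [boxInd_eq_ind_pi]
  exact measurable_one.indicator hI.measurableSet_pi

theorem IsBox.integral_boxInd_coords {I : Fin m → Set ℝ} (hI : IsBox I) (t : Fin m → Euc d)
    (G : Measure (Euc d)) :
    ∫ y, boxInd I (coords t y) ∂G = (G (coords t ⁻¹' Set.univ.pi I)).toReal := by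
  rw [boxInd_eq_ind_pi]
  exact integral_indicator_one ((coords t).measurable hI.measurableSet_pi)

theorem rhoPoly_le {G H : Measure (Euc d)} {B : ℝ} (hB : 0 ≤ B)
    (h : ∀ (t : Fin m → Euc d) (I : Fin m → Set ℝ), IsBox I →
      |∫ y, boxInd I (coords t y) ∂G - ∫ y, boxInd I (coords t y) ∂H| ≤ B) :
    rhoPoly m G H ≤ B := by
  refine Real.iSup_le (fun X => Real.iSup_le (fun hX => ?_) hB) hB
  obtain ⟨t, I, hI, rfl⟩ := exists_isBox_of_mem_polyhedra hX
  rw [← hI.integral_boxInd_coords, ← hI.integral_boxInd_coords]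
  exact h t I hI

end Polyhedra

theorem stmt11 :
    ∃ c : ℝ, 0 < c ∧ ∃ C : ℕ → ℝ, (∀ m, 0 < C m) ∧
      ∀ (d m k n : ℕ), 0 < d → 0 < m → 0 < k → 0 < n →
        ∀ F : Measure (Euc d), IsProbabilityMeasure F → IsSymmMeasure F →
          rhoPoly m (convPow F n) (convPow F (n + 2 * k + 1)) ≤
            c * m / Real.sqrt n + C m * k * (n : ℝ)⁻¹ := by
  have const_nonneg := FinMeas.stepConst_nonneg
  refine ⟨72, by norm_num, fun m => 2 * FinMeas.stepConst m + 2,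
    fun m => by linarith [const_nonneg m], fun d m k n _ hm hk hn F _ hF => ?_⟩
  have := const_nonneg m
  refine rhoPoly_le (by positivity) fun t I hI => ?_
  refine abs_integral_convPow_sub_le_of_symmEmpirical hF
    (hI.measurable_boxInd.comp (coords t).measurable)
    (fun y => ⟨boxInd_nonneg I _, boxInd_le_one I _⟩) fun N x => ?_
  simpa only [FinMeas.pairing_symmEmpirical_comp_pow, Function.comp_def] using
    FinMeas.abs_pairing_pow_sub_pairing_pow_le hm
      (FinMeas.isSymmProb_symmEmpirical fun i => coords t (x i)) hn hk hI
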